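/- Let u be a weak solution of −div(A∇u) = u in Ω with u ≢ 0, and suppose that for some δ ∈ (0,1) one has liminf_{R→∞} R^{−(1−δ)} ∫_{R<|x|<2R} u² dx = 0. Then there exist C₂ > 0 and R₂ > 1 such that G(ρ)/ρ^{n−1−δ} ≥ C₂ for all ρ ≥ R₂. -/

import Mathlib

open MeasureTheory Metric Filter

noncomputable section

abbrev En (n : ℕ) := EuclideanSpace ℝ (Fin n)

/-- The exterior domain `Ω = {x ∈ ℝⁿ : |x| > 1}`. -/
def OmegaExt (n : ℕ) : Set (En n) := {x | 1 < ‖x‖}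

/-- The quadratic/bilinear form `⟨M ξ, η⟩`. -/
def quadForm {n : ℕ} (M : Matrix (Fin n) (Fin n) ℝ) (ξ η : En n) : ℝ :=
  ∑ i, M.mulVec (fun j => ξ j) i * η i

/-- The conformal factor `μ(x) = ⟨A(x)∇r, ∇r⟩ = ⟨A(x)x, x⟩ / |x|²`. -/
def muA {n : ℕ} (A : En n → Matrix (Fin n) (Fin n) ℝ) (x : En n) : ℝ :=
  quadForm (A x) x x / ‖x‖ ^ 2

/-- The vector field `Z(x) = r(x) A(x)∇r(x) / μ(x) = A(x)x / μ(x)`. -/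
def Zvec {n : ℕ} (A : En n → Matrix (Fin n) (Fin n) ℝ) (x : En n) : En n :=
  (muA A x)⁻¹ • (WithLp.toLp 2 ((A x).mulVec (fun j => x j)) : En n)

/-- The derivative of `f` along `Z`: `Zf = ⟨Z, ∇f⟩`. -/
def Zd {n : ℕ} (A : En n → Matrix (Fin n) (Fin n) ℝ) (f : En n → ℝ) (x : En n) : ℝ :=
  ∑ i, Zvec A x i * gradient f x i

/-- Surface integral over the sphere `{|x| = ρ}` w.r.t. the `(n-1)`-dimensional
Hausdorff measure. -/
def sphInt (n : ℕ) (ρ : ℝ) (f : En n → ℝ) : ℝ :=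
  ∫ x in sphere (0 : En n) ρ, f x ∂(μH[(n : ℝ) - 1])

/-- Structural hypotheses on `A`: symmetry, `C¹` entries on `Ω`, uniform ellipticity
`λ|ξ|² ≤ ⟨A(x)ξ,ξ⟩ ≤ λ⁻¹|ξ|²`, and the decay `|x||∇B(x)| + |B(x)| ≤ C|x|^{-α}`
where `B = A - Iₙ` (entrywise). -/
def EllipticDecay {n : ℕ} (A : En n → Matrix (Fin n) (Fin n) ℝ) (lam α C : ℝ) : Prop :=
  (∀ x ∈ OmegaExt n, (A x).IsSymm) ∧
  (∀ i j, ContDiffOn ℝ 1 (fun x => A x i j) (OmegaExt n)) ∧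
  (∀ x ∈ OmegaExt n, ∀ ξ : En n,
      lam * ‖ξ‖ ^ 2 ≤ quadForm (A x) ξ ξ ∧ quadForm (A x) ξ ξ ≤ lam⁻¹ * ‖ξ‖ ^ 2) ∧
  (∀ x ∈ OmegaExt n, ∀ i j,
      ‖x‖ * ‖gradient (fun y => (A y - 1) i j) x‖ + |(A x - 1) i j| ≤ C * ‖x‖ ^ (-α))

/-- `u ∈ C¹(Ω)` is a weak solution of `-div(A∇u) = u` in `Ω`, i.e.
`∫_Ω ⟨A∇u, ∇φ⟩ = ∫_Ω u φ` for every test function `φ ∈ C_c^∞(Ω)`. -/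
def WeakSol {n : ℕ} (A : En n → Matrix (Fin n) (Fin n) ℝ) (u : En n → ℝ) : Prop :=
  ContDiffOn ℝ 1 u (OmegaExt n) ∧
  ∀ φ : En n → ℝ, ContDiff ℝ (⊤ : ℕ∞) φ → HasCompactSupport φ → tsupport φ ⊆ OmegaExt n →
    (∫ x in OmegaExt n, ∑ i, (A x).mulVec (fun j => gradient u x j) i * gradient φ x i) =
    ∫ x in OmegaExt n, u x * φ x

/-- The functional `G(ρ)` associated with a solution `u`, where `w = r^{(n-1)/2} u`. -/
def Gfun {n : ℕ} (A : En n → Matrix (Fin n) (Fin n) ℝ) (u : En n → ℝ) (ρ : ℝ) : ℝ :=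
  let w : En n → ℝ := fun x => ‖x‖ ^ (((n : ℝ) - 1) / 2) * u x
  2 * sphInt n ρ (fun x => (Zd A w x / ‖x‖) ^ 2 * muA A x)
    - sphInt n ρ (fun x => quadForm (A x) (gradient w x) (gradient w x))
    + sphInt n ρ (fun x => (w x) ^ 2)
    - ((n : ℝ) - 1) * ((n : ℝ) - 3) / 4 * sphInt n ρ (fun x => (w x) ^ 2 / ‖x‖ ^ 2 * muA A x)

section PartA
open MeasureTheory Metric Filter

/-- Growth lemma: positivity persists and the frequency `-D/H` stays bounded above. -/
theorem freq_bound {H D H' D' : ℝ → ℝ} {a b m α : ℝ} (ha : 0 < a) (hm : 0 ≤ m) (hα : 0 < α)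
    (hH : ∀ ρ ∈ Set.Icc a b, HasDerivAt H (H' ρ) ρ)
    (hD : ∀ ρ ∈ Set.Icc a b, HasDerivAt D (D' ρ) ρ)
    (hN : ∀ ρ ∈ Set.Icc a b, 0 < H ρ →
      -(D' ρ * H ρ - D ρ * H' ρ) ≤ m * ρ ^ (-1 - α) * (H ρ ^ 2 + |D ρ| * H ρ))
    (hH' : ∀ ρ ∈ Set.Icc a b, 0 < H ρ → 2 * D ρ - m * ρ ^ (-1 - α) * H ρ ≤ H' ρ)
    (hpos : 0 < H a) :
    ∀ ρ ∈ Set.Icc a b, 0 < H ρ ∧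
      -D ρ ≤ (|D a| / H a + m + 1) * Real.exp ((m + 1) / α * a ^ (-α)) * H ρ := by
  set Λ0 := |D a| / H a + m + 1 with hΛ0
  set Λ := Λ0 * Real.exp ((m + 1) / α * a ^ (-α)) with hΛ
  have hΛ0m : m + 1 ≤ Λ0 := by
    have : 0 ≤ |D a| / H a := by positivity
    linarith
  have hΛ0pos : 0 < Λ0 := by linarith
  -- key: on subintervals of positivity
  have key : ∀ y ∈ Set.Icc a b, (∀ z ∈ Set.Icc a y, 0 < H z) → -D y ≤ Λ * H y := by
    intro y hy hpz
    have hsub : Set.Icc a y ⊆ Set.Icc a b := Set.Icc_subset_Icc_right hy.2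
    set B : ℝ → ℝ := fun ρ => Λ0 * Real.exp ((m + 1) / α * (a ^ (-α) - ρ ^ (-α))) with hB
    have hBd : ∀ ρ, 0 < ρ → HasDerivAt B ((m + 1) * ρ ^ (-1 - α) * B ρ) ρ := by
      intro ρ hρ
      have h1 : HasDerivAt (fun ρ : ℝ => ρ ^ (-α)) (-α * ρ ^ (-α - 1)) ρ :=
        Real.hasDerivAt_rpow_const (Or.inl hρ.ne')
      have h2 := (((h1.const_sub (a ^ (-α))).const_mul ((m + 1) / α)).exp).const_mul Λ0
      refine h2.congr_deriv ?_
      rw [show -α - 1 = -1 - α by ring]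
      simp only [hB]
      field_simp
    have hNd : ∀ ρ ∈ Set.Icc a y, HasDerivAt (fun ρ => -D ρ / H ρ)
        ((-(D' ρ * H ρ - D ρ * H' ρ)) / H ρ ^ 2) ρ := by
      intro ρ hρ
      have := ((hD ρ (hsub hρ)).neg).div (hH ρ (hsub hρ)) (hpz ρ hρ).ne'
      refine this.congr_deriv ?_
      simp only [Pi.neg_apply]
      ring
    have hle := image_le_of_deriv_right_lt_deriv_boundary' (f := fun ρ => -D ρ / H ρ)
      (f' := fun ρ => (-(D' ρ * H ρ - D ρ * H' ρ)) / H ρ ^ 2) (a := a) (b := y)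
      (fun ρ hρ => (hNd ρ hρ).continuousAt.continuousWithinAt)
      (fun ρ hρ => (hNd ρ ⟨hρ.1, hρ.2.le⟩).hasDerivWithinAt)
      (B := B) (B' := fun ρ => (m + 1) * ρ ^ (-1 - α) * B ρ)
      (by
        simp only [hB, sub_self, mul_zero, Real.exp_zero, mul_one, hΛ0]
        have : -D a / H a ≤ |D a| / H a := by
          gcongr; exact neg_le_abs _
        linarith)
      (fun ρ hρ => (hBd ρ (lt_of_lt_of_le ha hρ.1)).continuousAt.continuousWithinAt)
      (fun ρ hρ => (hBd ρ (lt_of_lt_of_le ha hρ.1)).hasDerivWithinAt)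
      (by
        intro ρ hρ heq
        have hρ' : ρ ∈ Set.Icc a y := ⟨hρ.1, hρ.2.le⟩
        have hρ0 : 0 < ρ := lt_of_lt_of_le ha hρ.1
        have hHp := hpz ρ hρ'
        have h1 := hN ρ (hsub hρ') hHp
        have hBge : m + 1 ≤ B ρ := by
          simp only [hB]
          have : 1 ≤ Real.exp ((m + 1) / α * (a ^ (-α) - ρ ^ (-α))) := by
            apply Real.one_le_exp
            apply mul_nonneg (by positivity)
            have := Real.rpow_le_rpow_of_nonpos ha hρ.1 (neg_nonpos.mpr hα.le)
            linarith
          nlinarith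
        have hDabs : |D ρ| = B ρ * H ρ := by
          have h3 : -D ρ = B ρ * H ρ := by
            have h4 : -D ρ / H ρ = B ρ := heq
            field_simp at h4
            linarith
          rw [← abs_neg, h3, abs_of_nonneg]
          have : 0 < B ρ := by linarith
          positivity
        have hr : 0 < ρ ^ (-1 - α) := Real.rpow_pos_of_pos hρ0 _
        rw [div_lt_iff₀ (by positivity)]
        rw [hDabs] at h1
        refine lt_of_le_of_lt h1 ?_
        have h5 : m * (1 + B ρ) < (m + 1) * B ρ := by linarith
        have h6 : 0 < ρ ^ (-1 - α) * H ρ ^ 2 := by positivity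
        nlinarith)
    have h7 := hle (show y ∈ Set.Icc a y from ⟨hy.1, le_rfl⟩)
    have hHy := hpz y ⟨hy.1, le_rfl⟩
    rw [div_le_iff₀ hHy] at h7
    refine h7.trans ?_
    apply mul_le_mul_of_nonneg_right _ hHy.le
    simp only [hB, hΛ]
    gcongr
    have := Real.rpow_nonneg (le_trans ha.le hy.1) (-α)
    linarith
  have hΛpos : 0 < Λ := by positivity
  -- lower bound for H
  have lower : ∀ y ∈ Set.Icc a b, (∀ z ∈ Set.Icc a y, 0 < H z) →
      H a * Real.exp (-((2 * Λ + m * a ^ (-1 - α)) * (b - a))) ≤ H y := by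
    intro y hy hpz
    have hsub : Set.Icc a y ⊆ Set.Icc a b := Set.Icc_subset_Icc_right hy.2
    set L := 2 * Λ + m * a ^ (-1 - α) with hL
    have hra : 0 < a ^ (-1 - α) := Real.rpow_pos_of_pos ha _
    have hLpos : 0 ≤ L := by positivity
    have hd : ∀ ρ ∈ Set.Icc a y, HasDerivAt (fun ρ => H ρ * Real.exp (L * (ρ - a)))
        ((H' ρ + L * H ρ) * Real.exp (L * (ρ - a))) ρ := by
      intro ρ hρ
      have h1 : HasDerivAt (fun ρ : ℝ => L * (ρ - a)) L ρ := by
        simpa using ((hasDerivAt_id ρ).sub_const a).const_mul L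
      have := (hH ρ (hsub hρ)).mul h1.exp
      refine this.congr_deriv ?_
      ring
    have hmono : MonotoneOn (fun ρ => H ρ * Real.exp (L * (ρ - a))) (Set.Icc a y) := by
      apply monotoneOn_of_deriv_nonneg (convex_Icc a y)
      · exact fun ρ hρ => (hd ρ hρ).continuousAt.continuousWithinAt
      · intro ρ hρ
        rw [interior_Icc] at hρ
        exact (hd ρ ⟨hρ.1.le, hρ.2.le⟩).differentiableAt.differentiableWithinAt
      · intro ρ hρ
        rw [interior_Icc] at hρ
        have hρ' : ρ ∈ Set.Icc a y := ⟨hρ.1.le, hρ.2.le⟩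
        rw [(hd ρ hρ').deriv]
        apply mul_nonneg _ (Real.exp_pos _).le
        have h1 := hH' ρ (hsub hρ') (hpz ρ hρ')
        have h2 := key ρ (hsub hρ') (fun z hz => hpz z ⟨hz.1, hz.2.trans hρ.2.le⟩)
        have h3 : ρ ^ (-1 - α) ≤ a ^ (-1 - α) :=
          Real.rpow_le_rpow_of_nonpos ha hρ.1.le (by linarith)
        have h4 := hpz ρ hρ'
        have h5 : m * ρ ^ (-1 - α) * H ρ ≤ m * a ^ (-1 - α) * H ρ := by gcongr
        nlinarith
    have h8 := hmono (show a ∈ Set.Icc a y from ⟨le_rfl, hy.1⟩)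
      (show y ∈ Set.Icc a y from ⟨hy.1, le_rfl⟩) hy.1
    simp only [sub_self, mul_zero, Real.exp_zero, mul_one] at h8
    have h9 : 0 < H y := hpz y ⟨hy.1, le_rfl⟩
    calc H a * Real.exp (-(L * (b - a))) ≤ (H y * Real.exp (L * (y - a))) * Real.exp (-(L * (b - a))) := by
          gcongr
      _ = H y * Real.exp (L * (y - b)) := by
          rw [mul_assoc, ← Real.exp_add]; congr 2; ring
      _ ≤ H y * 1 := by
          gcongr
          rw [Real.exp_le_one_iff]
          have := hy.2
          nlinarith
      _ = H y := mul_one _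
  -- positivity
  have hposall : ∀ y ∈ Set.Icc a b, 0 < H y := by
    by_contra hcon
    push Not at hcon
    obtain ⟨y, hy, hHy⟩ := hcon
    set S := {z ∈ Set.Icc a b | H z ≤ 0} with hS
    have hHc : ContinuousOn H (Set.Icc a b) := fun ρ hρ => (hH ρ hρ).continuousAt.continuousWithinAt
    have hScl : IsClosed S := by
      have := hHc.preimage_isClosed_of_isClosed isClosed_Icc (isClosed_Iic (a := (0:ℝ)))
      exact this
    have hSne : S.Nonempty := ⟨y, hy, hHy⟩
    have hSbd : BddBelow S := ⟨a, fun z hz => hz.1.1⟩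
    have hmem := hScl.csInf_mem hSne hSbd
    set s := sInf S with hs
    have hbelow : ∀ z ∈ Set.Ico a s, 0 < H z := by
      intro z hz
      by_contra h
      push Not at h
      have : s ≤ z := csInf_le hSbd ⟨⟨hz.1, hz.2.le.trans hmem.1.2⟩, h⟩
      exact absurd hz.2 (not_lt.mpr this)
    have has : a < s := by
      rcases eq_or_lt_of_le hmem.1.1 with h | h
      · rw [← h] at hmem; exact absurd hpos (not_lt.mpr hmem.2)
      · exact h
    set c := H a * Real.exp (-((2 * Λ + m * a ^ (-1 - α)) * (b - a))) with hc
    have hcpos : 0 < c := by positivity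
    have hlim : Tendsto H (nhdsWithin s (Set.Iio s)) (nhds (H s)) :=
      (hH s hmem.1).continuousAt.tendsto.mono_left nhdsWithin_le_nhds
    have : c ≤ H s := by
      refine ge_of_tendsto hlim ?_
      have : Set.Ioo a s ∈ nhdsWithin s (Set.Iio s) := Ioo_mem_nhdsLT has
      filter_upwards [this] with z hz
      exact lower z ⟨hz.1.le, hz.2.le.trans hmem.1.2⟩
        (fun q hq => hbelow q ⟨hq.1, lt_of_le_of_lt hq.2 hz.2⟩)
    linarith [hmem.2]
  intro ρ hρ
  exact ⟨hposall ρ hρ, key ρ hρ (fun z hz => hposall z ⟨hz.1, hz.2.trans hρ.2⟩)⟩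

end PartA

section PartA2
open MeasureTheory Metric Filter

/-- The system of differential identities satisfied by the spherical means. -/
structure Sys (H D P K W G e1 e2 e3 : ℝ → ℝ) (lam α M c : ℝ) : Prop where
  lam0 : 0 < lam
  lam1 : lam < 1
  α0 : 0 < α
  α1 : α ≤ 1
  M0 : 0 < M
  hc : |c| ≤ M
  hH : ∀ ρ > 1, HasDerivAt H (2 * D ρ + e1 ρ) ρ
  hD : ∀ ρ > 1, HasDerivAt D (2 * P ρ - G ρ + e2 ρ) ρ
  hG : ∀ ρ > 1, HasDerivAt G (2 / ρ * (K ρ - P ρ) + e3 ρ) ρ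
  hGdef : ∀ ρ > 1, G ρ = 2 * P ρ - K ρ + W ρ - c / ρ ^ 2 * H ρ
  he1 : ∀ ρ > 1, |e1 ρ| ≤ M * ρ ^ (-1 - α) * W ρ
  he2 : ∀ ρ > 1, |e2 ρ| ≤ M * ρ ^ (-1 - α) * W ρ
  he3 : ∀ ρ > 1, |e3 ρ| ≤ M * ρ ^ (-1 - α) * (K ρ + W ρ)
  cs : ∀ ρ > 1, D ρ ^ 2 ≤ P ρ * H ρ
  P0 : ∀ ρ > 1, 0 ≤ P ρ
  PK : ∀ ρ > 1, P ρ ≤ K ρ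
  W0 : ∀ ρ > 1, 0 ≤ W ρ
  HW : ∀ ρ > 1, lam * W ρ ≤ H ρ
  WH : ∀ ρ > 1, lam * H ρ ≤ W ρ

namespace Sys
variable {H D P K W G e1 e2 e3 : ℝ → ℝ} {lam α M c : ℝ}

theorem H0 (S : Sys H D P K W G e1 e2 e3 lam α M c) {ρ : ℝ} (h : 1 < ρ) : 0 ≤ H ρ :=
  le_trans (mul_nonneg S.lam0.le (S.W0 ρ h)) (S.HW ρ h)

theorem Wle (S : Sys H D P K W G e1 e2 e3 lam α M c) {ρ : ℝ} (h : 1 < ρ) : W ρ ≤ H ρ / lam := by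
  rw [le_div_iff₀ S.lam0]; linarith [S.HW ρ h]

theorem Hle (S : Sys H D P K W G e1 e2 e3 lam α M c) {ρ : ℝ} (h : 1 < ρ) : H ρ ≤ W ρ / lam := by
  rw [le_div_iff₀ S.lam0]; linarith [S.WH ρ h]

theorem cH (S : Sys H D P K W G e1 e2 e3 lam α M c) {ρ : ℝ} (h : 1 < ρ) :
    |c / ρ ^ 2 * H ρ| ≤ M / lam * ρ ^ (-α) * W ρ := by
  have hρ : 0 < ρ := by linarith
  have h1 : 1 / ρ ^ 2 ≤ ρ ^ (-α) := by
    rw [Real.rpow_neg hρ.le, one_div]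
    apply inv_anti₀ (Real.rpow_pos_of_pos hρ _)
    rw [← Real.rpow_natCast]
    apply Real.rpow_le_rpow_of_exponent_le h.le
    have := S.α1
    push_cast; linarith
  have h2 := S.Hle h
  have h0 := S.H0 h
  rw [abs_mul, abs_div, abs_of_nonneg h0, abs_of_nonneg (by positivity : (0:ℝ) ≤ ρ ^ 2)]
  have hM := S.M0
  have hl := S.lam0
  calc |c| / ρ ^ 2 * H ρ ≤ M / ρ ^ 2 * (W ρ / lam) := by gcongr; exact S.hc
    _ = M / lam * (1 / ρ ^ 2) * W ρ := by ring
    _ ≤ M / lam * ρ ^ (-α) * W ρ := by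
        have := S.W0 ρ h
        gcongr

theorem rp (S : Sys H D P K W G e1 e2 e3 lam α M c) {ρ : ℝ} (h : 1 < ρ) :
    ρ ^ (-1 - α) = ρ ^ (-α) / ρ := by
  rw [show -1 - α = -α - 1 by ring, Real.rpow_sub_one (by linarith)]

/-- eventually `ρ^{-α}` is small -/
theorem evsmall (S : Sys H D P K W G e1 e2 e3 lam α M c) {ε : ℝ} (hε : 0 < ε) :
    ∃ R > (1 : ℝ), ∀ ρ ≥ R, M / lam * ρ ^ (-α) ≤ ε := by
  have h1 : Tendsto (fun ρ : ℝ => M / lam * ρ ^ (-α)) atTop (nhds (M / lam * 0)) :=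
    (tendsto_rpow_neg_atTop S.α0).const_mul _
  rw [mul_zero] at h1
  have h2 := (h1.eventually (gt_mem_nhds hε)).and (eventually_gt_atTop (1 : ℝ))
  obtain ⟨R, hR⟩ := (eventually_atTop.mp h2)
  exact ⟨R, (hR R le_rfl).2, fun ρ hρ => (hR ρ hρ).1.le⟩

theorem Mle (S : Sys H D P K W G e1 e2 e3 lam α M c) : M ≤ M / lam := by
  rw [le_div_iff₀ S.lam0]
  nlinarith [S.M0, S.lam1]

theorem pos_case (S : Sys H D P K W G e1 e2 e3 lam α M c) {δ : ℝ} (h0 : 0 < δ) (h1 : δ < 1) :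
    ∃ R > (1 : ℝ), ∀ ρ₀ ≥ R, ∀ ρ ≥ ρ₀, ρ₀ ^ δ * G ρ₀ ≤ ρ ^ δ * G ρ := by
  obtain ⟨R, hR1, hR⟩ := S.evsmall (show 0 < δ / 2 by linarith)
  refine ⟨R, hR1, fun ρ₀ hρ₀ => ?_⟩
  have hd : ∀ ρ ≥ R, HasDerivAt (fun ρ => ρ ^ δ * G ρ)
      (δ * ρ ^ (δ - 1) * G ρ + ρ ^ δ * (2 / ρ * (K ρ - P ρ) + e3 ρ)) ρ := by
    intro ρ hρ
    exact (Real.hasDerivAt_rpow_const (Or.inl (by linarith))).mul (S.hG ρ (by linarith))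
  have hmono : MonotoneOn (fun ρ => ρ ^ δ * G ρ) (Set.Ici R) := by
    apply monotoneOn_of_deriv_nonneg (convex_Ici R)
    · exact fun ρ hρ => (hd ρ hρ).continuousAt.continuousWithinAt
    · intro ρ hρ
      rw [interior_Ici] at hρ
      exact (hd ρ (le_of_lt hρ)).differentiableAt.differentiableWithinAt
    · intro ρ hρ
      rw [interior_Ici] at hρ
      have hρR : R ≤ ρ := le_of_lt hρ
      rw [(hd ρ hρR).deriv]
      have hρ1 : 1 < ρ := by linarith
      have hρ0 : 0 < ρ := by linarith
      have e : ρ ^ δ = ρ ^ (δ - 1) * ρ := by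
        rw [Real.rpow_sub_one hρ0.ne']; field_simp
      rw [e]
      have e2' : δ * ρ ^ (δ - 1) * G ρ + ρ ^ (δ - 1) * ρ * (2 / ρ * (K ρ - P ρ) + e3 ρ)
        = ρ ^ (δ - 1) * (δ * G ρ + 2 * (K ρ - P ρ) + ρ * e3 ρ) := by
        field_simp
        ring
      rw [e2']
      apply mul_nonneg (Real.rpow_nonneg hρ0.le _)
      have he3 := S.he3 ρ hρ1
      rw [S.rp hρ1] at he3
      have hs := hR ρ hρR
      have hcH := S.cH hρ1
      have hr : 0 < ρ ^ (-α) := Real.rpow_pos_of_pos hρ0 _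
      have hM := S.Mle
      have hW := S.W0 ρ hρ1
      have hP := S.P0 ρ hρ1
      have hPK := S.PK ρ hρ1
      have hsm : M * ρ ^ (-α) ≤ δ / 2 := le_trans (by gcongr) hs
      have h5 : |ρ * e3 ρ| ≤ δ / 2 * (K ρ + W ρ) := by
        rw [abs_mul, abs_of_pos hρ0]
        calc ρ * |e3 ρ| ≤ ρ * (M * (ρ ^ (-α) / ρ) * (K ρ + W ρ)) := by gcongr
          _ = M * ρ ^ (-α) * (K ρ + W ρ) := by field_simp
          _ ≤ δ / 2 * (K ρ + W ρ) := by
            have : 0 ≤ K ρ + W ρ := by linarith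
            gcongr
      have h6 : |c / ρ ^ 2 * H ρ| ≤ δ / 2 * W ρ := hcH.trans (by gcongr)
      have h7 := (abs_le.mp h5).1
      have h8 := (abs_le.mp h6).2
      rw [S.hGdef ρ hρ1]
      have h9 : δ * (c / ρ ^ 2 * H ρ) ≤ δ * (δ / 2 * W ρ) := by gcongr
      have h10 : δ * (δ / 2 * W ρ) ≤ 1 * (δ / 2 * W ρ) := by gcongr
      have h11 : 0 ≤ δ / 2 * P ρ := by positivity
      have h12 : 0 ≤ (2 - 3 / 2 * δ) * (K ρ - P ρ) := mul_nonneg (by linarith) (by linarith)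
      linarith
  intro ρ hρ
  exact hmono (show R ≤ ρ₀ from hρ₀) (show R ≤ ρ from le_trans hρ₀ hρ) hρ

/-- pointwise inequality for the derivative of the frequency -/
theorem freq_ineq (S : Sys H D P K W G e1 e2 e3 lam α M c) {ρ : ℝ} (h : 1 < ρ) :
    -((2 * P ρ - G ρ + e2 ρ) * H ρ - D ρ * (2 * D ρ + e1 ρ)) ≤
      G ρ * H ρ + M / lam * ρ ^ (-1 - α) * (H ρ ^ 2 + |D ρ| * H ρ) := by
  have hr : 0 < ρ ^ (-1 - α) := Real.rpow_pos_of_pos (by linarith) _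
  have hM := S.M0
  have hl := S.lam0
  have hH := S.H0 h
  have hW := S.Wle h
  have b1 : |e1 ρ| ≤ M / lam * ρ ^ (-1 - α) * H ρ := (S.he1 ρ h).trans (by
    calc M * ρ ^ (-1 - α) * W ρ ≤ M * ρ ^ (-1 - α) * (H ρ / lam) := by gcongr
      _ = _ := by ring)
  have b2 : |e2 ρ| ≤ M / lam * ρ ^ (-1 - α) * H ρ := (S.he2 ρ h).trans (by
    calc M * ρ ^ (-1 - α) * W ρ ≤ M * ρ ^ (-1 - α) * (H ρ / lam) := by gcongr
      _ = _ := by ring)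
  have c1 : D ρ * e1 ρ ≤ |D ρ| * (M / lam * ρ ^ (-1 - α) * H ρ) := by
    refine (le_abs_self _).trans ?_
    rw [abs_mul]; gcongr
  have c2 : -(e2 ρ * H ρ) ≤ (M / lam * ρ ^ (-1 - α) * H ρ) * H ρ := by
    have := (abs_le.mp b2).1
    nlinarith
  have := S.cs ρ h
  nlinarith

theorem Hlow (S : Sys H D P K W G e1 e2 e3 lam α M c) {ρ : ℝ} (h : 1 < ρ) :
    2 * D ρ - M / lam * ρ ^ (-1 - α) * H ρ ≤ 2 * D ρ + e1 ρ := by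
  have hr : 0 < ρ ^ (-1 - α) := Real.rpow_pos_of_pos (by linarith) _
  have hM := S.M0
  have hl := S.lam0
  have hW := S.Wle h
  have b1 : |e1 ρ| ≤ M / lam * ρ ^ (-1 - α) * H ρ := (S.he1 ρ h).trans (by
    calc M * ρ ^ (-1 - α) * W ρ ≤ M * ρ ^ (-1 - α) * (H ρ / lam) := by gcongr
      _ = _ := by ring)
  linarith [(abs_le.mp b1).1]

set_option maxHeartbeats 1000000 in
/-- local unique continuation: `H = 0` near infinity implies `H = 0`. -/
theorem ucp (S : Sys H D P K W G e1 e2 e3 lam α M c) {R : ℝ}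
    (hR : ∀ ρ ≥ R, 1 < ρ → H ρ = 0) : ∀ ρ > 1, H ρ = 0 := by
  by_contra hcon
  push Not at hcon
  obtain ⟨ρ₁, hρ₁, hne⟩ := hcon
  set T := {ρ | 1 < ρ ∧ 0 < H ρ} with hT
  have hTne : ρ₁ ∈ T := ⟨hρ₁, lt_of_le_of_ne (S.H0 hρ₁) (Ne.symm hne)⟩
  have hTbd : BddAbove T := ⟨R, fun z hz => by
    by_contra h
    push Not at h
    exact hz.2.ne' (hR z h.le hz.1)⟩
  set R0 := sSup T with hR0
  have hρ₁R0 : ρ₁ ≤ R0 := le_csSup hTbd hTne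
  have hR01 : 1 < R0 := lt_of_lt_of_le hρ₁ hρ₁R0
  have habove : ∀ ρ > R0, H ρ = 0 := by
    intro ρ hρ
    by_contra h
    have : ρ ∈ T := ⟨by linarith, lt_of_le_of_ne (S.H0 (by linarith)) (Ne.symm h)⟩
    exact absurd (le_csSup hTbd this) (not_le.mpr hρ)
  have hDab : ∀ ρ > R0, D ρ = 0 := by
    intro ρ hρ
    have := S.cs ρ (by linarith)
    rw [habove ρ hρ, mul_zero] at this
    nlinarith [sq_nonneg (D ρ), pow_eq_zero_iff (two_ne_zero) (a := D ρ)]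
  have hWab : ∀ ρ > R0, W ρ = 0 := by
    intro ρ hρ
    have h1 := S.Wle (ρ := ρ) (by linarith)
    rw [habove ρ hρ, zero_div] at h1
    exact le_antisymm h1 (S.W0 ρ (by linarith))
  have hGab : ∀ ρ > R0, G ρ = 0 := by
    intro ρ hρ
    have hρ1 : 1 < ρ := by linarith
    have h1 := S.hD ρ hρ1
    have h2 : HasDerivAt D 0 ρ := by
      refine (hasDerivAt_const ρ (0:ℝ)).congr_of_eventuallyEq ?_
      filter_upwards [lt_mem_nhds hρ] with z hz using hDab z hz
    have h3 := h1.unique h2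
    have h4 := S.he2 ρ hρ1
    rw [hWab ρ hρ, mul_zero] at h4
    have h5 : e2 ρ = 0 := abs_nonpos_iff.mp h4
    have h6 := S.hGdef ρ hρ1
    rw [hWab ρ hρ, habove ρ hρ] at h6
    have := S.P0 ρ hρ1
    have := S.PK ρ hρ1
    linarith
  have lim0 : ∀ f : ℝ → ℝ, ContinuousAt f R0 → (∀ ρ > R0, f ρ = 0) → f R0 = 0 := by
    intro f hf h
    have h1 : Tendsto f (nhdsWithin R0 (Set.Ioi R0)) (nhds (f R0)) :=
      hf.tendsto.mono_left nhdsWithin_le_nhds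
    have h2 : Tendsto f (nhdsWithin R0 (Set.Ioi R0)) (nhds 0) := by
      refine tendsto_const_nhds.congr' ?_
      filter_upwards [self_mem_nhdsWithin] with z hz using (h z hz).symm
    exact tendsto_nhds_unique h1 h2
  have HR0 := lim0 H (S.hH R0 hR01).continuousAt habove
  have DR0 := lim0 D (S.hD R0 hR01).continuousAt hDab
  have GR0 := lim0 G (S.hG R0 hR01).continuousAt hGab
  -- constants
  have hM := S.M0
  have hl := S.lam0
  set C1 := 1 + M / lam + M with hC1
  set C4 := 2 * (2 * M * C1 + M) / lam with hC4
  have hC1p : 0 < C1 := by positivity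
  have hC4p : 0 < C4 := by positivity
  obtain ⟨ε, hε, hε1, hε2⟩ : ∃ ε > 0, C4 * ε ≤ M ∧ ε * (1 + M / lam) ≤ 1 / 2 := by
    refine ⟨min (M / C4) (1 / 2 / (1 + M / lam)), by positivity, ?_, ?_⟩
    · calc C4 * min (M / C4) (1 / 2 / (1 + M / lam)) ≤ C4 * (M / C4) := by gcongr; exact min_le_left _ _
        _ = M := by field_simp
    · calc min (M / C4) (1 / 2 / (1 + M / lam)) * (1 + M / lam)
          ≤ (1 / 2 / (1 + M / lam)) * (1 + M / lam) := by gcongr; exact min_le_right _ _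
        _ = 1 / 2 := by field_simp
  obtain ⟨a, haT, haR⟩ : ∃ a ∈ T, max (R0 - ε) 1 < a := by
    apply exists_lt_of_lt_csSup ⟨ρ₁, hTne⟩
    rw [← hR0]
    exact max_lt (by linarith) hR01
  have ha1 : 1 < a := haT.1
  have haε : R0 - ε < a := lt_of_le_of_lt (le_max_left _ _) haR
  have haR0 : a ≤ R0 := le_csSup hTbd haT
  -- the function Φ
  set Φ : ℝ → ℝ := fun ρ => -2 * M * D ρ - G ρ + C4 * ((R0 - ρ) * H ρ) with hΦ
  have hΦd : ∀ ρ > 1, HasDerivAt Φ (-2 * M * (2 * P ρ - G ρ + e2 ρ) - (2 / ρ * (K ρ - P ρ) + e3 ρ)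
      + C4 * ((-1) * H ρ + (R0 - ρ) * (2 * D ρ + e1 ρ))) ρ := by
    intro ρ hρ
    have h1 : HasDerivAt (fun ρ => R0 - ρ) (-1) ρ := by
      simpa using (hasDerivAt_id ρ).const_sub R0
    exact (((S.hD ρ hρ).const_mul (-2 * M)).sub (S.hG ρ hρ)).add
      ((h1.mul (S.hH ρ hρ)).const_mul C4)
  have hanti : AntitoneOn Φ (Set.Icc a R0) := by
    apply antitoneOn_of_deriv_nonpos (convex_Icc a R0)
    · exact fun ρ hρ => (hΦd ρ (by linarith [hρ.1])).continuousAt.continuousWithinAt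
    · intro ρ hρ
      rw [interior_Icc] at hρ
      exact (hΦd ρ (by linarith [hρ.1])).differentiableAt.differentiableWithinAt
    · intro ρ hρ
      rw [interior_Icc] at hρ
      have hρ1 : 1 < ρ := by linarith [hρ.1]
      rw [(hΦd ρ hρ1).deriv]
      have hr1 : ρ ^ (-1 - α) ≤ 1 := Real.rpow_le_one_of_one_le_of_nonpos hρ1.le (by linarith [S.α0])
      have hr2 : ρ ^ (-α) ≤ 1 := Real.rpow_le_one_of_one_le_of_nonpos hρ1.le (by linarith [S.α0])
      have hr1' : 0 < ρ ^ (-1 - α) := Real.rpow_pos_of_pos (by linarith) _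
      have hr2' : 0 < ρ ^ (-α) := Real.rpow_pos_of_pos (by linarith) _
      have hW := S.W0 ρ hρ1
      have hP := S.P0 ρ hρ1
      have hPK := S.PK ρ hρ1
      have hH := S.H0 hρ1
      have hWl := S.Wle hρ1
      have f1 : |e1 ρ| ≤ M * W ρ := (S.he1 ρ hρ1).trans (by
        have : M * ρ ^ (-1 - α) ≤ M * 1 := by gcongr
        nlinarith)
      have f2 : |e2 ρ| ≤ M * W ρ := (S.he2 ρ hρ1).trans (by
        have : M * ρ ^ (-1 - α) ≤ M * 1 := by gcongr
        nlinarith)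
      have f3 : |e3 ρ| ≤ M * (K ρ + W ρ) := (S.he3 ρ hρ1).trans (by
        have : M * ρ ^ (-1 - α) ≤ M * 1 := by gcongr
        nlinarith)
      have f4 : |c / ρ ^ 2 * H ρ| ≤ M / lam * W ρ := (S.cH hρ1).trans (by
        have : M / lam * ρ ^ (-α) ≤ M / lam * 1 := by gcongr
        nlinarith)
      have g2 : K ρ - C1 * W ρ ≤ 2 * P ρ - G ρ + e2 ρ := by
        rw [S.hGdef ρ hρ1]
        have := (abs_le.mp f2).1
        have := (abs_le.mp f4).1
        simp only [hC1]
        nlinarith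
      have g3 : -(M * (K ρ + W ρ)) ≤ 2 / ρ * (K ρ - P ρ) + e3 ρ := by
        have := (abs_le.mp f3).1
        have : 0 ≤ 2 / ρ * (K ρ - P ρ) := mul_nonneg (by positivity) (by linarith)
        linarith
      have g1 : 2 * D ρ + e1 ρ ≤ K ρ + H ρ * (1 + M / lam) := by
        have h1 := (abs_le.mp f1).2
        have h2 : M * W ρ ≤ M / lam * H ρ := by
          calc M * W ρ ≤ M * (H ρ / lam) := by gcongr
            _ = _ := by ring
        have h3 : 2 * D ρ ≤ P ρ + H ρ := by
          have := S.cs ρ hρ1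
          by_contra hc
          push Not at hc
          nlinarith [sq_nonneg (P ρ - H ρ)]
        nlinarith
      have hpos1 : 0 ≤ R0 - ρ := by linarith [hρ.2]
      have hle1 : R0 - ρ ≤ ε := by linarith [hρ.1]
      have g1' : (R0 - ρ) * (2 * D ρ + e1 ρ) ≤ ε * K ρ + 1 / 2 * H ρ := by
        have hKp : 0 ≤ K ρ := by linarith
        calc (R0 - ρ) * (2 * D ρ + e1 ρ) ≤ (R0 - ρ) * (K ρ + H ρ * (1 + M / lam)) := by gcongr
          _ ≤ ε * (K ρ + H ρ * (1 + M / lam)) := by gcongr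
          _ = ε * K ρ + (ε * (1 + M / lam)) * H ρ := by ring
          _ ≤ ε * K ρ + 1 / 2 * H ρ := by gcongr
      have g4 : C4 * ((-1) * H ρ + (R0 - ρ) * (2 * D ρ + e1 ρ)) ≤ M * K ρ - C4 / 2 * H ρ := by
        have hKp : 0 ≤ K ρ := by linarith
        have h1 : C4 * ε * K ρ ≤ M * K ρ := by gcongr
        have h2 : C4 * ((R0 - ρ) * (2 * D ρ + e1 ρ)) ≤ C4 * (ε * K ρ + 1 / 2 * H ρ) := by gcongr
        linarith
      have g5 : (2 * M * C1 + M) * W ρ ≤ C4 / 2 * H ρ := by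
        calc (2 * M * C1 + M) * W ρ ≤ (2 * M * C1 + M) * (H ρ / lam) := by gcongr
          _ = C4 / 2 * H ρ := by rw [hC4]; field_simp
      have g6 : 2 * M * (K ρ - C1 * W ρ) ≤ 2 * M * (2 * P ρ - G ρ + e2 ρ) := by gcongr
      linarith
  have hΦ0 : ∀ ρ ∈ Set.Icc a R0, G ρ ≤ -2 * M * D ρ + C4 * ε * H ρ := by
    intro ρ hρ
    have h1 := hanti hρ (show R0 ∈ Set.Icc a R0 from ⟨haR0, le_rfl⟩) hρ.2
    simp only [hΦ, HR0, DR0, GR0] at h1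
    have hH := S.H0 (ρ := ρ) (by linarith [hρ.1])
    have h2 : C4 * ((R0 - ρ) * H ρ) ≤ C4 * (ε * H ρ) := by
      gcongr; linarith [hρ.1]
    nlinarith
  -- apply the growth lemma
  set k := 2 * M + C4 * ε with hk
  set m := k * R0 ^ (1 + α) + M / lam with hm
  have hR0p : 0 < R0 ^ (1 + α) := Real.rpow_pos_of_pos (by linarith) _
  have hfin := freq_bound (a := a) (b := R0) (m := m) (α := α) (H := H) (D := D)
    (by linarith) (by positivity) S.α0
    (fun ρ hρ => S.hH ρ (by linarith [hρ.1])) (fun ρ hρ => S.hD ρ (by linarith [hρ.1]))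
    (by
      intro ρ hρ hHp
      have hρ1 : 1 < ρ := by linarith [hρ.1]
      have hr1' : 0 < ρ ^ (-1 - α) := Real.rpow_pos_of_pos (by linarith) _
      have h1 := S.freq_ineq hρ1
      have h2 := hΦ0 ρ hρ
      have h3 : 1 ≤ R0 ^ (1 + α) * ρ ^ (-1 - α) := by
        have : ρ ^ (1 + α) * ρ ^ (-1 - α) = 1 := by
          rw [← Real.rpow_add (by linarith)]; simp
        calc (1:ℝ) = ρ ^ (1 + α) * ρ ^ (-1 - α) := this.symm
          _ ≤ R0 ^ (1 + α) * ρ ^ (-1 - α) := mul_le_mul_of_nonneg_right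
              (Real.rpow_le_rpow (by linarith) hρ.2 (by linarith [S.α0])) hr1'.le
      have h4 : -D ρ ≤ |D ρ| := neg_le_abs _
      have h5 : G ρ * H ρ ≤ k * (H ρ ^ 2 + |D ρ| * H ρ) := by
        have hx : 0 ≤ |D ρ| * H ρ := by positivity
        have : G ρ * H ρ ≤ (2 * M * |D ρ| + C4 * ε * H ρ) * H ρ := by
          gcongr
          nlinarith
        rw [hk]
        have hy : 0 ≤ C4 * ε * (|D ρ| * H ρ) := by positivity
        have hz : 0 ≤ 2 * M * H ρ ^ 2 := by positivity
        nlinarith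
      have h6 : k * (H ρ ^ 2 + |D ρ| * H ρ) ≤ k * (H ρ ^ 2 + |D ρ| * H ρ) * (R0 ^ (1 + α) * ρ ^ (-1 - α)) := by
        apply le_mul_of_one_le_right _ h3
        positivity
      rw [hm]
      nlinarith)
    (by
      intro ρ hρ hHp
      have hρ1 : 1 < ρ := by linarith [hρ.1]
      have hr1' : 0 < ρ ^ (-1 - α) := Real.rpow_pos_of_pos (by linarith) _
      have h1 := S.Hlow hρ1
      have : 0 ≤ k * R0 ^ (1 + α) * ρ ^ (-1 - α) * H ρ := by positivity
      rw [hm]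
      nlinarith)
    haT.2 R0 ⟨haR0, le_rfl⟩
  linarith [hfin.1]

end Sys

end PartA2

section PartA3
open MeasureTheory Metric Filter
namespace Sys
variable {H D P K W G e1 e2 e3 : ℝ → ℝ} {lam α M c : ℝ}

set_option maxHeartbeats 1000000 in
theorem neg_case (S : Sys H D P K W G e1 e2 e3 lam α M c) {R1 : ℝ}
    (hneg : ∀ ρ ≥ R1, G ρ ≤ 0) : ∃ R, ∀ ρ ≥ R, 1 < ρ → H ρ = 0 := by
  obtain ⟨R', hR'1, hR'⟩ := S.evsmall (show (0:ℝ) < 1 / 4 by norm_num)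
  set R2 := max R1 R' with hR2
  have hR21 : 1 < R2 := lt_of_lt_of_le hR'1 (le_max_right _ _)
  have hM := S.M0
  have hl := S.lam0
  refine ⟨R2, ?_⟩
  by_contra hcon
  push Not at hcon
  obtain ⟨ρ₀, hρ₀, -, hne⟩ := hcon
  have hρ₀1 : 1 < ρ₀ := by linarith
  have hpos : 0 < H ρ₀ := lt_of_le_of_ne (S.H0 hρ₀1) (Ne.symm hne)
  -- lower bound for the derivative of G
  have hG' : ∀ ρ ≥ R2, lam / 2 * (H ρ / ρ) ≤ 2 / ρ * (K ρ - P ρ) + e3 ρ := by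
    intro ρ hρ
    have hρ1 : 1 < ρ := by linarith
    have hρ0 : 0 < ρ := by linarith
    have hs := hR' ρ (le_trans (le_max_right _ _) hρ)
    have hg := hneg ρ (le_trans (le_max_left _ _) hρ)
    rw [S.hGdef ρ hρ1] at hg
    have hr : 0 < ρ ^ (-α) := Real.rpow_pos_of_pos hρ0 _
    have hW := S.W0 ρ hρ1
    have hP := S.P0 ρ hρ1
    have hPK := S.PK ρ hρ1
    have hsm : M * ρ ^ (-α) ≤ 1 / 4 := le_trans (by gcongr; exact S.Mle) hs
    have h6 : |c / ρ ^ 2 * H ρ| ≤ 1 / 4 * W ρ := (S.cH hρ1).trans (by gcongr)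
    have he3 := S.he3 ρ hρ1
    rw [S.rp hρ1] at he3
    have h5 : |e3 ρ| ≤ 1 / 4 * (K ρ + W ρ) / ρ := he3.trans (by
      have : 0 ≤ K ρ + W ρ := by linarith
      calc M * (ρ ^ (-α) / ρ) * (K ρ + W ρ) = M * ρ ^ (-α) * (K ρ + W ρ) / ρ := by ring
        _ ≤ _ := by gcongr)
    have h8 := (abs_le.mp h6).2
    have h7 := (abs_le.mp h5).1
    have hHW := S.WH ρ hρ1
    have key : lam / 2 * H ρ ≤ 2 * (K ρ - P ρ) - 1 / 4 * (K ρ + W ρ) := by linarith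
    calc lam / 2 * (H ρ / ρ) = (lam / 2 * H ρ) / ρ := by ring
      _ ≤ (2 * (K ρ - P ρ) - 1 / 4 * (K ρ + W ρ)) / ρ := by gcongr
      _ = 2 / ρ * (K ρ - P ρ) + -(1 / 4 * (K ρ + W ρ) / ρ) := by ring
      _ ≤ _ := by linarith
  -- growth lemma
  set m := M / lam with hm
  have hmp : 0 < m := by positivity
  set Λ := (|D ρ₀| / H ρ₀ + m + 1) * Real.exp ((m + 1) / α * ρ₀ ^ (-α)) with hΛ
  have hΛp : 0 < Λ := by positivity
  have hfreq : ∀ ρ ≥ ρ₀, 0 < H ρ ∧ -D ρ ≤ Λ * H ρ := by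
    intro ρ hρ
    refine freq_bound (a := ρ₀) (b := ρ) (m := m) (α := α) (H := H) (D := D)
      (by linarith) hmp.le S.α0
      (fun s hs => S.hH s (by linarith [hs.1])) (fun s hs => S.hD s (by linarith [hs.1]))
      ?_ ?_ hpos ρ ⟨hρ, le_rfl⟩
    · intro s hs hHs
      have h1 := S.freq_ineq (ρ := s) (by linarith [hs.1])
      have h2 := hneg s (le_trans (le_max_left _ _) (hρ₀.le.trans hs.1))
      have : G s * H s ≤ 0 := mul_nonpos_of_nonpos_of_nonneg h2 hHs.le
      linarith
    · intro s hs hHs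
      exact S.Hlow (by linarith [hs.1])
  set L := 2 * Λ + m with hL
  have hLp : 0 < L := by positivity
  have hrle : ∀ ρ : ℝ, 1 < ρ → ρ ^ (-1 - α) ≤ 1 := fun ρ hρ =>
    Real.rpow_le_one_of_one_le_of_nonpos hρ.le (by linarith [S.α0])
  -- lower bound on H
  have hlow : ∀ ρ ≥ ρ₀, ∀ s ∈ Set.Icc ρ (ρ + 1), H ρ * Real.exp (-L) ≤ H s := by
    intro ρ hρ s hs
    have hd : ∀ x ≥ ρ₀, HasDerivAt (fun x => H x * Real.exp (L * (x - ρ)))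
        ((2 * D x + e1 x + L * H x) * Real.exp (L * (x - ρ))) x := by
      intro x hx
      have h1 : HasDerivAt (fun x : ℝ => L * (x - ρ)) L x := by
        simpa using ((hasDerivAt_id x).sub_const ρ).const_mul L
      have := (S.hH x (by linarith)).mul h1.exp
      refine this.congr_deriv ?_
      ring
    have hmono : MonotoneOn (fun x => H x * Real.exp (L * (x - ρ))) (Set.Ici ρ₀) := by
      apply monotoneOn_of_deriv_nonneg (convex_Ici _)
      · exact fun x hx => (hd x hx).continuousAt.continuousWithinAt
      · intro x hx
        rw [interior_Ici] at hx
        exact (hd x (le_of_lt hx)).differentiableAt.differentiableWithinAt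
      · intro x hx
        rw [interior_Ici] at hx
        have hx' : ρ₀ ≤ x := le_of_lt hx
        rw [(hd x hx').deriv]
        apply mul_nonneg _ (Real.exp_pos _).le
        have h1 := S.Hlow (ρ := x) (by linarith)
        obtain ⟨h2, h3⟩ := hfreq x hx'
        have h4 : M / lam * x ^ (-1 - α) * H x ≤ M / lam * 1 * H x := by
          gcongr; exact hrle x (by linarith)
        rw [← hm] at h1 h4
        nlinarith
    have h8 := hmono (show ρ₀ ≤ ρ from hρ) (show ρ₀ ≤ s from hρ.le.trans hs.1) hs.1
    simp only [sub_self, mul_zero, Real.exp_zero, mul_one] at h8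
    have hHs := (hfreq s (hρ.le.trans hs.1)).1
    calc H ρ * Real.exp (-L) ≤ (H s * Real.exp (L * (s - ρ))) * Real.exp (-L) := by gcongr
      _ = H s * Real.exp (L * (s - ρ - 1)) := by
          rw [mul_assoc, ← Real.exp_add]; congr 2; ring
      _ ≤ H s * 1 := by
          gcongr
          rw [Real.exp_le_one_iff]
          have := hs.2
          nlinarith
      _ = H s := mul_one _
  set c1 := lam / 4 * Real.exp (-L) with hc1
  have hc1p : 0 < c1 := by positivity
  have hGH : ∀ ρ ≥ ρ₀, G ρ ≤ -(c1 / ρ) * H ρ := by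
    intro ρ hρ
    have hρ1 : 1 < ρ := by linarith
    have h1 := (convex_Icc ρ (ρ + 1)).mul_sub_le_image_sub_of_le_deriv (f := G)
      (C := c1 / ρ * H ρ)
      (fun x hx => (S.hG x (by linarith [hx.1])).continuousAt.continuousWithinAt)
      (fun x hx => by
        rw [interior_Icc] at hx
        exact (S.hG x (by linarith [hx.1])).differentiableAt.differentiableWithinAt)
      (fun x hx => by
        rw [interior_Icc] at hx
        rw [(S.hG x (by linarith [hx.1])).deriv]
        refine le_trans ?_ (hG' x (by linarith [hx.1]))
        have h2 := hlow ρ hρ x ⟨hx.1.le, hx.2.le⟩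
        have h3 : x ≤ 2 * ρ := by linarith [hx.2]
        have hx0 : 0 < x := by linarith [hx.1]
        have hHρ := (hfreq ρ hρ).1
        have hHx := (hfreq x (by linarith [hx.1])).1.le
        calc c1 / ρ * H ρ = lam / 2 * ((H ρ * Real.exp (-L)) / (2 * ρ)) := by
              rw [hc1]; field_simp; ring
          _ ≤ lam / 2 * (H x / x) := by gcongr)
      ρ ⟨le_rfl, by linarith⟩ (ρ + 1) ⟨by linarith, le_rfl⟩ (by linarith)
    have h2 := hneg (ρ + 1) (by
      have : R1 ≤ R2 := le_max_left _ _
      linarith)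
    nlinarith
  -- decay of the frequency
  set q := m + 1 with hq
  set Q := Λ + q with hQ
  obtain ⟨R3, hR3a, hR3⟩ : ∃ R3 ≥ ρ₀, ∀ ρ ≥ R3, m * ρ ^ (-α) * (1 + Q) ≤ c1 / 2 := by
    have h1 : Tendsto (fun ρ : ℝ => m * ρ ^ (-α) * (1 + Q)) atTop (nhds (m * 0 * (1 + Q))) :=
      ((tendsto_rpow_neg_atTop S.α0).const_mul _).mul_const _
    rw [mul_zero, zero_mul] at h1
    have h2 := (h1.eventually (gt_mem_nhds (show 0 < c1 / 2 by positivity))).and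
      (eventually_ge_atTop ρ₀)
    obtain ⟨R, hR⟩ := (eventually_atTop.mp h2)
    exact ⟨R, (hR R le_rfl).2, fun ρ hρ => (hR ρ hρ).1.le⟩
  have hR30 : 0 < R3 := by linarith
  set N : ℝ → ℝ := fun ρ => -D ρ / H ρ with hN
  set N' : ℝ → ℝ := fun ρ => (-((2 * P ρ - G ρ + e2 ρ) * H ρ - D ρ * (2 * D ρ + e1 ρ))) / H ρ ^ 2
    with hN'
  have hNd : ∀ ρ ≥ ρ₀, HasDerivAt N (N' ρ) ρ := by
    intro ρ hρ
    have := ((S.hD ρ (by linarith)).neg).div (S.hH ρ (by linarith)) (hfreq ρ hρ).1.ne'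
    refine this.congr_deriv ?_
    simp only [Pi.neg_apply, hN']
    ring
  have hNle : ∀ ρ ≥ R3, -q ≤ N ρ → N' ρ ≤ -(c1 / 2) / ρ := by
    intro ρ hρ hge
    have hρ₀' : ρ₀ ≤ ρ := hR3a.le.trans hρ
    have hρ1 : 1 < ρ := by linarith
    have hρ0 : 0 < ρ := by linarith
    obtain ⟨hHp, hDle⟩ := hfreq ρ hρ₀'
    have hND : D ρ = -(N ρ) * H ρ := by simp only [hN]; field_simp
    have hNΛ : N ρ ≤ Λ := by simp only [hN]; rw [div_le_iff₀ hHp]; exact hDle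
    have hDabs : |D ρ| ≤ Q * H ρ := by
      rw [hND, abs_mul, abs_of_pos hHp, abs_neg]
      gcongr
      rw [abs_le]
      constructor <;> linarith
    have h1 := S.freq_ineq hρ1
    rw [← hm, S.rp hρ1] at h1
    have h2 := hGH ρ hρ₀'
    have h3 := hR3 ρ hρ
    have hr : 0 < ρ ^ (-α) := Real.rpow_pos_of_pos hρ0 _
    simp only [hN']
    rw [div_le_iff₀ (by positivity)]
    refine h1.trans ?_
    have h4 : G ρ * H ρ ≤ -(c1 / ρ) * H ρ * H ρ := by gcongr
    have h5 : m * (ρ ^ (-α) / ρ) * (H ρ ^ 2 + |D ρ| * H ρ) ≤ (c1 / 2) / ρ * H ρ ^ 2 := by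
      calc m * (ρ ^ (-α) / ρ) * (H ρ ^ 2 + |D ρ| * H ρ)
          ≤ m * (ρ ^ (-α) / ρ) * (H ρ ^ 2 + Q * H ρ * H ρ) := by gcongr
        _ = (m * ρ ^ (-α) * (1 + Q)) / ρ * H ρ ^ 2 := by ring
        _ ≤ _ := by gcongr
    calc _ ≤ -(c1 / ρ) * H ρ * H ρ + (c1 / 2) / ρ * H ρ ^ 2 := add_le_add h4 h5
      _ = _ := by ring
  -- choose R4
  set B : ℝ → ℝ := fun ρ => Λ - c1 / 4 * (Real.log ρ - Real.log R3) with hB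
  set R4 := R3 * Real.exp (4 / c1 * (Λ + q)) with hR4
  have hQp : 0 < Λ + q := by positivity
  have hR34 : R3 ≤ R4 := by
    rw [hR4]; apply le_mul_of_one_le_right hR30.le
    apply Real.one_le_exp; positivity
  have hlogR4 : Real.log R4 = Real.log R3 + 4 / c1 * (Λ + q) := by
    rw [hR4, Real.log_mul hR30.ne' (Real.exp_pos _).ne', Real.log_exp]
  have hBd : ∀ ρ ≥ R3, HasDerivAt B (-(c1 / 4) / ρ) ρ := by
    intro ρ hρ
    have := (((Real.hasDerivAt_log (show ρ ≠ 0 by linarith)).sub_const (Real.log R3)).const_mul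
      (c1 / 4)).const_sub Λ
    refine this.congr_deriv ?_
    ring
  have hN4 : N R4 ≤ -q := by
    have h1 := image_le_of_deriv_right_lt_deriv_boundary' (f := N) (f' := N') (a := R3) (b := R4)
      (fun ρ hρ => (hNd ρ (hR3a.le.trans hρ.1)).continuousAt.continuousWithinAt)
      (fun ρ hρ => (hNd ρ (hR3a.le.trans hρ.1)).hasDerivWithinAt)
      (B := B) (B' := fun ρ => -(c1 / 4) / ρ)
      (by
        simp only [hB, sub_self, mul_zero, sub_zero, hN]
        obtain ⟨h1, h2⟩ := hfreq R3 hR3a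
        rw [div_le_iff₀ h1]; exact h2)
      (fun ρ hρ => (hBd ρ hρ.1).continuousAt.continuousWithinAt)
      (fun ρ hρ => (hBd ρ hρ.1).hasDerivWithinAt)
      (by
        intro ρ hρ heq
        have hρ0 : 0 < ρ := by linarith [hρ.1]
        have hBq : -q ≤ B ρ := by
          simp only [hB]
          have h2 : Real.log ρ ≤ Real.log R4 := Real.log_le_log hρ0 hρ.2.le
          have h3 : c1 / 4 * (Real.log ρ - Real.log R3) ≤ c1 / 4 * (4 / c1 * (Λ + q)) := by
            gcongr; linarith
          have h4 : c1 / 4 * (4 / c1 * (Λ + q)) = Λ + q := by field_simp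
          linarith
        refine lt_of_le_of_lt (hNle ρ hρ.1 (heq ▸ hBq)) ?_
        rw [div_lt_div_iff_of_pos_right hρ0]
        linarith)
    have h2 := h1 (show R4 ∈ Set.Icc R3 R4 from ⟨hR34, le_rfl⟩)
    simp only [hB, hlogR4] at h2
    have h4 : c1 / 4 * (Real.log R3 + 4 / c1 * (Λ + q) - Real.log R3) = Λ + q := by
      field_simp; ring
    linarith
  have hNq : ∀ ρ ≥ R4, N ρ ≤ -q := by
    intro ρ hρ
    have h1 := image_le_of_deriv_right_lt_deriv_boundary' (f := N) (f' := N') (a := R4) (b := ρ)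
      (fun s hs => (hNd s (by linarith [hs.1])).continuousAt.continuousWithinAt)
      (fun s hs => (hNd s (by linarith [hs.1])).hasDerivWithinAt)
      (B := fun _ => -q) (B' := fun _ => 0) hN4 continuousOn_const
      (fun s hs => hasDerivWithinAt_const _ _ _)
      (by
        intro s hs heq
        have hs0 : 0 < s := by linarith [hs.1]
        refine lt_of_le_of_lt (hNle s (by linarith [hs.1]) heq.ge) ?_
        apply div_neg_of_neg_of_pos (by linarith) hs0)
    exact h1 ⟨hρ, le_rfl⟩
  -- H increasing
  have hHmono : MonotoneOn H (Set.Ici R4) := by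
    apply monotoneOn_of_deriv_nonneg (convex_Ici _)
    · intro x hx
      exact (S.hH x (by linarith [Set.mem_Ici.mp hx])).continuousAt.continuousWithinAt
    · intro x hx
      rw [interior_Ici] at hx
      exact (S.hH x (by linarith [Set.mem_Ioi.mp hx])).differentiableAt.differentiableWithinAt
    · intro x hx
      rw [interior_Ici] at hx
      have hx' : R4 < x := hx
      have hx1 : 1 < x := by linarith
      rw [(S.hH x hx1).deriv]
      have h1 := S.Hlow hx1
      have h2 := hNq x hx'.le
      have hHp := (hfreq x (by linarith)).1
      simp only [hN] at h2
      rw [div_le_iff₀ hHp] at h2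
      have h4 : M / lam * x ^ (-1 - α) * H x ≤ M / lam * 1 * H x := by
        gcongr; exact hrle x (by linarith)
      rw [← hm] at h1 h4
      nlinarith
  -- contradiction
  have hR40 : 0 < R4 := by linarith
  have hH4 := (hfreq R4 (by linarith)).1
  set c2 := lam / 2 * H R4 with hc2
  have hc2p : 0 < c2 := by positivity
  have hGd : ∀ ρ ≥ R4, HasDerivAt (fun ρ => G ρ - c2 * Real.log ρ)
      (2 / ρ * (K ρ - P ρ) + e3 ρ - c2 * ρ⁻¹) ρ := by
    intro ρ hρ
    exact (S.hG ρ (by linarith)).sub ((Real.hasDerivAt_log (by linarith)).const_mul c2)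
  have hGm : MonotoneOn (fun ρ => G ρ - c2 * Real.log ρ) (Set.Ici R4) := by
    apply monotoneOn_of_deriv_nonneg (convex_Ici _)
    · exact fun x hx => (hGd x hx).continuousAt.continuousWithinAt
    · intro x hx
      rw [interior_Ici] at hx
      exact (hGd x (le_of_lt hx)).differentiableAt.differentiableWithinAt
    · intro x hx
      rw [interior_Ici] at hx
      have hx' : R4 < x := hx
      rw [(hGd x hx'.le).deriv]
      have h1 := hG' x (by linarith)
      have h2 := hHmono (show R4 ≤ R4 from le_rfl) (show R4 ≤ x from hx'.le) hx'.le
      have hx0 : 0 < x := by linarith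
      have h3 : c2 * x⁻¹ ≤ lam / 2 * (H x / x) := by
        calc c2 * x⁻¹ = lam / 2 * (H R4 / x) := by rw [hc2]; ring
          _ ≤ _ := by gcongr
      linarith
  set R5 := R4 * Real.exp ((1 - G R4) / c2) with hR5
  have hG4 := hneg R4 (by
    have : R1 ≤ R2 := le_max_left _ _
    linarith)
  have hR45 : R4 ≤ R5 := by
    rw [hR5]; apply le_mul_of_one_le_right hR40.le
    apply Real.one_le_exp
    apply div_nonneg (by linarith) hc2p.le
  have h1 := hGm (show R4 ≤ R4 from le_rfl) (show R4 ≤ R5 from hR45) hR45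
  have hlog5 : Real.log R5 = Real.log R4 + (1 - G R4) / c2 := by
    rw [hR5, Real.log_mul hR40.ne' (Real.exp_pos _).ne', Real.log_exp]
  simp only [hlog5] at h1
  have h2 : c2 * ((1 - G R4) / c2) = 1 - G R4 := by field_simp
  have h3 := hneg R5 (by
    have : R1 ≤ R2 := le_max_left _ _
    linarith)
  nlinarith

theorem main (S : Sys H D P K W G e1 e2 e3 lam α M c) {δ : ℝ} (h0 : 0 < δ) (h1 : δ < 1)
    (hne : ∃ ρ > 1, H ρ ≠ 0) :
    ∃ C₂ > (0 : ℝ), ∃ R₂ > (1 : ℝ), ∀ ρ ≥ R₂, C₂ ≤ ρ ^ δ * G ρ := by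
  obtain ⟨R, hR1, hR⟩ := S.pos_case h0 h1
  by_cases h : ∃ ρ₀ ≥ R, 0 < G ρ₀
  · obtain ⟨ρ₀, hρ₀, hG⟩ := h
    refine ⟨ρ₀ ^ δ * G ρ₀, ?_, ρ₀, by linarith, fun ρ hρ => hR ρ₀ hρ₀ ρ hρ⟩
    have : 0 < ρ₀ ^ δ := Real.rpow_pos_of_pos (by linarith) _
    positivity
  · push Not at h
    obtain ⟨R', hR'⟩ := S.neg_case h
    obtain ⟨ρ, hρ, hH⟩ := hne
    exact absurd (S.ucp hR' ρ hρ) hH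

end Sys

end PartA3

section PartB2
open MeasureTheory Metric Filter
open scoped Pointwise ENNReal NNReal Topology

namespace SphM

theorem rot_exists {n : ℕ} (x y : En n) (h : ‖x‖ = ‖y‖) : ∃ g : En n ≃ₗᵢ[ℝ] En n, g x = y :=
  ⟨_, Submodule.reflection_sub h⟩

theorem rot_image {n : ℕ} (g : En n ≃ₗᵢ[ℝ] En n) (x : En n) (r : ℝ) :
    g '' (closedBall x r ∩ sphere 0 1) = closedBall (g x) r ∩ sphere 0 1 := by
  rw [Set.image_inter g.injective, LinearIsometryEquiv.image_closedBall,
    LinearIsometryEquiv.image_sphere, map_zero]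

/-- Hausdorff measure on the unit sphere. -/
noncomputable def s1 (n : ℕ) : Measure (En n) := (μH[(n : ℝ) - 1]).restrict (sphere 0 1)
/-- Polar measure on the unit sphere. -/
noncomputable def s2 (n : ℕ) : Measure (En n) := (volume.toSphere).map Subtype.val

theorem s1_ball {n : ℕ} {x y : En n} (hx : ‖x‖ = 1) (hy : ‖y‖ = 1) (r : ℝ) :
    s1 n (closedBall x r) = s1 n (closedBall y r) := by
  obtain ⟨g, rfl⟩ := rot_exists x y (hx.trans hy.symm)
  rw [s1, Measure.restrict_apply measurableSet_closedBall,
    Measure.restrict_apply measurableSet_closedBall, ← rot_image g]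
  exact (g.toIsometryEquiv.hausdorffMeasure_image _ _).symm

theorem s2_ball_eq {n : ℕ} (x : En n) (r : ℝ) :
    s2 n (closedBall x r) = n * volume (Set.Ioo (0 : ℝ) 1 • (closedBall x r ∩ sphere 0 1)) := by
  rw [s2, Measure.map_apply measurable_subtype_coe measurableSet_closedBall,
    Measure.toSphere_apply' _ (measurable_subtype_coe measurableSet_closedBall),
    Subtype.image_preimage_coe, Set.inter_comm]
  simp

theorem s2_ball {n : ℕ} {x y : En n} (hx : ‖x‖ = 1) (hy : ‖y‖ = 1) (r : ℝ) :
    s2 n (closedBall x r) = s2 n (closedBall y r) := by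
  obtain ⟨g, rfl⟩ := rot_exists x y (hx.trans hy.symm)
  rw [s2_ball_eq, s2_ball_eq, ← rot_image g]
  have h1 : Set.Ioo (0:ℝ) 1 • g '' (closedBall x r ∩ sphere 0 1)
      = g '' (Set.Ioo (0:ℝ) 1 • (closedBall x r ∩ sphere 0 1)) := by
    rw [← Set.image2_smul, ← Set.image2_smul, Set.image_image2, Set.image2_image_right]
    simp only [map_smul]
  rw [h1]
  congr 1
  have h2 := g.symm.measurePreserving.measure_preimage_equiv (f := g.symm.toMeasurableEquiv)
    (Set.Ioo (0:ℝ) 1 • (closedBall x r ∩ sphere 0 1))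
  rw [← h2]
  congr 1
  exact (g.toEquiv.image_eq_preimage_symm _).symm

theorem s1_finite (m : ℕ) : IsFiniteMeasure (s1 (m + 1)) := by
  have hd : (((m + 1 : ℕ) : ℝ) - 1) = ((Fintype.card (Fin m) : ℕ) : ℝ) := by simp
  have hd0 : (0 : ℝ) ≤ ((m + 1 : ℕ) : ℝ) - 1 := by simp
  let ins : Fin (m+1) → ℝ → (Fin m → ℝ) → En (m+1) := fun i s y =>
    WithLp.toLp 2 (i.insertNth s y : Fin (m+1) → ℝ)
  let F : Fin (m+1) → ℝ → (Fin m → ℝ) → En (m+1) := fun i s y => ‖ins i s y‖⁻¹ • ins i s y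
  let Q : Set (Fin m → ℝ) := Set.Icc (fun _ => -1) (fun _ => 1)
  have hins : ∀ i s, ContDiff ℝ 1 (ins i s) := by
    intro i s
    rw [contDiff_euclidean]
    intro j
    refine Fin.succAboveCases i ?_ ?_ j
    · simp only [ins, Fin.insertNth_apply_same]; exact contDiff_const
    · intro k; simp only [ins, Fin.insertNth_apply_succAbove]; fun_prop
  have hne : ∀ i s, s ≠ 0 → ∀ y, ins i s y ≠ 0 := by
    intro i s hs y h
    have := congrArg (fun v : En (m+1) => v i) h
    simp [ins] at this
    exact hs this
  have hF : ∀ i s, s ≠ 0 → ContDiff ℝ 1 (F i s) := by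
    intro i s hs
    refine ContDiff.smul (ContDiff.inv ((hins i s).norm ℝ (hne i s hs)) ?_) (hins i s)
    intro y; exact norm_ne_zero_iff.mpr (hne i s hs y)
  have hfin : ∀ i s, s ≠ 0 → μH[((m + 1 : ℕ) : ℝ) - 1] (F i s '' Q) < ∞ := by
    intro i s hs
    obtain ⟨K, hK⟩ := ((hF i s hs).locallyLipschitz.locallyLipschitzOn
      (s := Q)).exists_lipschitzOnWith_of_compact isCompact_Icc
    refine (hK.hausdorffMeasure_image_le hd0).trans_lt ?_
    refine ENNReal.mul_lt_top (ENNReal.rpow_lt_top_of_nonneg hd0 ENNReal.coe_ne_top) ?_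
    rw [hd, hausdorffMeasure_pi_real]
    exact isCompact_Icc.measure_lt_top
  refine ⟨?_⟩
  rw [s1, Measure.restrict_apply_univ]
  have hsub : sphere (0 : En (m+1)) 1 ⊆ ⋃ i : Fin (m+1), (F i 1 '' Q ∪ F i (-1) '' Q) := by
    intro x hx
    have hx1 : ‖x‖ = 1 := by simpa using hx
    obtain ⟨i, -, hi⟩ := Finset.exists_max_image Finset.univ (fun i => |x i|) Finset.univ_nonempty
    have hxi : 0 < |x i| := by
      by_contra h
      have h0 : x = 0 := by
        ext j
        have h2 := hi j (Finset.mem_univ _)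
        have := abs_nonneg (x j)
        simp only [PiLp.zero_apply]
        exact abs_eq_zero.mp (by linarith)
      rw [h0] at hx1; simp at hx1
    have main : ∀ s : ℝ, |s| = 1 → x i = s * |x i| → x ∈ F i s '' Q := by
      intro s hs hxs
      have hins' : ins i s (fun k => x (i.succAbove k) / |x i|) = |x i|⁻¹ • x := by
        ext j
        refine Fin.succAboveCases i ?_ ?_ j
        · simp only [ins, Fin.insertNth_apply_same, PiLp.smul_apply, smul_eq_mul]
          rw [hxs]; field_simp; simp [abs_mul, hs]
        · intro k
          simp only [ins, Fin.insertNth_apply_succAbove, PiLp.smul_apply, smul_eq_mul]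
          field_simp
      refine ⟨fun k => x (i.succAbove k) / |x i|, ?_, ?_⟩
      · refine ⟨fun k => ?_, fun k => ?_⟩ <;>
        · have h2 := abs_le.mp (hi (i.succAbove k) (Finset.mem_univ _))
          simp only
          first
          | (rw [le_div_iff₀ hxi]; linarith [h2.1])
          | (rw [div_le_iff₀ hxi]; linarith [h2.2])
      · simp only [F, hins']
        rw [norm_smul, hx1, smul_smul]
        simp [hxi.ne']
    refine Set.mem_iUnion.mpr ⟨i, ?_⟩
    rcases le_total 0 (x i) with h | h
    · exact Or.inl (main 1 (by simp) (by rw [abs_of_nonneg h]; ring))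
    · exact Or.inr (main (-1) (by simp) (by rw [abs_of_nonpos h]; ring))
  refine (measure_mono hsub).trans_lt ?_
  refine (measure_iUnion_le _).trans_lt ?_
  rw [tsum_fintype]
  refine ENNReal.sum_lt_top.mpr fun i _ => ?_
  exact (measure_union_le _ _).trans_lt (ENNReal.add_lt_top.mpr
    ⟨hfin i 1 one_ne_zero, hfin i (-1) (by norm_num)⟩)

theorem s1_pos (m : ℕ) : s1 (m + 1) Set.univ ≠ 0 := by
  have hd : (((m + 1 : ℕ) : ℝ) - 1) = ((Fintype.card (Fin m) : ℕ) : ℝ) := by simp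
  have hd0 : (0 : ℝ) ≤ ((m + 1 : ℕ) : ℝ) - 1 := by simp
  rw [s1, Measure.restrict_apply_univ]
  let pr : En (m+1) → (Fin m → ℝ) := fun x k => x k.succ
  have hpr : LipschitzWith 1 pr := by
    refine LipschitzWith.of_dist_le_mul fun x y => ?_
    rw [NNReal.coe_one, one_mul, dist_pi_le_iff dist_nonneg]
    intro k
    rw [dist_eq_norm, dist_eq_norm]
    exact PiLp.norm_apply_le (x - y) k.succ
  let U : Set (Fin m → ℝ) := {y | ∑ k, y k ^ 2 < 1}
  have hU : IsOpen U := isOpen_lt (by fun_prop) continuous_const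
  have hsub : U ⊆ pr '' sphere (0 : En (m+1)) 1 := by
    intro y hy
    refine ⟨WithLp.toLp 2 (Fin.cons (Real.sqrt (1 - ∑ k, y k ^ 2)) y : Fin (m+1) → ℝ), ?_, ?_⟩
    · have h1 : (0:ℝ) ≤ 1 - ∑ k, y k ^ 2 := by
        have : ∑ k, y k ^ 2 < 1 := hy
        linarith
      rw [mem_sphere_zero_iff_norm, EuclideanSpace.norm_eq, Fin.sum_univ_succ]
      simp [Real.sq_sqrt h1]
    · ext k; simp [pr]
  have hpos : 0 < volume U := hU.measure_pos _ ⟨0, by simp [U]⟩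
  intro h0
  have h1 := hpr.hausdorffMeasure_image_le hd0 (sphere (0 : En (m+1)) 1)
  rw [h0, mul_zero, hd, hausdorffMeasure_pi_real] at h1
  exact absurd ((measure_mono hsub).trans h1) (not_le.mpr hpos)

theorem s1_eq (m : ℕ) : ∃ k : ℝ, 0 < k ∧ ∀ f : En (m + 1) → ℝ,
    ∫ x, f x ∂(s1 (m + 1)) = k * ∫ x, f x ∂(s2 (m + 1)) := by
  have := s1_finite m
  have : IsFiniteMeasure (s2 (m + 1)) := by unfold s2; infer_instance
  have key : ∀ σ : Measure (En (m + 1)), ∀ τ : Measure (En (m+1)), IsFiniteMeasure σ →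
      IsFiniteMeasure τ → σ ≪ τ → (∀ᵐ x ∂τ, ‖x‖ = 1) →
      (∀ x y : En (m+1), ‖x‖ = 1 → ‖y‖ = 1 → ∀ r,
        σ (closedBall x r) = σ (closedBall y r) ∧ τ (closedBall x r) = τ (closedBall y r)) →
      ∃ c : ℝ≥0∞, σ = c • τ := by
    intro σ τ _ _ hac hs hb
    by_cases h0 : τ = 0
    · subst h0
      exact ⟨0, by simpa using Measure.absolutelyContinuous_zero_iff.mp hac⟩
    have h1 := Besicovitch.ae_tendsto_rnDeriv σ τ
    have : NeZero τ := ⟨h0⟩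
    have : (ae τ).NeBot := ae_neBot.mpr h0
    obtain ⟨x0, hx0, hx0'⟩ := (h1.and hs).exists
    refine ⟨σ.rnDeriv τ x0, ?_⟩
    have : σ.HaveLebesgueDecomposition τ := Measure.haveLebesgueDecomposition_of_sigmaFinite σ τ
    refine (Measure.withDensity_rnDeriv_eq σ τ hac).symm.trans ?_
    conv_rhs => rw [← withDensity_const]
    refine withDensity_congr_ae ?_
    filter_upwards [h1, hs] with x hx hx'
    refine tendsto_nhds_unique hx (hx0.congr fun r => ?_)
    rw [(hb x0 x hx0' hx' r).1, (hb x0 x hx0' hx' r).2]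
  have hs1 : ∀ᵐ x ∂(s1 (m+1)), ‖x‖ = 1 := by
    filter_upwards [ae_restrict_mem isClosed_sphere.measurableSet] with x hx
    simpa using hx
  have hs2 : ∀ᵐ x ∂(s2 (m+1)), ‖x‖ = 1 := by
    rw [s2, ae_map_iff measurable_subtype_coe.aemeasurable
      (measurableSet_eq_fun measurable_norm measurable_const)]
    exact ae_of_all _ fun x => by simp
  have hs : ∀ᵐ x ∂(s1 (m+1) + s2 (m+1)), ‖x‖ = 1 := by
    rw [ae_add_measure_iff]; exact ⟨hs1, hs2⟩
  have hbb : ∀ x y : En (m+1), ‖x‖ = 1 → ‖y‖ = 1 → ∀ r,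
      (s1 (m+1) + s2 (m+1)) (closedBall x r) = (s1 (m+1) + s2 (m+1)) (closedBall y r) := by
    intro x y hx hy r
    simp only [Measure.add_apply, s1_ball hx hy, s2_ball hx hy]
  obtain ⟨c1, hc1⟩ := key (s1 (m+1)) (s1 (m+1) + s2 (m+1)) inferInstance inferInstance
    (Measure.AbsolutelyContinuous.rfl.add_right _) hs
    (fun x y hx hy r => ⟨s1_ball hx hy r, hbb x y hx hy r⟩)
  obtain ⟨c2, hc2⟩ := key (s2 (m+1)) (s1 (m+1) + s2 (m+1)) inferInstance inferInstance
    (by rw [add_comm (s1 (m+1))]; exact (Measure.AbsolutelyContinuous.rfl.add_right _)) hs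
    (fun x y hx hy r => ⟨s2_ball hx hy r, hbb x y hx hy r⟩)
  set σ := s1 (m+1) + s2 (m+1) with hσ
  have p1 := s1_pos m
  have p2 : s2 (m+1) Set.univ ≠ 0 := by
    rw [s2, Measure.map_apply measurable_subtype_coe MeasurableSet.univ, Set.preimage_univ]
    intro h
    exact Measure.toSphere_ne_zero (volume : Measure (En (m+1))) (Measure.measure_univ_eq_zero.mp h)
  have cpos : ∀ (c : ℝ≥0∞) (τ : Measure (En (m+1))), IsFiniteMeasure τ → τ Set.univ ≠ 0 → τ = c • σ → 0 < c.toReal := by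
    intro c τ hf hp h
    have h2 : τ Set.univ = c * σ Set.univ := by rw [h]; simp
    have h3 : σ Set.univ ≠ 0 := by
      intro h0; rw [h0, mul_zero] at h2; exact hp h2
    refine ENNReal.toReal_pos ?_ ?_
    · rintro rfl; rw [zero_mul] at h2; exact hp h2
    · rintro rfl
      rw [ENNReal.top_mul h3] at h2
      exact measure_ne_top τ _ h2
  have q1 := cpos c1 _ inferInstance p1 hc1
  have q2 := cpos c2 _ inferInstance p2 hc2
  refine ⟨c1.toReal / c2.toReal, by positivity, fun f => ?_⟩
  rw [hc1, hc2, integral_smul_measure, integral_smul_measure]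
  simp only [smul_eq_mul]
  field_simp

/-- The spherical mean operator. -/
noncomputable def sav {n : ℕ} (h : En n → ℝ) (ρ : ℝ) : ℝ :=
  ∫ θ : sphere (0 : En n) 1, h (ρ • (θ : En n)) ∂((volume : Measure (En n)).toSphere)

theorem hausdorff_scale (n : ℕ) (hn : 1 ≤ n) {ρ : ℝ} (hρ : 0 < ρ) :
    (μH[(n : ℝ) - 1] : Measure (En n)).restrict (sphere 0 ρ)
      = ENNReal.ofReal (ρ ^ (n - 1)) • (s1 n).map (fun x => ρ • x) := by
  have hd0 : (0 : ℝ) ≤ (n : ℝ) - 1 := by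
    have : (1:ℝ) ≤ n := by exact_mod_cast hn
    linarith
  ext s hs
  have hm : Measurable (fun x : En n => ρ • x) := measurable_const_smul ρ
  rw [Measure.restrict_apply hs, Measure.smul_apply, Measure.map_apply hm hs, s1,
    Measure.restrict_apply (hm hs)]
  have h1 : s ∩ sphere 0 ρ = ρ • (((fun x : En n => ρ • x) ⁻¹' s) ∩ sphere 0 1) := by
    ext x
    rw [Set.mem_smul_set_iff_inv_smul_mem₀ hρ.ne']
    simp only [Set.mem_inter_iff, Set.mem_preimage, smul_inv_smul₀ hρ.ne', mem_sphere_zero_iff_norm,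
      norm_smul, norm_inv, Real.norm_eq_abs, abs_of_pos hρ]
    rw [inv_mul_eq_one₀ hρ.ne', eq_comm (a := ρ)]
  rw [h1, Measure.hausdorffMeasure_smul₀ hd0 hρ.ne', ENNReal.smul_def, smul_eq_mul, smul_eq_mul]
  congr 1
  rw [ENNReal.ofReal, ENNReal.coe_inj, ← NNReal.coe_inj]
  rw [NNReal.coe_rpow, coe_nnnorm, Real.norm_eq_abs, abs_of_pos hρ, Real.coe_toNNReal _ (by positivity),
    ← Real.rpow_natCast, Nat.cast_sub hn, Nat.cast_one]

theorem sphInt_eq (n : ℕ) (hn : 1 ≤ n) : ∃ k : ℝ, 0 < k ∧ ∀ ρ : ℝ, 0 < ρ → ∀ f : En n → ℝ,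
    sphInt n ρ f = k * ρ ^ (n - 1) * sav f ρ := by
  obtain ⟨m, rfl⟩ : ∃ m, n = m + 1 := ⟨n - 1, by omega⟩
  obtain ⟨k, hk, h⟩ := s1_eq m
  refine ⟨k, hk, fun ρ hρ f => ?_⟩
  have hmp : ∫ x, f x ∂((s1 (m+1)).map (fun x => ρ • x)) = ∫ x, f (ρ • x) ∂(s1 (m+1)) :=
    (Homeomorph.smulOfNeZero (α := En (m+1)) ρ hρ.ne').measurableEmbedding.integral_map _
  rw [sphInt, hausdorff_scale _ hn hρ, integral_smul_measure, hmp, h (fun x => f (ρ • x)), s2, (MeasurableEmbedding.subtype_coe isClosed_sphere.measurableSet).integral_map,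
    ENNReal.toReal_ofReal (by positivity), sav, smul_eq_mul]
  ring

/-- Polar coordinates. -/
theorem polar {n : ℕ} (hn : 1 ≤ n) {f : En n → ℝ} (hf : Integrable f) :
    ∫ x, f x = ∫ ρ in Set.Ioi (0:ℝ), ρ ^ (n - 1) * sav f ρ := by
  have : Nonempty (Fin n) := ⟨⟨0, hn⟩⟩
  have h1 : ∫ x, f x = ∫ x : ({(0 : En n)}ᶜ : Set (En n)), f x ∂(volume.comap Subtype.val) := by
    rw [integral_subtype_comap (measurableSet_singleton _).compl f, restrict_compl_singleton]
  have mp := (volume : Measure (En n)).measurePreserving_homeomorphUnitSphereProd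
  have me := (homeomorphUnitSphereProd (En n)).symm.measurableEmbedding
  have hd : Module.finrank ℝ (En n) = n := by simp
  rw [hd] at mp
  have mps : MeasurePreserving (homeomorphUnitSphereProd (En n)).symm
    ((volume : Measure (En n)).toSphere.prod (Measure.volumeIoiPow (n - 1)))
    (volume.comap Subtype.val) := by
    refine ⟨(homeomorphUnitSphereProd (En n)).symm.measurable, ?_⟩
    rw [← mp.map_eq, Measure.map_map (homeomorphUnitSphereProd (En n)).symm.measurable
      (homeomorphUnitSphereProd (En n)).measurable]
    simp
  have hIntg : Integrable (fun z : sphere (0 : En n) 1 × Set.Ioi (0:ℝ) =>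
      f ((homeomorphUnitSphereProd (En n)).symm z : En n))
      ((volume : Measure (En n)).toSphere.prod (Measure.volumeIoiPow (n - 1))) := by
    have h2 : Integrable (fun x : ({(0 : En n)}ᶜ : Set (En n)) => f x) (volume.comap Subtype.val) := by
      have := (MeasurableEmbedding.subtype_coe
        (measurableSet_singleton (0 : En n)).compl).integrable_map_iff
        (μ := volume.comap Subtype.val) (g := f)
      rw [(MeasurableEmbedding.subtype_coe
        (measurableSet_singleton (0 : En n)).compl).map_comap] at this
      exact this.mp hf.restrict
    exact (mps.integrable_comp_emb me).mpr h2
  rw [h1, ← mps.integral_comp me, integral_prod_symm _ hIntg, Measure.volumeIoiPow,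
    integral_withDensity_eq_integral_toReal_smul (by fun_prop) (by simp)]
  rw [← integral_subtype_comap measurableSet_Ioi (fun ρ : ℝ => ρ ^ (n - 1) * sav f ρ)]
  congr 1
  ext ρ
  have : (0:ℝ) ≤ (ρ : ℝ) ^ (n-1) := pow_nonneg (le_of_lt ρ.2) _
  rw [ENNReal.toReal_ofReal this, smul_eq_mul]
  simp [sav]

end SphM

end PartB2

section PartC1
open MeasureTheory Metric Filter
open scoped Topology ContDiff

namespace SphM
variable {n : ℕ}

/-- Divergence of a vector field. -/
noncomputable def dv (F : En n → En n) (x : En n) : ℝ :=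
  ∑ i, (fderiv ℝ F x (EuclideanSpace.single i 1)) i

theorem int_fderiv_zero {g : En n → ℝ} (hg : ContDiff ℝ 1 g) (hc : HasCompactSupport g)
    (v : En n) : ∫ x, fderiv ℝ g x v = 0 := by
  have hi : Integrable (fun x => fderiv ℝ g x v) :=
    ((hg.continuous_fderiv (by norm_num)).clm_apply continuous_const).integrable_of_hasCompactSupport
      (hc.fderiv_apply ℝ v)
  have := integral_mul_fderiv_eq_neg_fderiv_mul_of_integrable (μ := (volume : Measure (En n)))
    (f := fun _ : En n => (1:ℝ)) (g := g) (v := v) (by simp) (by simpa using hi)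
    (by simpa using hg.continuous.integrable_of_hasCompactSupport hc)
    (fun x _ => by fun_prop) (fun x _ => hg.differentiable (by norm_num) x)
  simpa using this

theorem int_dv_zero {F : En n → En n} (hF : ContDiff ℝ 1 F) (hc : HasCompactSupport F) :
    ∫ x, dv F x = 0 := by
  have hi : ∀ i, ContDiff ℝ 1 (fun x => F x i) := fun i => contDiff_euclidean.mp hF i
  have hci : ∀ i, HasCompactSupport (fun x => F x i) := fun i =>
    hc.comp_left (g := fun v : En n => v i) (by simp)
  have e : ∀ x, dv F x = ∑ i, fderiv ℝ (fun y => F y i) x (EuclideanSpace.single i 1) := by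
    intro x
    refine Finset.sum_congr rfl fun i _ => ?_
    have h1 : HasFDerivAt (fun y => F y i)
      ((EuclideanSpace.proj i : En n →L[ℝ] ℝ).comp (fderiv ℝ F x)) x :=
      (EuclideanSpace.proj i : En n →L[ℝ] ℝ).hasFDerivAt.comp x
        (hF.differentiable (by norm_num) x).hasFDerivAt
    rw [h1.fderiv]; simp
  simp_rw [e]
  rw [integral_finsetSum]
  · exact Finset.sum_eq_zero fun i _ => int_fderiv_zero (hi i) (hci i) _
  · intro i _
    exact (((hi i).continuous_fderiv (by norm_num)).clm_apply
      continuous_const).integrable_of_hasCompactSupport ((hci i).fderiv_apply ℝ _)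

/-- Compactly supported `C¹` test functions. -/
structure Tst (U : Set (En n)) (φ : En n → ℝ) : Prop where
  cd : ContDiff ℝ 1 φ
  cs : HasCompactSupport φ
  ts : tsupport φ ⊆ U

theorem smooth_approx {φ : En n → ℝ} (hφ : ContDiff ℝ 1 φ) (hc : HasCompactSupport φ)
    {r : ℝ} (hr : 0 < r) {ε : ℝ} (hε : 0 < ε) :
    ∃ ψ : En n → ℝ, ContDiff ℝ (⊤ : ℕ∞) ψ ∧ tsupport ψ ⊆ cthickening r (tsupport φ) ∧
      ∀ x, |ψ x - φ x| ≤ ε ∧ ‖fderiv ℝ ψ x - fderiv ℝ φ x‖ ≤ ε := by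
  have u1 : UniformContinuous φ := hc.uniformContinuous_of_continuous hφ.continuous
  have c2 : Continuous (fderiv ℝ φ) := hφ.continuous_fderiv (by norm_num)
  have u2 : UniformContinuous (fderiv ℝ φ) :=
    (hc.fderiv ℝ).uniformContinuous_of_continuous c2
  obtain ⟨d1, hd1, h1⟩ := Metric.uniformContinuous_iff.mp u1 ε hε
  obtain ⟨d2, hd2, h2⟩ := Metric.uniformContinuous_iff.mp u2 ε hε
  set R := min r (min d1 d2) with hR
  have hR0 : 0 < R := lt_min hr (lt_min hd1 hd2)
  let b : ContDiffBump (0 : En n) := ⟨R / 2, R, by positivity, by linarith⟩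
  have hbR : b.rOut = R := rfl
  let ψ := convolution (b.normed volume) φ (ContinuousLinearMap.lsmul ℝ ℝ) volume
  refine ⟨ψ, ?_, ?_, fun x => ⟨?_, ?_⟩⟩
  · exact b.hasCompactSupport_normed.contDiff_convolution_left _ b.contDiff_normed
      hφ.continuous.locallyIntegrable
  · refine closure_minimal ?_ isClosed_cthickening
    refine (support_convolution_subset _).trans ?_
    rw [b.support_normed_eq]
    rintro _ ⟨y, hy, z, hz, rfl⟩
    refine thickening_subset_cthickening _ _ (mem_thickening_iff.mpr ⟨z, subset_tsupport _ hz, ?_⟩)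
    rw [mem_ball, dist_zero_right, hbR] at hy
    rw [dist_eq_norm, add_sub_cancel_right]
    exact hy.trans_le (min_le_left _ _)
  · rw [← Real.dist_eq]
    refine b.dist_normed_convolution_le hφ.continuous.aestronglyMeasurable fun y hy => (h1 ?_).le
    rw [mem_ball, hbR] at hy
    exact hy.trans_le ((min_le_right _ _).trans (min_le_left _ _))
  · have hd := hc.hasFDerivAt_convolution_right (μ := volume) (ContinuousLinearMap.lsmul ℝ ℝ)
      (b.continuous_normed (μ := volume)).locallyIntegrable hφ x
    rw [hd.fderiv, ← dist_eq_norm]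
    have e : (ContinuousLinearMap.lsmul ℝ ℝ).precompR (En n)
        = (ContinuousLinearMap.lsmul ℝ ℝ : ℝ →L[ℝ] (En n →L[ℝ] ℝ) →L[ℝ] (En n →L[ℝ] ℝ)) := by
      ext; simp
    rw [e]
    refine b.dist_normed_convolution_le c2.aestronglyMeasurable fun y hy => (h2 ?_).le
    rw [mem_ball, hbR] at hy
    exact hy.trans_le ((min_le_right _ _).trans (min_le_right _ _))

theorem integrable_of_cont {F : Type*} [NormedAddCommGroup F] {U K : Set (En n)}
    {f : En n → F} (hf : ContinuousOn f U)
    (hK : IsCompact K) (hKU : K ⊆ U) (h0 : ∀ x ∉ K, f x = 0) : Integrable f := by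
  have h1 : IntegrableOn f K := (hf.mono hKU).integrableOn_compact hK
  have : f = K.indicator f := by
    ext x
    by_cases h : x ∈ K
    · simp [h]
    · simp [h, h0 x h]
  rw [this]
  exact h1.integrable_indicator hK.measurableSet

theorem extend_test {U : Set (En n)} (hU : IsOpen U) {Fl : En n → En n} {b : En n → ℝ}
    (hFl : ContinuousOn Fl U) (hb : ContinuousOn b U)
    (h : ∀ φ : En n → ℝ, ContDiff ℝ (⊤ : ℕ∞) φ → HasCompactSupport φ → tsupport φ ⊆ U →
      ∫ x, fderiv ℝ φ x (Fl x) = ∫ x, b x * φ x) {φ : En n → ℝ} (hφ : Tst U φ) :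
    ∫ x, fderiv ℝ φ x (Fl x) = ∫ x, b x * φ x := by
  obtain ⟨r, hr, hrU⟩ := hφ.cs.isCompact.exists_cthickening_subset_open hU hφ.ts
  set K := cthickening r (tsupport φ) with hKdef
  have hK : IsCompact K := hφ.cs.isCompact.cthickening
  have hKφ : tsupport φ ⊆ K := self_subset_cthickening _
  have iFl : IntegrableOn (fun x => ‖Fl x‖) K := ((hFl.mono hrU).norm).integrableOn_compact hK
  have ib : IntegrableOn (fun x => |b x|) K := ((hb.mono hrU).abs).integrableOn_compact hK
  set M := (∫ x in K, ‖Fl x‖) + ∫ x in K, |b x| with hM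
  have hM0 : 0 ≤ M := add_nonneg (integral_nonneg fun _ => norm_nonneg _)
    (integral_nonneg fun _ => abs_nonneg _)
  have hI : ∀ ψ : En n → ℝ, ContDiff ℝ 1 ψ → tsupport ψ ⊆ K →
      Integrable (fun x => fderiv ℝ ψ x (Fl x)) ∧ Integrable (fun x => b x * ψ x) := by
    intro ψ h1 h2
    constructor
    · refine integrable_of_cont
        ((h1.continuous_fderiv (by norm_num)).continuousOn.clm_apply hFl) hK hrU fun x hx => ?_
      have : fderiv ℝ ψ x = 0 := by
        by_contra h
        exact hx (h2 (support_fderiv_subset ℝ h))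
      simp [this]
    · refine integrable_of_cont (hb.mul h1.continuous.continuousOn) hK hrU fun x hx => ?_
      rw [image_eq_zero_of_notMem_tsupport (fun h => hx (h2 h)), mul_zero]
  rw [← sub_eq_zero]
  by_contra hne
  set δ := (∫ x, fderiv ℝ φ x (Fl x)) - ∫ x, b x * φ x with hδ
  have hδ0 : 0 < |δ| := abs_pos.mpr hne
  obtain ⟨ψ, s1, s2, s3⟩ := smooth_approx hφ.cd hφ.cs hr (ε := |δ| / (2 * (M + 1)))
    (by positivity)
  set ε := |δ| / (2 * (M + 1)) with hε
  have s1' : ContDiff ℝ 1 ψ := s1.of_le (by exact_mod_cast le_top)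
  have e1 := h ψ s1 (hK.of_isClosed_subset (isClosed_tsupport _) s2) (s2.trans hrU)
  obtain ⟨i1, i2⟩ := hI ψ s1' s2
  obtain ⟨i3, i4⟩ := hI φ hφ.cd hKφ
  have zero : ∀ x ∉ K, fderiv ℝ φ x = 0 ∧ fderiv ℝ ψ x = 0 ∧ φ x = 0 ∧ ψ x = 0 := by
    intro x hx
    refine ⟨?_, ?_, image_eq_zero_of_notMem_tsupport (fun h => hx (hKφ h)),
      image_eq_zero_of_notMem_tsupport (fun h => hx (s2 h))⟩
    · by_contra h; exact hx (hKφ (support_fderiv_subset ℝ h))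
    · by_contra h; exact hx (s2 (support_fderiv_subset ℝ h))
  have b1 : |(∫ x, fderiv ℝ φ x (Fl x)) - ∫ x, fderiv ℝ ψ x (Fl x)| ≤ ε * ∫ x in K, ‖Fl x‖ := by
    rw [← integral_sub i3 i1, ← setIntegral_eq_integral_of_forall_compl_eq_zero (s := K)
      (fun x hx => by simp [zero x hx]), ← integral_const_mul, ← Real.norm_eq_abs]
    refine norm_integral_le_of_norm_le (iFl.const_mul ε) (ae_of_all _ fun x => ?_)
    rw [← sub_apply]
    refine (ContinuousLinearMap.le_opNorm _ _).trans ?_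
    gcongr
    rw [← norm_neg, neg_sub]; exact (s3 x).2
  have b2 : |(∫ x, b x * φ x) - ∫ x, b x * ψ x| ≤ ε * ∫ x in K, |b x| := by
    rw [← integral_sub i4 i2, ← setIntegral_eq_integral_of_forall_compl_eq_zero (s := K)
      (fun x hx => by simp [zero x hx]), ← integral_const_mul, ← Real.norm_eq_abs]
    refine norm_integral_le_of_norm_le (ib.const_mul ε) (ae_of_all _ fun x => ?_)
    rw [← mul_sub, norm_mul, mul_comm, Real.norm_eq_abs, Real.norm_eq_abs]
    gcongr
    rw [abs_sub_comm]; exact (s3 x).1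
  have b3 : |δ| ≤ ε * M := by
    have : δ = ((∫ x, fderiv ℝ φ x (Fl x)) - ∫ x, fderiv ℝ ψ x (Fl x))
      - ((∫ x, b x * φ x) - ∫ x, b x * ψ x) := by rw [hδ, e1]; ring
    rw [this, hM, mul_add]
    exact (abs_sub _ _).trans (add_le_add b1 b2)
  have : ε * M < |δ| := by
    rw [hε, div_mul_eq_mul_div, div_lt_iff₀ (by positivity)]
    nlinarith
  linarith

/-- Differentiation under the integral of a translation. -/
theorem deriv_translate {F : Type*} [NormedAddCommGroup F] [NormedSpace ℝ F]
    {U K : Set (En n)} (hU : IsOpen U) (hK : IsCompact K) (hKU : K ⊆ U)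
    {f : En n → F} (hf : ContDiffOn ℝ 1 f U) {L : En n → F →L[ℝ] ℝ} (hL : ContinuousOn L K)
    (v : En n) :
    HasDerivAt (fun t : ℝ => ∫ x in K, L x (f (x + t • v))) (∫ x in K, L x (fderiv ℝ f x v)) 0 := by
  obtain ⟨r, hr, hrU⟩ := hK.exists_cthickening_subset_open hU hKU
  set K' := cthickening r K
  have hK' : IsCompact K' := hK.cthickening
  have cf : ContinuousOn (fderiv ℝ f) U := hf.continuousOn_fderiv_of_isOpen hU (by norm_num)
  obtain ⟨C1, hC1⟩ := hK'.exists_bound_of_continuousOn (cf.mono hrU)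
  obtain ⟨C2, hC2⟩ := hK.exists_bound_of_continuousOn hL
  set s : Set ℝ := ball 0 (r / (‖v‖ + 1)) with hs
  have hmem : ∀ t ∈ s, ∀ x ∈ K, x + t • v ∈ K' := by
    intro t ht x hx
    refine mem_cthickening_of_dist_le _ x _ _ hx ?_
    rw [dist_eq_norm, add_sub_cancel_left, norm_smul]
    rw [hs, mem_ball, dist_zero_right, lt_div_iff₀ (by positivity)] at ht
    nlinarith [norm_nonneg t, norm_nonneg v]
  have hs0 : s ∈ 𝓝 (0:ℝ) := ball_mem_nhds _ (by positivity)
  have hcont : ∀ t ∈ s, ContinuousOn (fun x => L x (f (x + t • v))) K := by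
    intro t ht
    refine hL.clm_apply (hf.continuousOn.comp (by fun_prop) fun x hx => hrU (hmem t ht x hx))
  have key := hasDerivAt_integral_of_dominated_loc_of_deriv_le (μ := volume.restrict K)
    (F := fun t x => L x (f (x + t • v))) (F' := fun t x => L x (fderiv ℝ f (x + t • v) v))
    (x₀ := (0:ℝ)) (s := s) (bound := fun _ => C2 * (C1 * ‖v‖)) hs0
    (by
      filter_upwards [hs0] with t ht
      exact (hcont t ht).aestronglyMeasurable hK.measurableSet)
    ((hcont 0 (mem_of_mem_nhds hs0)).integrableOn_compact hK)
    (by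
      refine ContinuousOn.aestronglyMeasurable ?_ hK.measurableSet
      simp only [zero_smul, add_zero]
      exact hL.clm_apply ((cf.mono hKU).clm_apply continuousOn_const))
    (by
      filter_upwards [ae_restrict_mem hK.measurableSet] with x hx t ht
      refine (ContinuousLinearMap.le_opNorm _ _).trans ?_
      have h1 := hC2 x hx
      have h2 := hC1 _ (hmem t ht x hx)
      have h3 := (fderiv ℝ f (x + t • v)).le_opNorm v
      have : 0 ≤ C2 := (norm_nonneg _).trans h1
      gcongr
      exact h3.trans (by gcongr))
    (by
      have : IsFiniteMeasure (volume.restrict K) := ⟨by simpa using hK.measure_lt_top⟩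
      exact integrable_const _)
    (by
      filter_upwards [ae_restrict_mem hK.measurableSet] with x hx t ht
      have h1 : HasFDerivAt f (fderiv ℝ f (x + t • v)) (x + t • v) :=
        ((hf.differentiableOn (by norm_num)).differentiableAt
          (hU.mem_nhds (hrU (hmem t ht x hx)))).hasFDerivAt
      have h2 : HasDerivAt (fun t : ℝ => x + t • v) v t := by
        simpa using ((hasDerivAt_id t).smul_const v).const_add x
      exact (L x).hasFDerivAt.comp_hasDerivAt t (h1.comp_hasDerivAt t h2))
  simpa using key.2

end SphM

end PartC1

section PartC2
open MeasureTheory Metric Filter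
open scoped Topology ContDiff RealInnerProductSpace

namespace SphM
variable {n : ℕ}

theorem Tst.diff {U : Set (En n)} {f : En n → ℝ} (hf : Tst U f) (x : En n) :
    DifferentiableAt ℝ f x := hf.cd.differentiable (by norm_num) x

theorem Tst.zero {f : En n → ℝ} {x : En n} (hx : x ∉ tsupport f) :
    f x = 0 ∧ fderiv ℝ f x = 0 := by
  refine ⟨image_eq_zero_of_notMem_tsupport hx, ?_⟩
  by_contra h
  exact hx (support_fderiv_subset ℝ h)

theorem ilam_sub {f g : En n → ℝ} (hf : Integrable f) (hg : Integrable g) :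
    Integrable (fun x => f x - g x) := hf.sub hg

theorem ilam_add {f g : En n → ℝ} (hf : Integrable f) (hg : Integrable g) :
    Integrable (fun x => f x + g x) := hf.add hg

theorem cut_smul {F : Type*} [NormedAddCommGroup F] [NormedSpace ℝ F] {f : En n → ℝ}
    (hf : ContDiff ℝ 1 f) {h : En n → F} (hh : ∀ x ∈ tsupport f, ContDiffAt ℝ 1 h x) :
    ContDiff ℝ 1 (fun x => f x • h x) := by
  rw [contDiff_iff_contDiffAt]
  intro x
  by_cases hx : x ∈ tsupport f
  · exact hf.contDiffAt.smul (hh x hx)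
  · have : (fun x => f x • h x) =ᶠ[𝓝 x] fun _ => 0 := by
      filter_upwards [notMem_tsupport_iff_eventuallyEq.mp hx] with y hy
      simp [hy]
    exact contDiffAt_const.congr_of_eventuallyEq this

theorem cut_tst {U : Set (En n)} {f : En n → ℝ} (hf : Tst U f) {h : En n → ℝ}
    (hh : ∀ x ∈ tsupport f, ContDiffAt ℝ 1 h x) : Tst U (fun x => f x * h x) where
  cd := cut_smul hf.cd hh
  cs := hf.cs.mul_right
  ts := (tsupport_mul_subset_left).trans hf.ts

/-- The Rellich integrand. -/
noncomputable def Rel (Q : En n → En n →L[ℝ] En n) (g w f : En n → ℝ) (v x : En n) : ℝ :=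
  f x * (2 * g x * fderiv ℝ w x v + ⟪(fderiv ℝ Q x v) (gradient w x), gradient w x⟫)
    + fderiv ℝ f x v * ⟪Q x (gradient w x), gradient w x⟫
    - 2 * fderiv ℝ f x (Q x (gradient w x)) * fderiv ℝ w x v

/-- Data for the Rellich identity. -/
structure RelData (U : Set (En n)) (Q : En n → En n →L[ℝ] En n) (g w : En n → ℝ) : Prop where
  op : IsOpen U
  hQ : ContDiffOn ℝ 1 Q U
  sym : ∀ x ∈ U, ∀ a b, ⟪Q x a, b⟫ = ⟪a, Q x b⟫
  psd : ∀ x ∈ U, ∀ a, 0 ≤ ⟪Q x a, a⟫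
  hw : ContDiffOn ℝ 1 w U
  hg : ContinuousOn g U
  weak : ∀ ψ, Tst U ψ → ∫ x, fderiv ℝ ψ x (Q x (gradient w x)) = ∫ x, g x * ψ x

theorem grad_cont {U : Set (En n)} (hU : IsOpen U) {w : En n → ℝ} (hw : ContDiffOn ℝ 1 w U) :
    ContinuousOn (gradient w) U :=
  (InnerProductSpace.toDual ℝ (En n)).symm.continuous.comp_continuousOn
    (hw.continuousOn_fderiv_of_isOpen hU (by norm_num))

namespace RelData
variable {U : Set (En n)} {Q : En n → En n →L[ℝ] En n} {g w : En n → ℝ}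

theorem rel_cont (R : RelData U Q g w) {f : En n → ℝ} (hf : Tst U f) (v : En n) :
    ContinuousOn (Rel Q g w f v) U := by
  have h1 := grad_cont R.op R.hw
  have h2 := R.hw.continuousOn_fderiv_of_isOpen R.op (by norm_num)
  have h3 := R.hQ.continuousOn_fderiv_of_isOpen R.op (by norm_num)
  have h4 : ContinuousOn (fderiv ℝ f) U := (hf.cd.continuous_fderiv (by norm_num)).continuousOn
  have h5 : ContinuousOn (fun x => Q x (gradient w x)) U := R.hQ.continuousOn.clm_apply h1
  unfold Rel
  refine ((hf.cd.continuous.continuousOn.mul (((continuousOn_const.mul R.hg).mul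
    (h2.clm_apply continuousOn_const)).add
    (((h3.clm_apply continuousOn_const).clm_apply h1).inner h1))).add
    ((h4.clm_apply continuousOn_const).mul (h5.inner h1))).sub
    ((continuousOn_const.mul (h4.clm_apply h5)).mul (h2.clm_apply continuousOn_const))

theorem rel_zero {f : En n → ℝ} (v : En n) {x : En n} (hx : x ∉ tsupport f) :
    Rel Q g w f v x = 0 := by
  simp [Rel, (Tst.zero hx).1, (Tst.zero hx).2]

theorem rel_int (R : RelData U Q g w) {f : En n → ℝ} (hf : Tst U f) (v : En n) :
    Integrable (Rel Q g w f v) :=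
  integrable_of_cont (R.rel_cont hf v) hf.cs.isCompact hf.ts fun _ hx => rel_zero v hx

theorem nonneg_case (R : RelData U Q g w) {f : En n → ℝ} (hf : Tst U f) (h0 : ∀ x, 0 ≤ f x)
    (v : En n) : ∫ x, Rel Q g w f v x = 0 := by
  obtain ⟨r, hr, hrU⟩ := hf.cs.isCompact.exists_cthickening_subset_open R.op hf.ts
  set K0 := tsupport f with hK0def
  have hK0 : IsCompact K0 := hf.cs.isCompact
  set K := cthickening r K0 with hKdef
  have hK : IsCompact K := hK0.cthickening
  have hK0K : K0 ⊆ K := self_subset_cthickening _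
  set p := gradient w with hp
  have cp := grad_cont R.op R.hw
  have cQ := R.hQ.continuousOn
  have cQp : ContinuousOn (fun x => Q x (p x)) U := cQ.clm_apply cp
  have cf : ContinuousOn f U := hf.cd.continuous.continuousOn
  have cdf : ContinuousOn (fderiv ℝ f) U := (hf.cd.continuous_fderiv (by norm_num)).continuousOn
  set s : Set ℝ := ball 0 (r / (‖v‖ + 1)) with hs
  have hmem : ∀ t ∈ s, ∀ x ∈ K0, x + t • v ∈ K := by
    intro t ht x hx
    refine mem_cthickening_of_dist_le _ x _ _ hx ?_
    rw [dist_eq_norm, add_sub_cancel_left, norm_smul]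
    rw [hs, mem_ball, dist_zero_right, lt_div_iff₀ (by positivity)] at ht
    nlinarith [norm_nonneg t, norm_nonneg v]
  have hs0 : s ∈ 𝓝 (0:ℝ) := ball_mem_nhds _ (by positivity)
  set M : En n → En n →L[ℝ] En n := fun x => f x • Q x with hM
  have cM : ContDiffOn ℝ 1 M U := hf.cd.contDiffOn.smul R.hQ
  -- the three parametric integrals
  let L3 : En n → (En n →L[ℝ] En n) →L[ℝ] ℝ := fun x =>
    (innerSL ℝ (p x)).comp (ContinuousLinearMap.apply ℝ (En n) (p x))
  have L3a : ∀ x T, L3 x T = ⟪T (p x), p x⟫ := by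
    intro x T; simp [L3, real_inner_comm]
  have cL3 : ContinuousOn L3 K := by
    have h1 : ContinuousOn (fun x => innerSL ℝ (p x)) K :=
      (innerSL ℝ).continuous.comp_continuousOn (cp.mono hrU)
    have h2 : ContinuousOn (fun x => (ContinuousLinearMap.apply ℝ (En n) (p x) :
        (En n →L[ℝ] En n) →L[ℝ] En n)) K :=
      (ContinuousLinearMap.apply ℝ (En n) : En n →L[ℝ] (En n →L[ℝ] En n) →L[ℝ] En n).continuous.comp_continuousOn (cp.mono hrU)
    exact h1.clm_comp h2
  have D1 := deriv_translate R.op hK hrU R.hw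
    (L := fun x => (g x * f x) • ContinuousLinearMap.id ℝ ℝ)
    (((R.hg.mul cf).mono hrU).smul continuousOn_const) v
  have D2 := deriv_translate R.op hK hrU R.hw
    (L := fun x => (fderiv ℝ f x (Q x (p x))) • ContinuousLinearMap.id ℝ ℝ)
    (((cdf.clm_apply cQp).mono hrU).smul continuousOn_const) v
  have D3 := deriv_translate R.op hK hrU cM cL3 (-v)
  simp only [smul_apply, ContinuousLinearMap.id_apply, smul_eq_mul, L3a]
    at D1 D2 D3
  set I1 : ℝ → ℝ := fun t => ∫ x in K, g x * f x * w (x + t • v) with hI1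
  set I2 : ℝ → ℝ := fun t => ∫ x in K, fderiv ℝ f x (Q x (p x)) * w (x + t • v) with hI2
  set I3 : ℝ → ℝ := fun t => ∫ x in K, ⟪M (x + t • -v) (p x), p x⟫ with hI3
  have key : ∀ t ∈ s, 0 ≤ I3 t - I3 0 - 2 * (I1 t - I1 0) + 2 * (I2 t - I2 0) := by
    intro t ht
    have hK0U : K0 ⊆ U := hf.ts
    have off : ∀ x, x ∉ K0 → f x = 0 ∧ fderiv ℝ f x = 0 := fun x hx => Tst.zero hx
    have offK : ∀ x, x ∉ K → f x = 0 ∧ fderiv ℝ f x = 0 := fun x hx =>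
      off x (fun h => hx (hK0K h))
    have dw : ∀ x ∈ U, DifferentiableAt ℝ w x := fun x hx =>
      (R.hw.differentiableOn (by norm_num)).differentiableAt (R.op.mem_nhds hx)
    have cw : ∀ x ∈ U, ContDiffAt ℝ 1 w x := fun x hx => R.hw.contDiffAt (R.op.mem_nhds hx)
    have htU : ∀ x ∈ K0, x + t • v ∈ U := fun x hx => hrU (hmem t ht x hx)
    have ctr : ContinuousOn (fun x : En n => x + t • v) K0 := by fun_prop
    have cwt : ContinuousOn (fun x => w (x + t • v)) K0 := R.hw.continuousOn.comp ctr htU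
    have cpt : ContinuousOn (fun x => p (x + t • v)) K0 := cp.comp ctr htU
    have cw0 : ContinuousOn w K0 := R.hw.continuousOn.mono hK0U
    have whole : ∀ {h : En n → ℝ}, ContinuousOn h K0 → (∀ x ∉ K0, h x = 0) → Integrable h :=
      fun h1 h2 => integrable_of_cont h1 hK0 subset_rfl h2
    have hψ : Tst U (fun x => f x * (w (x + t • v) - w x)) := by
      refine cut_tst hf fun x hx => ?_
      refine ContDiffAt.sub ?_ (cw x (hK0U hx))
      exact (cw _ (htU x hx)).comp x (f := fun x => x + t • v) (by fun_prop)
    have hweak := R.weak _ hψ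
    have gd : ∀ x ∈ U, ∀ y, fderiv ℝ w x y = ⟪y, p x⟫ := by
      intro x hx y
      rw [hp, inner_gradient_right]
      simp
    have a1 : ∀ τ, I1 τ = ∫ x, g x * f x * w (x + τ • v) := fun τ =>
      setIntegral_eq_integral_of_forall_compl_eq_zero fun x hx => by simp [(offK x hx).1]
    have a2 : ∀ τ, I2 τ = ∫ x, fderiv ℝ f x (Q x (p x)) * w (x + τ • v) := fun τ =>
      setIntegral_eq_integral_of_forall_compl_eq_zero fun x hx => by simp [(offK x hx).2]
    have a3 : ∀ τ ∈ s, I3 τ = ∫ x, f x * ⟪Q x (p (x + τ • v)), p (x + τ • v)⟫ := by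
      intro τ hτ
      have h1 : I3 τ = ∫ x, ⟪M (x + τ • -v) (p x), p x⟫ := by
        refine setIntegral_eq_integral_of_forall_compl_eq_zero fun x hx => ?_
        have : x + τ • -v ∉ K0 := by
          intro h
          apply hx
          have := hmem τ hτ _ h
          simpa using this
        simp only [hM, smul_apply, (off _ this).1, zero_smul, inner_zero_left]
      rw [h1, ← integral_add_right_eq_self _ (τ • v)]
      refine integral_congr_ae (ae_of_all _ fun x => ?_)
      simp [hM, inner_smul_left]
    have b3 : Integrable (fun x => f x * ⟪Q x (p (x + t • v)), p (x + t • v)⟫) :=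
      whole ((cf.mono hK0U).mul (((cQ.mono hK0U).clm_apply cpt).inner cpt))
        fun x hx => by simp [(off x hx).1]
    have b30 : Integrable (fun x => f x * ⟪Q x (p x), p x⟫) :=
      whole ((cf.mono hK0U).mul (((cQp.inner cp).mono hK0U)))
        fun x hx => by simp [(off x hx).1]
    have bX : Integrable (fun x => f x * ⟪Q x (p x), p (x + t • v)⟫) :=
      whole ((cf.mono hK0U).mul ((cQp.mono hK0U).inner cpt))
        fun x hx => by simp [(off x hx).1]
    have b2 : Integrable (fun x => fderiv ℝ f x (Q x (p x)) * w (x + t • v)) :=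
      whole (((cdf.clm_apply cQp).mono hK0U).mul cwt) fun x hx => by simp [(off x hx).2]
    have b20 : Integrable (fun x => fderiv ℝ f x (Q x (p x)) * w x) :=
      whole (((cdf.clm_apply cQp).mono hK0U).mul cw0) fun x hx => by simp [(off x hx).2]
    have b1 : Integrable (fun x => g x * f x * w (x + t • v)) :=
      whole (((R.hg.mul cf).mono hK0U).mul cwt) fun x hx => by simp [(off x hx).1]
    have b10 : Integrable (fun x => g x * f x * w x) :=
      whole (((R.hg.mul cf).mono hK0U).mul cw0) fun x hx => by simp [(off x hx).1]
    have s0 : (0:ℝ) ∈ s := mem_of_mem_nhds hs0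
    have hw1 : ∫ x, fderiv ℝ (fun x => f x * (w (x + t • v) - w x)) x (Q x (p x)) =
        ((∫ x, f x * ⟪Q x (p x), p (x + t • v)⟫) - ∫ x, f x * ⟪Q x (p x), p x⟫)
        + ((∫ x, fderiv ℝ f x (Q x (p x)) * w (x + t • v)) -
          ∫ x, fderiv ℝ f x (Q x (p x)) * w x) := by
      rw [← integral_sub bX b30, ← integral_sub b2 b20]
      rw [← integral_add (ilam_sub bX b30) (ilam_sub b2 b20)]
      refine integral_congr_ae (ae_of_all _ fun x => ?_)
      by_cases hx : x ∈ K0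
      · have hd : HasFDerivAt (fun x => w (x + t • v)) (fderiv ℝ w (x + t • v)) x := by
          exact (hasFDerivAt_comp_add_right (t • v)).mpr (dw _ (htU x hx)).hasFDerivAt
        have := ((hf.diff x).hasFDerivAt.mul (hd.sub (dw x (hK0U hx)).hasFDerivAt)).fderiv
        have e2 : fderiv ℝ (fun x => f x * (w (x + t • v) - w x)) x = _ := this
        simp only [e2, add_apply, smul_apply, sub_apply, smul_eq_mul, gd _ (hK0U hx),
          gd _ (htU x hx), Pi.sub_apply]
        ring
      · have e1 : fderiv ℝ (fun x => f x * (w (x + t • v) - w x)) x = 0 := by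
          refine (Tst.zero (fun h => hx (tsupport_mul_subset_left h))).2
        simp [e1, (off x hx).1, (off x hx).2]
    have hw2 : ∫ x, g x * (f x * (w (x + t • v) - w x)) =
        (∫ x, g x * f x * w (x + t • v)) - ∫ x, g x * f x * w x := by
      rw [← integral_sub b1 b10]
      refine integral_congr_ae (ae_of_all _ fun x => ?_)
      simp only
      ring
    have hpos : 0 ≤ (∫ x, f x * ⟪Q x (p (x + t • v)), p (x + t • v)⟫)
        - 2 * (∫ x, f x * ⟪Q x (p x), p (x + t • v)⟫) + ∫ x, f x * ⟪Q x (p x), p x⟫ := by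
      rw [← integral_const_mul, ← integral_sub b3 (bX.const_mul 2),
        ← integral_add (ilam_sub b3 (bX.const_mul 2)) b30]
      refine integral_nonneg fun x => ?_
      by_cases hx : x ∈ K0
      · have h1 := R.psd x (hK0U hx) (p (x + t • v) - p x)
        have h2 := R.sym x (hK0U hx) (p (x + t • v)) (p x)
        rw [map_sub, inner_sub_left, inner_sub_right, inner_sub_right, h2,
          real_inner_comm (Q x (p x))] at h1
        have := mul_nonneg (h0 x) h1
        simp only [Pi.zero_apply]
        nlinarith
      · simp [(off x hx).1]
    have c3 := a3 0 s0
    have c2 := a2 0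
    have c1 := a1 0
    simp only [zero_smul, add_zero] at c1 c2 c3
    rw [a3 t ht, a2 t, a1 t, c1, c2, c3]
    rw [hw1, hw2] at hweak
    linarith
  have D : HasDerivAt (fun t => I3 t - I3 0 - 2 * (I1 t - I1 0) + 2 * (I2 t - I2 0)) _ 0 :=
    ((D3.sub_const (I3 0)).sub ((D1.sub_const (I1 0)).const_mul 2)).add
      ((D2.sub_const (I2 0)).const_mul 2)
  have hmin : IsLocalMin (fun t => I3 t - I3 0 - 2 * (I1 t - I1 0) + 2 * (I2 t - I2 0)) 0 := by
    filter_upwards [hs0] with t ht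
    simpa using key t ht
  have hz := hmin.hasDerivAt_eq_zero D
  have cdw := R.hw.continuousOn_fderiv_of_isOpen R.op (by norm_num)
  have cdM := cM.continuousOn_fderiv_of_isOpen R.op (by norm_num)
  rw [← setIntegral_eq_integral_of_forall_compl_eq_zero (s := K)
    (fun x hx => rel_zero v (fun h => hx (hK0K h)))]
  have i1 : IntegrableOn (fun x => g x * f x * fderiv ℝ w x v) K :=
    (((R.hg.mul cf).mul (cdw.clm_apply continuousOn_const)).mono hrU).integrableOn_compact hK
  have i2 : IntegrableOn (fun x => fderiv ℝ f x (Q x (p x)) * fderiv ℝ w x v) K :=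
    (((cdf.clm_apply cQp).mul (cdw.clm_apply continuousOn_const)).mono hrU).integrableOn_compact hK
  have i3 : IntegrableOn (fun x => ⟪fderiv ℝ M x (-v) (p x), p x⟫) K :=
    ((((cdM.clm_apply continuousOn_const).clm_apply cp).inner cp).mono hrU).integrableOn_compact hK
  have e : ∫ x in K, Rel Q g w f v x = ∫ x in K, (2 * (g x * f x * fderiv ℝ w x v)
      - ⟪fderiv ℝ M x (-v) (p x), p x⟫ - 2 * (fderiv ℝ f x (Q x (p x)) * fderiv ℝ w x v)) := by
    refine setIntegral_congr_fun hK.measurableSet fun x hx => ?_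
    have hxU := hrU hx
    have hd : fderiv ℝ M x = f x • fderiv ℝ Q x + (fderiv ℝ f x).smulRight (Q x) :=
      fderiv_fun_smul (hf.diff x)
        ((R.hQ.differentiableOn (by norm_num)).differentiableAt (R.op.mem_nhds hxU))
    simp only [hd, Rel]
    simp only [add_apply, smul_apply,
      ContinuousLinearMap.smulRight_apply, map_neg, neg_apply, inner_add_left,
      inner_smul_left, inner_neg_left, ← hp]
    simp
    ring
  have i13 : IntegrableOn (fun x => 2 * (g x * f x * fderiv ℝ w x v)
      - ⟪fderiv ℝ M x (-v) (p x), p x⟫) K := (i1.const_mul 2).sub i3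
  rw [e, integral_sub i13 (i2.const_mul 2), integral_sub (i1.const_mul 2) i3,
    integral_const_mul, integral_const_mul]
  linarith

theorem rel_add {f1 f2 : En n → ℝ} {x : En n} (h1 : DifferentiableAt ℝ f1 x)
    (h2 : DifferentiableAt ℝ f2 x) (v : En n) :
    Rel Q g w (fun y => f1 y + f2 y) v x = Rel Q g w f1 v x + Rel Q g w f2 v x := by
  simp only [Rel, fderiv_fun_add h1 h2, add_apply]
  ring

theorem signed (R : RelData U Q g w) {f : En n → ℝ} (hf : Tst U f)
    (v : En n) : ∫ x, Rel Q g w f v x = 0 := by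
  have hK0 : IsCompact (tsupport f) := hf.cs.isCompact
  obtain ⟨r, hr, hrU⟩ := hK0.exists_cthickening_subset_open R.op hf.ts
  obtain ⟨f0, hs, hc, h01⟩ :=
    (isOpen_thickening (δ := r) (E := tsupport f)).exists_contDiff_support_eq (n := 1)
  have h0 : ∀ x, 0 ≤ f0 x := fun x => (h01 ⟨x, rfl⟩).1
  have hpos : ∀ x ∈ tsupport f, 0 < f0 x := by
    intro x hx
    have : x ∈ Function.support f0 := by
      rw [hs]; exact self_subset_thickening hr _ hx
    exact lt_of_le_of_ne (h0 x) (Ne.symm this)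
  obtain ⟨B, hB⟩ := hK0.exists_bound_of_continuousOn (f := fun x => f x / f0 x)
    (hf.cd.continuous.continuousOn.div hc.continuous.continuousOn fun x hx => (hpos x hx).ne')
  have hts : tsupport f0 ⊆ cthickening r (tsupport f) := by
    rw [tsupport, hs]; exact closure_thickening_subset_cthickening _ _
  have t0 : Tst U (fun x => |B| * f0 x) := by
    have := tsupport_mul_subset_right (f := fun _ : En n => |B|) (g := f0)
    refine ⟨contDiff_const.mul (by exact_mod_cast hc), ?_, this.trans (hts.trans hrU)⟩
    exact hK0.cthickening.of_isClosed_subset (isClosed_tsupport _) (this.trans hts)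
  have t1 : Tst U (fun x => f x + |B| * f0 x) := by
    refine ⟨hf.cd.add t0.cd, hf.cs.add t0.cs, (tsupport_add _ _).trans ?_⟩
    exact Set.union_subset hf.ts t0.ts
  have n0 := R.nonneg_case t0 (fun x => mul_nonneg (abs_nonneg _) (h0 x)) v
  have n1 := R.nonneg_case t1 (fun x => by
    by_cases hx : x ∈ tsupport f
    · have h1 := hB x hx
      have h2 := hpos x hx
      rw [Real.norm_eq_abs, abs_div, abs_of_pos h2, div_le_iff₀ h2] at h1
      have := neg_abs_le (f x)
      nlinarith [le_abs_self B]
    · rw [image_eq_zero_of_notMem_tsupport hx, zero_add]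
      exact mul_nonneg (abs_nonneg _) (h0 x)) v
  have e : ∫ x, Rel Q g w (fun x => f x + |B| * f0 x) v x =
      (∫ x, Rel Q g w f v x) + ∫ x, Rel Q g w (fun x => |B| * f0 x) v x := by
    rw [← integral_add (R.rel_int hf v) (R.rel_int t0 v)]
    exact integral_congr_ae (ae_of_all _ fun x => rel_add (hf.diff x) (t0.diff x) v)
  linarith

/-- The Rellich identity for vector fields. -/
theorem vec (R : RelData U Q g w) {X : En n → En n} (hX : ContDiff ℝ 1 X)
    (hc : HasCompactSupport X) (hs : tsupport X ⊆ U) :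
    ∫ x, (2 * g x * fderiv ℝ w x (X x) + ⟪(fderiv ℝ Q x (X x)) (gradient w x), gradient w x⟫
      + dv X x * ⟪Q x (gradient w x), gradient w x⟫
      - 2 * fderiv ℝ w x (fderiv ℝ X x (Q x (gradient w x)))) = 0 := by
  have hi : ∀ i, ContDiff ℝ 1 (fun x => X x i) := fun i => contDiff_euclidean.mp hX i
  have hT : ∀ i, Tst U (fun x => X x i) := fun i => by
    have : tsupport (fun x => X x i) ⊆ tsupport X :=
      closure_mono fun x hx h => hx (by simp [h])
    exact ⟨hi i, hc.comp_left (g := fun v : En n => v i) (by simp), this.trans hs⟩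
  have hsum : ∀ y : En n, y = ∑ i, y i • EuclideanSpace.single i (1:ℝ) := by
    intro y
    have := ((EuclideanSpace.basisFun (Fin n) ℝ).sum_repr y).symm
    simpa using this
  have hdi : ∀ x y i, fderiv ℝ (fun x => X x i) x y = (fderiv ℝ X x y) i := by
    intro x y i
    have h1 : HasFDerivAt (fun y => X y i)
      ((EuclideanSpace.proj i : En n →L[ℝ] ℝ).comp (fderiv ℝ X x)) x :=
      (EuclideanSpace.proj i : En n →L[ℝ] ℝ).hasFDerivAt.comp x
        (hX.differentiable (by norm_num) x).hasFDerivAt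
    rw [h1.fderiv]; simp
  have e : ∀ x, (2 * g x * fderiv ℝ w x (X x)
      + ⟪(fderiv ℝ Q x (X x)) (gradient w x), gradient w x⟫
      + dv X x * ⟪Q x (gradient w x), gradient w x⟫
      - 2 * fderiv ℝ w x (fderiv ℝ X x (Q x (gradient w x))))
      = ∑ i, Rel Q g w (fun x => X x i) (EuclideanSpace.single i 1) x := by
    intro x
    have h1 : ∀ y, fderiv ℝ w x y = ∑ i, y i * fderiv ℝ w x (EuclideanSpace.single i 1) := by
      intro y
      conv_lhs => rw [hsum y]
      simp only [map_sum, map_smul, smul_eq_mul]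
    have h2 : ∀ y, ⟪fderiv ℝ Q x y (gradient w x), gradient w x⟫ =
        ∑ i, y i * ⟪fderiv ℝ Q x (EuclideanSpace.single i 1) (gradient w x), gradient w x⟫ := by
      intro y
      conv_lhs => rw [hsum y]
      simp only [map_sum, map_smul, sum_apply, smul_apply, sum_inner,
        inner_smul_left, conj_trivial]
    simp only [Rel, hdi, dv]
    rw [h1 (X x), h1 (fderiv ℝ X x _), h2 (X x), Finset.sum_mul, Finset.mul_sum, Finset.mul_sum,
      ← Finset.sum_add_distrib, ← Finset.sum_add_distrib, ← Finset.sum_sub_distrib]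
    refine Finset.sum_congr rfl fun i _ => ?_
    ring
  simp only [e]
  rw [integral_finsetSum _ fun i _ => R.rel_int (hT i) _]
  exact Finset.sum_eq_zero fun i _ => R.signed (hT i) _

end RelData
end SphM

end PartC2

section PartC3
open MeasureTheory Metric Filter
open scoped Topology ContDiff RealInnerProductSpace

namespace SphM
variable {n : ℕ}

theorem exists_primitive {g : ℝ → ℝ} (hg : Continuous g) (hc : HasCompactSupport g)
    (hs : tsupport g ⊆ Set.Ioi 1) (h0 : ∫ x, g x = 0) :
    ∃ η : ℝ → ℝ, ContDiff ℝ 1 η ∧ HasCompactSupport η ∧ tsupport η ⊆ Set.Ioi 1 ∧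
      deriv η = g := by
  have hK : IsCompact (insert 2 (tsupport g)) := hc.isCompact.insert 2
  obtain ⟨a0, ha0, ha⟩ := hK.exists_isLeast ⟨2, by simp⟩
  obtain ⟨b0, hb0, hb⟩ := hK.exists_isGreatest ⟨2, by simp⟩
  have ha1 : 1 < a0 := by
    rcases ha0 with h | h
    · rw [h]; norm_num
    · exact hs h
  set a := (1 + a0) / 2 with hadef
  have haa : a < a0 := by rw [hadef]; linarith
  have h1a : 1 < a := by rw [hadef]; linarith
  have zl : ∀ t, t ≤ a → g t = 0 := fun t ht => by
    refine image_eq_zero_of_notMem_tsupport fun h => ?_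
    have := ha (Set.mem_insert_of_mem 2 h)
    linarith
  have zr : ∀ t, b0 < t → g t = 0 := fun t ht => by
    refine image_eq_zero_of_notMem_tsupport fun h => ?_
    have := hb (Set.mem_insert_of_mem 2 h)
    linarith
  have hd : ∀ x, HasDerivAt (fun x => ∫ t in a..x, g t) (g x) x := fun x =>
    intervalIntegral.integral_hasDerivAt_right (hg.intervalIntegrable _ _)
      hg.stronglyMeasurable.stronglyMeasurableAtFilter hg.continuousAt
  have hd' : deriv (fun x => ∫ t in a..x, g t) = g := funext fun x => (hd x).deriv
  have hz : ∀ x ∉ Set.Icc a b0, (∫ t in a..x, g t) = 0 := by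
    intro x hx
    by_cases hxa : x < a
    · refine intervalIntegral.integral_zero_ae (ae_of_all _ fun t ht => zl t ?_)
      rw [Set.uIoc_of_ge hxa.le] at ht
      exact ht.2
    · have hxb : b0 < x := by
        by_contra h
        exact hx ⟨not_lt.mp hxa, not_lt.mp h⟩
      rw [intervalIntegral.integral_eq_integral_of_support_subset, h0]
      intro t ht
      refine ⟨?_, ?_⟩
      · by_contra h
        exact ht (zl t (not_lt.mp h))
      · by_contra h
        exact ht (zr t (by linarith [not_le.mp h]))
  refine ⟨fun x => ∫ t in a..x, g t, ?_, HasCompactSupport.intro isCompact_Icc hz, ?_, hd'⟩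
  · rw [contDiff_one_iff_deriv, hd']
    exact ⟨fun x => (hd x).differentiableAt, hg⟩
  · have : tsupport (fun x => ∫ t in a..x, g t) ⊆ Set.Icc a b0 :=
      closure_minimal (fun x hx => by
        by_contra h
        exact hx (hz x h)) isClosed_Icc
    exact this.trans fun x hx => lt_of_lt_of_le h1a hx.1

theorem oneD {φ θ : ℝ → ℝ} (hφ : ContinuousOn φ (Set.Ioi 1)) (hθ : ContinuousOn θ (Set.Ioi 1))
    (h : ∀ η : ℝ → ℝ, ContDiff ℝ 1 η → HasCompactSupport η → tsupport η ⊆ Set.Ioi 1 →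
      ∫ x, (deriv η x * φ x + η x * θ x) = 0) {ρ : ℝ} (hρ : 1 < ρ) :
    HasDerivAt φ (θ ρ) ρ := by
  set T : ℝ → ℝ := fun x => ∫ t in (2:ℝ)..x, θ t with hT
  have dT : ∀ x, 1 < x → HasDerivAt T (θ x) x := by
    intro x hx
    have hsub : Set.uIcc 2 x ⊆ Set.Ioi 1 := fun y hy => by
      rcases Set.mem_uIcc.mp hy with h | h
      · exact lt_of_lt_of_le (by norm_num) h.1
      · exact lt_of_lt_of_le hx h.1
    exact intervalIntegral.integral_hasDerivAt_right (hθ.mono hsub).intervalIntegrable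
      (hθ.stronglyMeasurableAtFilter isOpen_Ioi x hx) (hθ.continuousAt (Ioi_mem_nhds hx))
  have cT : ContinuousOn T (Set.Ioi 1) := fun x hx => (dT x hx).continuousAt.continuousWithinAt
  have integ : ∀ {K : Set ℝ} {f : ℝ → ℝ}, IsCompact K → ContinuousOn f K →
      (∀ x ∉ K, f x = 0) → Integrable f := by
    intro K f hK hf h0
    have h1 : IntegrableOn f K := hf.integrableOn_compact hK
    have : f = K.indicator f := by
      ext x
      by_cases h : x ∈ K
      · simp [h]
      · simp [h, h0 x h]
    rw [this]
    exact h1.integrable_indicator hK.measurableSet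
  have off : ∀ {η : ℝ → ℝ} {x}, x ∉ tsupport η → η x = 0 ∧ deriv η x = 0 := by
    intro η x hx
    refine ⟨image_eq_zero_of_notMem_tsupport hx, ?_⟩
    by_contra h
    exact hx (support_deriv_subset h)
  have h2 : ∀ η : ℝ → ℝ, ContDiff ℝ 1 η → HasCompactSupport η → tsupport η ⊆ Set.Ioi 1 →
      ∫ x, deriv η x * (φ x - T x) = 0 := by
    intro η h1 h2 h3
    have cη := (contDiff_one_iff_deriv.mp h1)
    have i1 : Integrable (fun x => deriv η x * φ x + η x * θ x) :=
      integ h2.isCompact ((cη.2.continuousOn.mul (hφ.mono h3)).add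
        (h1.continuous.continuousOn.mul (hθ.mono h3))) fun x hx => by simp [off hx]
    have i2 : Integrable (fun x => deriv η x * T x + η x * θ x) :=
      integ h2.isCompact ((cη.2.continuousOn.mul (cT.mono h3)).add
        (h1.continuous.continuousOn.mul (hθ.mono h3))) fun x hx => by simp [off hx]
    have i3 : Integrable (fun x => η x * T x) :=
      integ h2.isCompact (h1.continuous.continuousOn.mul (cT.mono h3))
        fun x hx => by simp [off hx]
    have z : ∫ x, (deriv η x * T x + η x * θ x) = 0 := by
      refine integral_eq_zero_of_hasDerivAt_of_integrable (f := fun x => η x * T x) ?_ i2 i3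
      intro x
      by_cases hx : x ∈ tsupport η
      · exact (cη.1 x).hasDerivAt.mul (dT x (h3 hx))
      · have : (fun x => η x * T x) =ᶠ[𝓝 x] fun _ => 0 := by
          filter_upwards [notMem_tsupport_iff_eventuallyEq.mp hx] with y hy
          simp [hy]
        rw [(off hx).1, (off hx).2, zero_mul, zero_mul, add_zero]
        exact (hasDerivAt_const x (0:ℝ)).congr_of_eventuallyEq this
    have := h η h1 h2 h3
    have e : ∫ x, deriv η x * (φ x - T x) = (∫ x, (deriv η x * φ x + η x * θ x)) -
        ∫ x, (deriv η x * T x + η x * θ x) := by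
      rw [← integral_sub i1 i2]
      refine integral_congr_ae (ae_of_all _ fun x => ?_)
      simp only
      ring
    rw [e, this, z, sub_zero]
  let bump : ContDiffBump (3:ℝ) := ⟨1/2, 1, by norm_num, by norm_num⟩
  set ζ : ℝ → ℝ := bump.normed volume with hζ
  have ζc : Continuous ζ := bump.contDiff_normed (n := 1) |>.continuous
  have ζ1 : ∫ x, ζ x = 1 := bump.integral_normed
  have ζs : tsupport ζ ⊆ Set.Ioi 1 := by
    rw [hζ, bump.tsupport_normed_eq]
    intro x hx
    have := (abs_le.mp (by simpa [Real.dist_eq] using hx)).1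
    show 1 < x
    have h3 : bump.rOut = 1 := rfl
    rw [mem_closedBall, Real.dist_eq, h3, abs_le] at hx
    linarith [hx.1]
  have ζcs : HasCompactSupport ζ := bump.hasCompactSupport_normed
  have cψ : ContinuousOn (fun x => φ x - T x) (Set.Ioi 1) := hφ.sub cT
  set c := ∫ x, ζ x * (φ x - T x) with hc
  have h3 : ∀ᵐ x, x ∈ Set.Ioi (1:ℝ) → φ x - T x - c = 0 := by
    refine isOpen_Ioi.ae_eq_zero_of_integral_contDiff_smul_eq_zero
      ((cψ.sub continuousOn_const).locallyIntegrableOn measurableSet_Ioi) ?_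
    intro g g1 g2 g3
    have gi : Integrable g := g1.continuous.integrable_of_hasCompactSupport g2
    have ζi : Integrable ζ := ζc.integrable_of_hasCompactSupport ζcs
    set I := ∫ x, g x with hI
    obtain ⟨η, e1, e2, e3, e4⟩ := exists_primitive (g := fun x => g x - I * ζ x)
      (g1.continuous.sub (continuous_const.mul ζc)) (g2.sub ζcs.mul_left)
      ((tsupport_sub _ _).trans (Set.union_subset g3 ((tsupport_mul_subset_right).trans ζs)))
      (by rw [integral_sub gi (ζi.const_mul _), integral_const_mul, ζ1]; simp [hI])
    have := h2 η e1 e2 e3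
    rw [e4] at this
    have j1 : Integrable (fun x => g x * (φ x - T x)) :=
      integ g2.isCompact (g1.continuous.continuousOn.mul (cψ.mono g3)) fun x hx => by simp [off hx]
    have j2 : Integrable (fun x => ζ x * (φ x - T x)) :=
      integ ζcs.isCompact (ζc.continuousOn.mul (cψ.mono ζs)) fun x hx => by simp [off hx]
    have k1 : ∫ x, (g x - I * ζ x) * (φ x - T x) = (∫ x, g x * (φ x - T x)) - I * c := by
      rw [hc, ← integral_const_mul, ← integral_sub j1 (j2.const_mul _)]
      refine integral_congr_ae (ae_of_all _ fun x => ?_)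
      simp only
      ring
    have k2 : ∫ x, g x • (φ x - T x - c) = (∫ x, g x * (φ x - T x)) - I * c := by
      rw [hI, ← integral_mul_const, ← integral_sub j1 (gi.mul_const _)]
      refine integral_congr_ae (ae_of_all _ fun x => ?_)
      simp only [smul_eq_mul]
      ring
    rw [k2, ← k1, this]
  have h4 : Set.EqOn (fun x => φ x - T x - c) (fun _ => 0) (Set.Ioi 1) :=
    Measure.eqOn_open_of_ae_eq (μ := volume) ((ae_restrict_iff' measurableSet_Ioi).mpr h3)
      isOpen_Ioi (cψ.sub continuousOn_const) continuousOn_const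
  have h5 : φ =ᶠ[𝓝 ρ] fun x => T x + c := by
    filter_upwards [Ioi_mem_nhds hρ] with x hx
    have := h4 hx
    simp only at this
    linarith
  exact ((dT ρ hρ).add_const c).congr_of_eventuallyEq h5

theorem sav_smul_mem {ρ : ℝ} (hρ : 1 < ρ) (θ : sphere (0 : En n) 1) :
    ρ • (θ : En n) ∈ OmegaExt n := by
  show 1 < ‖_‖
  rw [norm_smul]
  have : ‖(θ : En n)‖ = 1 := by simp
  rw [this, Real.norm_eq_abs, mul_one, abs_of_pos (by linarith)]
  exact hρ

theorem sav_cont1 {Φ : En n → ℝ} (hΦ : ContinuousOn Φ (OmegaExt n)) {ρ : ℝ} (hρ : 1 < ρ) :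
    Continuous (fun θ : sphere (0 : En n) 1 => Φ (ρ • (θ : En n))) :=
  hΦ.comp_continuous (by fun_prop) (sav_smul_mem hρ)

theorem sav_int1 {Φ : En n → ℝ} (hΦ : ContinuousOn Φ (OmegaExt n)) {ρ : ℝ} (hρ : 1 < ρ) :
    Integrable (fun θ : sphere (0 : En n) 1 => Φ (ρ • (θ : En n))) (volume.toSphere) :=
  (sav_cont1 hΦ hρ).integrable_of_hasCompactSupport (HasCompactSupport.of_compactSpace _)

theorem sav_cont {Φ : En n → ℝ} (hΦ : ContinuousOn Φ (OmegaExt n)) :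
    ContinuousOn (sav Φ) (Set.Ioi 1) := by
  rw [continuousOn_iff_continuous_domRestrict]
  have : LocallyCompactSpace (Set.Ioi (1:ℝ)) := isOpen_Ioi.locallyCompactSpace
  have := continuous_parametric_integral_of_continuous (μ := (volume : Measure (En n)).toSphere)
    (f := fun (ρ : Set.Ioi (1:ℝ)) (θ : sphere (0 : En n) 1) => Φ ((ρ:ℝ) • (θ : En n)))
    (hΦ.comp_continuous (by fun_prop) fun q => sav_smul_mem q.1.2 q.2) (isCompact_univ)
  simp only [Measure.restrict_univ] at this
  exact this

theorem sav_congr {Φ Ψ : En n → ℝ} {ρ : ℝ} (hρ : 1 < ρ) (h : ∀ x ∈ OmegaExt n, ‖x‖ = ρ → Φ x = Ψ x) :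
    sav Φ ρ = sav Ψ ρ := by
  unfold sav
  congr 1
  ext θ
  refine h _ (sav_smul_mem hρ θ) ?_
  simp [norm_smul, abs_of_pos (show 0 < ρ by linarith)]

theorem isOpen_Om : IsOpen (OmegaExt n) := isOpen_lt continuous_const continuous_norm

/-- Radial cutoffs. -/
structure Rad (η : ℝ → ℝ) : Prop where
  cd : ContDiff ℝ 1 η
  cs : HasCompactSupport η
  ts : tsupport η ⊆ Set.Ioi 1

/-- The compact set on which a radial cutoff lives. -/
theorem Rad.cpt {η : ℝ → ℝ} (h : Rad η) : IsCompact {x : En n | ‖x‖ ∈ tsupport η} := by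
  refine Metric.isCompact_of_isClosed_isBounded ((isClosed_tsupport _).preimage continuous_norm) ?_
  obtain ⟨r, hr⟩ := h.cs.isCompact.isBounded.subset_closedBall 0
  refine isBounded_iff_forall_norm_le.mpr ⟨r, fun x hx => ?_⟩
  have := hr hx
  simpa using this

theorem Rad.sub {η : ℝ → ℝ} (h : Rad η) : {x : En n | ‖x‖ ∈ tsupport η} ⊆ OmegaExt n :=
  fun _ hx => h.ts hx

theorem Rad.off {η : ℝ → ℝ} {x : ℝ} (hx : x ∉ tsupport η) : η x = 0 ∧ deriv η x = 0 := by
  refine ⟨image_eq_zero_of_notMem_tsupport hx, ?_⟩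
  by_contra h
  exact hx (support_deriv_subset h)

/-- du Bois-Reymond for spherical averages. -/
theorem dbr (hn : 1 ≤ n) {Φ Θ : En n → ℝ} (hΦ : ContinuousOn Φ (OmegaExt n))
    (hΘ : ContinuousOn Θ (OmegaExt n))
    (h : ∀ η : ℝ → ℝ, Rad η →
      ∫ x : En n, (‖x‖ ^ (n-1))⁻¹ * (deriv η ‖x‖ * Φ x + η ‖x‖ * Θ x) = 0) {ρ : ℝ} (hρ : 1 < ρ) :
    HasDerivAt (sav Φ) (sav Θ ρ) ρ := by
  refine oneD (sav_cont hΦ) (sav_cont hΘ) ?_ hρ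
  intro η h1 h2 h3
  have hη : Rad η := ⟨h1, h2, h3⟩
  have hz := h η hη
  have cη := (contDiff_one_iff_deriv.mp h1)
  rw [polar hn] at hz
  · rw [← hz, ← setIntegral_eq_integral_of_forall_compl_eq_zero (s := Set.Ioi (0:ℝ))]
    · refine setIntegral_congr_fun measurableSet_Ioi fun r hr => ?_
      have hr0 : (0:ℝ) < r := hr
      by_cases hr1 : 1 < r
      · have e : sav (fun x : En n => (‖x‖ ^ (n-1))⁻¹ * (deriv η ‖x‖ * Φ x + η ‖x‖ * Θ x)) r
            = (r ^ (n-1))⁻¹ * (deriv η r * sav Φ r + η r * sav Θ r) := by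
          unfold sav
          rw [← integral_const_mul, ← integral_const_mul, ← integral_add
            ((sav_int1 hΦ hr1).const_mul _) ((sav_int1 hΘ hr1).const_mul _), ← integral_const_mul]
          congr 1
          ext θ
          have : ‖r • (θ : En n)‖ = r := by simp [norm_smul, abs_of_pos hr0]
          simp only [this]
        rw [e, mul_inv_cancel_left₀ (by positivity)]
      · have hn : r ∉ tsupport η := fun h => hr1 (h3 h)
        have e : sav (fun x : En n => (‖x‖ ^ (n-1))⁻¹ * (deriv η ‖x‖ * Φ x + η ‖x‖ * Θ x)) r
            = 0 := by
          unfold sav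
          refine integral_eq_zero_of_ae (ae_of_all _ fun θ => ?_)
          have : ‖r • (θ : En n)‖ = r := by simp [norm_smul, abs_of_pos hr0]
          simp [this, Rad.off hn]
        rw [e, (Rad.off hn).1, (Rad.off hn).2]
        simp
    · intro x hx
      have : x ∉ tsupport η := fun h => hx (lt_trans (one_pos : (0:ℝ) < 1) (h3 h) : (0:ℝ) < x)
      simp [Rad.off this]
  · refine integrable_of_cont (U := OmegaExt n) (K := {x : En n | ‖x‖ ∈ tsupport η}) ?_ hη.cpt hη.sub ?_
    · refine ContinuousOn.mul ?_ (((cη.2.comp continuous_norm).continuousOn.mul hΦ).add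
        ((h1.continuous.comp continuous_norm).continuousOn.mul hΘ))
      refine ContinuousOn.inv₀ (by fun_prop) fun x hx => ?_
      have : 0 < ‖x‖ := lt_trans one_pos hx
      positivity
    · intro x hx
      simp [Rad.off hx]

end SphM

end PartC3

section PartD1
open MeasureTheory Metric Filter
open scoped Topology ContDiff RealInnerProductSpace

namespace SphM
variable {n : ℕ}

theorem om_pos {x : En n} (hx : x ∈ OmegaExt n) : 0 < ‖x‖ := lt_trans one_pos hx

theorem om_ne {x : En n} (hx : x ∈ OmegaExt n) : x ≠ 0 := norm_pos_iff.mp (om_pos hx)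

/-- The radial unit vector. -/
noncomputable def ee (x : En n) : En n := ‖x‖⁻¹ • x

theorem ee_norm {x : En n} (hx : x ∈ OmegaExt n) : ‖ee x‖ = 1 := by
  rw [ee, norm_smul, norm_inv, norm_norm, inv_mul_cancel₀ (om_pos hx).ne']

theorem ee_inner {x : En n} (hx : x ∈ OmegaExt n) : ⟪ee x, ee x⟫ = 1 := by
  rw [real_inner_self_eq_norm_sq, ee_norm hx]; norm_num

theorem hasFDerivAt_nrm {x : En n} (hx : x ∈ OmegaExt n) :
    HasFDerivAt (fun y : En n => ‖y‖) (innerSL ℝ (ee x)) x := by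
  have h1 : HasFDerivAt (fun y : En n => ‖y‖ ^ 2) (2 • innerSL ℝ x) x :=
    (hasStrictFDerivAt_norm_sq x).hasFDerivAt
  have hp := om_pos hx
  have h2 := h1.sqrt (by positivity)
  have h3 : (fun y : En n => √(‖y‖ ^ 2)) = fun y => ‖y‖ := by
    ext y; exact Real.sqrt_sq (norm_nonneg y)
  rw [h3] at h2
  refine h2.congr_fderiv ?_
  ext v
  rw [Real.sqrt_sq (norm_nonneg x)]
  simp [ee]
  field_simp

theorem hasFDerivAt_rad {x : En n} (hx : x ∈ OmegaExt n) {g : ℝ → ℝ} {g' : ℝ}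
    (hg : HasDerivAt g g' ‖x‖) :
    HasFDerivAt (fun y : En n => g ‖y‖) (g' • innerSL ℝ (ee x)) x :=
  hg.comp_hasFDerivAt x (hasFDerivAt_nrm hx)

theorem hasFDerivAt_ee {x : En n} (hx : x ∈ OmegaExt n) :
    HasFDerivAt (ee : En n → En n) (‖x‖⁻¹ • (ContinuousLinearMap.id ℝ (En n)
      - (innerSL ℝ (ee x)).smulRight (ee x))) x := by
  have hp := om_pos hx
  have h1 := hasFDerivAt_rad hx (hasDerivAt_inv hp.ne')
  have h2 := h1.smul (hasFDerivAt_id x)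
  refine HasFDerivAt.congr_fderiv (f := ee) h2 ?_
  ext1 v
  simp only [add_apply, smul_apply, sub_apply, ContinuousLinearMap.smulRight_apply,
    ContinuousLinearMap.id_apply, smul_sub, id, ee, smul_smul, innerSL_apply_apply, inner_smul_left,
    smul_eq_mul, conj_trivial]
  rw [sub_eq_add_neg, ← neg_smul]
  congr 2
  field_simp

theorem fderiv_ee {x : En n} (hx : x ∈ OmegaExt n) (v : En n) :
    fderiv ℝ ee x v = ‖x‖⁻¹ • (v - ⟪ee x, v⟫ • ee x) := by
  rw [(hasFDerivAt_ee hx).fderiv]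
  simp

theorem contDiffOn_nrm : ContDiffOn ℝ 1 (fun y : En n => ‖y‖) (OmegaExt n) :=
  fun _ hx => (contDiffAt_norm ℝ (om_ne hx)).contDiffWithinAt

theorem contDiffOn_ee : ContDiffOn ℝ 1 (ee : En n → En n) (OmegaExt n) :=
  (contDiffOn_nrm.inv fun _ hx => (om_pos hx).ne').smul contDiffOn_id

/-! Divergence rules. -/

theorem dv_add {F G : En n → En n} {x : En n} (hF : DifferentiableAt ℝ F x)
    (hG : DifferentiableAt ℝ G x) : dv (fun y => F y + G y) x = dv F x + dv G x := by
  simp [dv, fderiv_fun_add hF hG, Finset.sum_add_distrib]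

theorem sum_single (y : En n) : y = ∑ i, y i • EuclideanSpace.single i (1:ℝ) := by
  have := ((EuclideanSpace.basisFun (Fin n) ℝ).sum_repr y).symm
  simpa using this

theorem dv_smul {f : En n → ℝ} {F : En n → En n} {x : En n} (hf : DifferentiableAt ℝ f x)
    (hF : DifferentiableAt ℝ F x) :
    dv (fun y => f y • F y) x = f x * dv F x + fderiv ℝ f x (F x) := by
  have h1 : fderiv ℝ f x (F x) = ∑ i, F x i * fderiv ℝ f x (EuclideanSpace.single i 1) := by
    conv_lhs => rw [sum_single (F x)]
    simp only [map_sum, map_smul, smul_eq_mul]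
  rw [h1]
  simp only [dv, fderiv_fun_smul hf hF, Finset.mul_sum, ← Finset.sum_add_distrib]
  refine Finset.sum_congr rfl fun i _ => ?_
  simp [mul_comm]

theorem dv_ee {x : En n} (hx : x ∈ OmegaExt n) : dv ee x = ((n:ℝ) - 1) / ‖x‖ := by
  simp only [dv, fderiv_ee hx]
  have h : ∀ i, ⟪ee x, EuclideanSpace.single i (1:ℝ)⟫ = ee x i := by
    intro i
    simp [EuclideanSpace.inner_single_right]
  have h2 : ∑ i, ee x i * ee x i = 1 := by
    rw [← ee_inner hx, PiLp.inner_apply]; rfl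
  simp only [h, PiLp.smul_apply, PiLp.sub_apply, smul_eq_mul, ← Finset.mul_sum,
    Finset.sum_sub_distrib, h2]
  simp
  field_simp

theorem dv_off {F : En n → En n} {x : En n} (hx : x ∉ tsupport F) : dv F x = 0 := by
  have : F =ᶠ[𝓝 x] fun _ => 0 := notMem_tsupport_iff_eventuallyEq.mp hx
  simp [dv, this.fderiv_eq]

theorem dv_bound (F : En n → En n) (x : En n) : |dv F x| ≤ n * ‖fderiv ℝ F x‖ := by
  unfold dv
  refine (Finset.abs_sum_le_sum_abs _ _).trans ?_
  refine (Finset.sum_le_card_nsmul _ _ ‖fderiv ℝ F x‖ fun i _ => ?_).trans (by simp)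
  have h1 := (PiLp.norm_apply_le (fderiv ℝ F x (EuclideanSpace.single i 1)) i)
  rw [Real.norm_eq_abs] at h1
  refine h1.trans (((fderiv ℝ F x).le_opNorm _).trans ?_)
  simp

theorem dv_cont {F : En n → En n} (hF : ContDiffOn ℝ 1 F (OmegaExt n)) :
    ContinuousOn (dv F) (OmegaExt n) := by
  have h := hF.continuousOn_fderiv_of_isOpen isOpen_Om (by norm_num)
  unfold dv
  refine continuousOn_finsetSum _ fun i _ => ?_
  exact (EuclideanSpace.proj i : En n →L[ℝ] ℝ).continuous.comp_continuousOn
    (h.clm_apply continuousOn_const)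

/-! Radial cutoffs of fields. -/

theorem Rad.tsupport_sub {η : ℝ → ℝ} {F : Type*} [Zero F] {f : En n → F}
    (h : ∀ x, ‖x‖ ∉ tsupport η → f x = 0) : tsupport f ⊆ {x : En n | ‖x‖ ∈ tsupport η} :=
  closure_minimal (fun x hx => by
    by_contra h'
    exact hx (h x h')) ((isClosed_tsupport _).preimage continuous_norm)

theorem Rad.contDiff {η : ℝ → ℝ} (hη : Rad η) : ContDiff ℝ 1 (fun x : En n => η ‖x‖) := by
  rw [contDiff_iff_contDiffAt]
  intro x
  by_cases hx : ‖x‖ ∈ tsupport η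
  · exact hη.cd.contDiffAt.comp x (contDiffAt_norm ℝ (om_ne (hη.sub hx)))
  · have : (fun x : En n => η ‖x‖) =ᶠ[𝓝 x] fun _ => 0 := by
      have h1 : (fun x : En n => ‖x‖) ⁻¹' (tsupport η)ᶜ ∈ 𝓝 x :=
        ((isClosed_tsupport η).isOpen_compl.preimage continuous_norm).mem_nhds hx
      filter_upwards [h1] with y hy
      exact image_eq_zero_of_notMem_tsupport hy
    exact contDiffAt_const.congr_of_eventuallyEq this

theorem Rad.tst {η : ℝ → ℝ} (hη : Rad η) : Tst (OmegaExt n) (fun x : En n => η ‖x‖) := by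
  have h := Rad.tsupport_sub (n := n) (η := η) (f := fun x => η ‖x‖)
    fun x hx => image_eq_zero_of_notMem_tsupport hx
  exact ⟨hη.contDiff, hη.cpt.of_isClosed_subset (isClosed_tsupport _) h, h.trans hη.sub⟩

theorem Rad.fderiv {η : ℝ → ℝ} (hη : Rad η) {x : En n} (hx : x ∈ OmegaExt n) (v : En n) :
    _root_.fderiv ℝ (fun y : En n => η ‖y‖) x v = deriv η ‖x‖ * ⟪ee x, v⟫ := by
  rw [(hasFDerivAt_rad hx (hη.cd.differentiable (by norm_num) _).hasDerivAt).fderiv]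
  simp

theorem cdA {F : Type*} [NormedAddCommGroup F] [NormedSpace ℝ F] {f : En n → F}
    (hf : ContDiffOn ℝ 1 f (OmegaExt n)) {x : En n} (hx : x ∈ OmegaExt n) : ContDiffAt ℝ 1 f x :=
  hf.contDiffAt (isOpen_Om.mem_nhds hx)

theorem dA {F : Type*} [NormedAddCommGroup F] [NormedSpace ℝ F] {f : En n → F}
    (hf : ContDiffOn ℝ 1 f (OmegaExt n)) {x : En n} (hx : x ∈ OmegaExt n) :
    DifferentiableAt ℝ f x := (cdA hf hx).differentiableAt (by norm_num)

/-- A test function times a `C¹` field is an admissible compactly supported field. -/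
theorem tst_smul {F : Type*} [NormedAddCommGroup F] [NormedSpace ℝ F]
    {ψ : En n → ℝ} (hψ : Tst (OmegaExt n) ψ) {f : En n → F}
    (hf : ContDiffOn ℝ 1 f (OmegaExt n)) : ContDiff ℝ 1 (fun x => ψ x • f x) ∧
      HasCompactSupport (fun x => ψ x • f x) ∧ tsupport (fun x => ψ x • f x) ⊆ OmegaExt n :=
  ⟨cut_smul hψ.cd fun _ hx => cdA hf (hψ.ts hx), hψ.cs.smul_right,
    (tsupport_smul_subset_left _ _).trans hψ.ts⟩

theorem tst_mul {ψ : En n → ℝ} (hψ : Tst (OmegaExt n) ψ) {f : En n → ℝ}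
    (hf : ContDiffOn ℝ 1 f (OmegaExt n)) : Tst (OmegaExt n) (fun x => ψ x * f x) :=
  cut_tst hψ fun _ hx => cdA hf (hψ.ts hx)

/-- The weight `κ`. -/
noncomputable def kap (x : En n) : ℝ := (‖x‖ ^ (n-1))⁻¹

theorem kap_pos {x : En n} (hx : x ∈ OmegaExt n) : 0 < kap x := by
  have := om_pos hx
  unfold kap; positivity

theorem contDiffOn_kap : ContDiffOn ℝ 1 (kap : En n → ℝ) (OmegaExt n) :=
  (contDiffOn_nrm.pow _).inv fun _ hx => by have := om_pos hx; positivity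

theorem fderiv_kap (hn : 1 ≤ n) {x : En n} (hx : x ∈ OmegaExt n) (v : En n) :
    fderiv ℝ kap x v = - (((n:ℝ) - 1) / ‖x‖) * kap x * ⟪ee x, v⟫ := by
  have hp := om_pos hx
  have h1 : HasDerivAt (fun r : ℝ => (r ^ (n-1))⁻¹) (- (((n:ℝ) - 1) / ‖x‖) * (‖x‖ ^ (n-1))⁻¹) ‖x‖ := by
    refine ((hasDerivAt_pow (n-1) ‖x‖).inv (by positivity)).congr_deriv ?_
    rcases Nat.exists_eq_add_of_le hn with ⟨k, rfl⟩
    rcases k with _ | k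
    · simp
    · have : 1 + (k + 1) - 1 = k + 1 := by omega
      rw [this]
      simp only [Nat.add_sub_cancel]
      push_cast
      field_simp
      ring
  have h2 : fderiv ℝ kap x = _ := (hasFDerivAt_rad hx h1).fderiv
  rw [h2]
  simp [kap]

/-- The radial divergence lemma. -/
theorem radial (hn : 1 ≤ n) {F : En n → En n} (hF : ContDiffOn ℝ 1 F (OmegaExt n)) {ρ : ℝ}
    (hρ : 1 < ρ) :
    HasDerivAt (sav fun x => ⟪F x, ee x⟫)
      (sav (fun x => dv F x - ((n:ℝ) - 1) / ‖x‖ * ⟪F x, ee x⟫) ρ) ρ := by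
  have c1 : ContinuousOn (fun x => ⟪F x, ee x⟫) (OmegaExt n) :=
    hF.continuousOn.inner contDiffOn_ee.continuousOn
  refine dbr hn c1 ?_ ?_ hρ
  · refine (dv_cont hF).sub (ContinuousOn.mul ?_ c1)
    exact continuousOn_const.div continuous_norm.continuousOn fun x hx => (om_pos hx).ne'
  · intro η hη
    have hk : ContDiffOn ℝ 1 (fun x => kap x • F x) (OmegaExt n) := contDiffOn_kap.smul hF
    obtain ⟨a1, a2, a3⟩ := tst_smul hη.tst hk
    rw [← int_dv_zero a1 a2]
    refine integral_congr_ae (ae_of_all _ fun x => ?_)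
    simp only
    by_cases hx : x ∈ OmegaExt n
    · rw [dv_smul (hη.tst.diff x) (dA hk hx)]
      rw [dv_smul (dA contDiffOn_kap hx) (dA hF hx), hη.fderiv hx, fderiv_kap hn hx]
      simp only [inner_smul_right, real_inner_comm (F x)]
      rw [show (‖x‖ ^ (n-1))⁻¹ = kap x from rfl]
      ring
    · have hx' : ‖x‖ ∉ tsupport η := fun h => hx (hη.sub h)
      rw [dv_off fun h => hx (a3 h), (Rad.off hx').1, (Rad.off hx').2]
      simp

end SphM

end PartD1

section PartD2
open MeasureTheory Metric Filter
open scoped Topology ContDiff RealInnerProductSpace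

namespace SphM
variable {n : ℕ}

/-- Symbols of order `-s`. -/
structure Sm {F : Type*} [NormedAddCommGroup F] [NormedSpace ℝ F] (s : ℝ) (f : En n → F) : Prop where
  cd : ContDiffOn ℝ 1 f (OmegaExt n)
  bd : ∃ C, 0 ≤ C ∧ ∀ x ∈ OmegaExt n, ‖f x‖ ≤ C * ‖x‖ ^ (-s) ∧
    ‖fderiv ℝ f x‖ ≤ C * ‖x‖ ^ (-s) / ‖x‖

namespace Sm
variable {F G H : Type*} [NormedAddCommGroup F] [NormedSpace ℝ F] [NormedAddCommGroup G]
  [NormedSpace ℝ G] [NormedAddCommGroup H] [NormedSpace ℝ H]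

theorem const (c : F) : Sm 0 (fun _ : En n => c) where
  cd := contDiffOn_const
  bd := ⟨‖c‖, norm_nonneg c, fun x hx => by
    have := om_pos hx
    simp
    positivity⟩

theorem mono {s t : ℝ} {f : En n → F} (hf : Sm s f) (h : t ≤ s) : Sm t f where
  cd := hf.cd
  bd := by
    obtain ⟨C, hC, hb⟩ := hf.bd
    refine ⟨C, hC, fun x hx => ?_⟩
    have h1 : ‖x‖ ^ (-s) ≤ ‖x‖ ^ (-t) := Real.rpow_le_rpow_of_exponent_le (le_of_lt hx) (by linarith)
    have := om_pos hx
    obtain ⟨h2, h3⟩ := hb x hx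
    refine ⟨h2.trans (by gcongr), h3.trans (by gcongr)⟩

theorem add {s : ℝ} {f g : En n → F} (hf : Sm s f) (hg : Sm s g) : Sm s (fun x => f x + g x) where
  cd := hf.cd.add hg.cd
  bd := by
    obtain ⟨C, hC, hb⟩ := hf.bd
    obtain ⟨D, hD, hb'⟩ := hg.bd
    refine ⟨C + D, by positivity, fun x hx => ?_⟩
    obtain ⟨h2, h3⟩ := hb x hx
    obtain ⟨h4, h5⟩ := hb' x hx
    refine ⟨(norm_add_le _ _).trans (by linarith), ?_⟩
    rw [fderiv_fun_add (dA hf.cd hx) (dA hg.cd hx)]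
    refine (norm_add_le _ _).trans ((add_le_add h3 h5).trans (le_of_eq ?_))
    ring

theorem neg {s : ℝ} {f : En n → F} (hf : Sm s f) : Sm s (fun x => - f x) where
  cd := hf.cd.neg
  bd := by
    obtain ⟨C, hC, hb⟩ := hf.bd
    refine ⟨C, hC, fun x hx => ?_⟩
    rw [fderiv_fun_neg, norm_neg, norm_neg]
    exact hb x hx

theorem sub {s : ℝ} {f g : En n → F} (hf : Sm s f) (hg : Sm s g) : Sm s (fun x => f x - g x) := by
  simp only [sub_eq_add_neg]
  exact hf.add hg.neg

theorem bilin {s t : ℝ} {f : En n → F} {g : En n → G} (B : F →L[ℝ] G →L[ℝ] H)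
    (hf : Sm s f) (hg : Sm t g) : Sm (s + t) (fun x => B (f x) (g x)) where
  cd := ((B.contDiff.comp_contDiffOn hf.cd)).clm_apply hg.cd
  bd := by
    obtain ⟨C, hC, hb⟩ := hf.bd
    obtain ⟨D, hD, hb'⟩ := hg.bd
    refine ⟨2 * (‖B‖ * (C * D)), by positivity, fun x hx => ?_⟩
    obtain ⟨h2, h3⟩ := hb x hx
    obtain ⟨h4, h5⟩ := hb' x hx
    have hp := om_pos hx
    have e : ‖x‖ ^ (-(s+t)) = ‖x‖ ^ (-s) * ‖x‖ ^ (-t) := by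
      rw [← Real.rpow_add hp]; ring_nf
    rw [e]
    set P := ‖x‖ ^ (-s)
    set R := ‖x‖ ^ (-t)
    have hP : 0 ≤ P := by positivity
    have hR : 0 ≤ R := by positivity
    constructor
    · calc ‖B (f x) (g x)‖ ≤ ‖B‖ * ‖f x‖ * ‖g x‖ := B.le_opNorm₂ _ _
        _ ≤ ‖B‖ * (C * P) * (D * R) := by gcongr
        _ = 1 * (‖B‖ * (C * D) * (P * R)) := by ring
        _ ≤ 2 * (‖B‖ * (C * D) * (P * R)) := by gcongr; norm_num
        _ = _ := by ring
    · refine ContinuousLinearMap.opNorm_le_bound _ (by positivity) fun v => ?_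
      have hd := B.hasFDerivAt_of_bilinear (dA hf.cd hx).hasFDerivAt (dA hg.cd hx).hasFDerivAt
      rw [hd.fderiv]
      have e2 : (B.precompR (En n) (f x) (fderiv ℝ g x) + B.precompL (En n) (fderiv ℝ f x) (g x)) v
        = B (f x) (fderiv ℝ g x v) + B (fderiv ℝ f x v) (g x) := by simp
      rw [e2]
      have k1 : ‖fderiv ℝ g x v‖ ≤ D * R / ‖x‖ * ‖v‖ :=
        ((fderiv ℝ g x).le_opNorm v).trans (by gcongr)
      have k2 : ‖fderiv ℝ f x v‖ ≤ C * P / ‖x‖ * ‖v‖ :=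
        ((fderiv ℝ f x).le_opNorm v).trans (by gcongr)
      calc _ ≤ ‖B (f x) (fderiv ℝ g x v)‖ + ‖B (fderiv ℝ f x v) (g x)‖ := norm_add_le _ _
        _ ≤ ‖B‖ * ‖f x‖ * ‖fderiv ℝ g x v‖ + ‖B‖ * ‖fderiv ℝ f x v‖ * ‖g x‖ :=
            add_le_add (B.le_opNorm₂ _ _) (B.le_opNorm₂ _ _)
        _ ≤ ‖B‖ * (C * P) * (D * R / ‖x‖ * ‖v‖) + ‖B‖ * (C * P / ‖x‖ * ‖v‖) * (D * R) := by gcongr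
        _ = _ := by ring

theorem clm_apply {s t : ℝ} {f : En n → F →L[ℝ] G} {g : En n → F} (hf : Sm s f) (hg : Sm t g) :
    Sm (s + t) (fun x => f x (g x)) := by
  have := bilin (ContinuousLinearMap.id ℝ (F →L[ℝ] G)) hf hg
  exact this

theorem smul {s t : ℝ} {f : En n → ℝ} {g : En n → F} (hf : Sm s f) (hg : Sm t g) :
    Sm (s + t) (fun x => f x • g x) := by
  have := bilin (ContinuousLinearMap.lsmul ℝ ℝ : ℝ →L[ℝ] F →L[ℝ] F) hf hg
  simpa using this

theorem inner {s t : ℝ} {f g : En n → En n} (hf : Sm s f) (hg : Sm t g) :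
    Sm (s + t) (fun x => ⟪f x, g x⟫) := bilin (innerSL ℝ) hf hg

theorem inv {f : En n → ℝ} {l : ℝ} (hl : 0 < l) (hf : Sm 0 f) (h : ∀ x ∈ OmegaExt n, l ≤ f x) :
    Sm 0 (fun x => (f x)⁻¹) where
  cd := hf.cd.inv fun x hx => (hl.trans_le (h x hx)).ne'
  bd := by
    obtain ⟨C, hC, hb⟩ := hf.bd
    refine ⟨l⁻¹ + (l^2)⁻¹ * C, by positivity, fun x hx => ?_⟩
    have hp := om_pos hx
    have hfx := h x hx
    have hf0 : 0 < f x := hl.trans_le hfx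
    obtain ⟨h2, h3⟩ := hb x hx
    simp only [neg_zero, Real.rpow_zero, mul_one] at h2 h3 ⊢
    constructor
    · rw [norm_inv, Real.norm_eq_abs, abs_of_pos hf0]
      have : (f x)⁻¹ ≤ l⁻¹ := by gcongr
      have h4 : 0 ≤ (l^2)⁻¹ * C := by positivity
      linarith
    · have hd := (hasDerivAt_inv hf0.ne').comp_hasFDerivAt x (dA hf.cd hx).hasFDerivAt
      have hd2 : HasFDerivAt (fun x => (f x)⁻¹) _ x := hd
      rw [hd2.fderiv, norm_smul, norm_neg, norm_inv, norm_pow, Real.norm_eq_abs, abs_of_pos hf0]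
      have h5 : 0 ≤ l⁻¹ := by positivity
      calc (f x ^ 2)⁻¹ * ‖fderiv ℝ f x‖ ≤ (l ^ 2)⁻¹ * (C / ‖x‖) := by gcongr
        _ ≤ (l⁻¹ + (l^2)⁻¹ * C) / ‖x‖ := by
          rw [← mul_div_assoc]; gcongr; linarith

theorem ee : Sm 0 (ee : En n → En n) where
  cd := contDiffOn_ee
  bd := by
    refine ⟨2, by norm_num, fun x hx => ?_⟩
    have hp := om_pos hx
    simp only [neg_zero, Real.rpow_zero, mul_one]
    rw [ee_norm hx]
    refine ⟨by norm_num, ContinuousLinearMap.opNorm_le_bound _ (by positivity) fun v => ?_⟩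
    rw [fderiv_ee hx, norm_smul, norm_inv, norm_norm]
    have : ‖v - ⟪SphM.ee x, v⟫ • SphM.ee x‖ ≤ 2 * ‖v‖ := by
      refine (norm_sub_le _ _).trans ?_
      rw [norm_smul, ee_norm hx]
      have := norm_inner_le_norm (𝕜 := ℝ) (SphM.ee x) v
      rw [ee_norm hx] at this
      linarith
    calc ‖x‖⁻¹ * _ ≤ ‖x‖⁻¹ * (2 * ‖v‖) := by gcongr
      _ = _ := by field_simp

/-- The bounds in usable form. -/
theorem bds {s : ℝ} {f : En n → F} (hf : Sm s f) : ∃ C, 0 ≤ C ∧ (∀ x ∈ OmegaExt n,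
    ‖f x‖ ≤ C * ‖x‖ ^ (-s)) ∧ ∀ x ∈ OmegaExt n, ‖fderiv ℝ f x‖ ≤ C * ‖x‖ ^ (-1 - s) := by
  obtain ⟨C, hC, hb⟩ := hf.bd
  refine ⟨C, hC, fun x hx => (hb x hx).1, fun x hx => (hb x hx).2.trans (le_of_eq ?_)⟩
  have hp := om_pos hx
  rw [sub_eq_add_neg, Real.rpow_add hp, Real.rpow_neg_one]
  ring

end Sm

/-- The coefficient field. -/
structure Fld (A : En n → En n →L[ℝ] En n) (lam α : ℝ) : Prop where
  lam0 : 0 < lam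
  lam1 : lam < 1
  α0 : 0 < α
  α1 : α ≤ 1
  sym : ∀ x ∈ OmegaExt n, ∀ a b, ⟪A x a, b⟫ = ⟪a, A x b⟫
  ell : ∀ x ∈ OmegaExt n, ∀ a, lam * ‖a‖ ^ 2 ≤ ⟪A x a, a⟫
  ell2 : ∀ x ∈ OmegaExt n, ∀ a, ⟪A x a, a⟫ ≤ lam⁻¹ * ‖a‖ ^ 2
  sm : Sm α (fun x => A x - ContinuousLinearMap.id ℝ (En n))

section defs
variable (A : En n → En n →L[ℝ] En n)

noncomputable def hh (x : En n) : En n := (A x - ContinuousLinearMap.id ℝ (En n)) (ee x)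
noncomputable def mm (x : En n) : ℝ := ⟪hh A x, ee x⟫
noncomputable def mu (x : En n) : ℝ := ⟪A x (ee x), ee x⟫
noncomputable def bb (x : En n) : En n := (mu A x)⁻¹ • (hh A x - mm A x • ee x)
noncomputable def YY (x : En n) : En n := ee x + bb A x
noncomputable def bet (x : En n) : ℝ := dv (hh A) x - ((n:ℝ) - 1) / ‖x‖ * mm A x
noncomputable def gam (x : En n) : ℝ := dv (bb A) x
noncomputable def VV (x : En n) : ℝ :=
  ((n:ℝ) - 1) * ((n:ℝ) - 3) / 4 * mu A x / ‖x‖ ^ 2 + ((n:ℝ) - 1) / 2 * bet A x / ‖x‖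

end defs

namespace Fld
variable {A : En n → En n →L[ℝ] En n} {lam α : ℝ}

theorem smA (S : Fld A lam α) : Sm 0 A := by
  have := (S.sm.mono S.α0.le).add (Sm.const (ContinuousLinearMap.id ℝ (En n)))
  simpa only [sub_add_cancel] using this

theorem smh (S : Fld A lam α) : Sm α (hh A) := by
  have := S.sm.clm_apply Sm.ee
  simp only [add_zero, zero_add] at this
  exact this

theorem smm (S : Fld A lam α) : Sm α (mm A) := by
  have := S.smh.inner Sm.ee
  simp only [add_zero, zero_add] at this
  exact this

theorem smmu (S : Fld A lam α) : Sm 0 (mu A) := by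
  have := (S.smA.clm_apply Sm.ee).inner Sm.ee
  simp only [add_zero, zero_add] at this
  exact this

theorem mu_ge (S : Fld A lam α) {x : En n} (hx : x ∈ OmegaExt n) : lam ≤ mu A x := by
  have := S.ell x hx (ee x)
  rw [ee_norm hx] at this
  simpa [mu] using this

theorem mu_le (S : Fld A lam α) {x : En n} (hx : x ∈ OmegaExt n) : mu A x ≤ lam⁻¹ := by
  have := S.ell2 x hx (ee x)
  rw [ee_norm hx] at this
  simpa [mu] using this

theorem mu_pos (S : Fld A lam α) {x : En n} (hx : x ∈ OmegaExt n) : 0 < mu A x :=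
  S.lam0.trans_le (S.mu_ge hx)

theorem smb (S : Fld A lam α) : Sm α (bb A) := by
  have h1 : Sm α (fun x => mm A x • ee x) := by
    have := S.smm.smul Sm.ee
    simpa using this
  have := (Sm.inv S.lam0 S.smmu fun x hx => S.mu_ge hx).smul (S.smh.sub h1)
  simp only [add_zero, zero_add] at this
  exact this

theorem smY (S : Fld A lam α) : Sm 0 (YY A) := Sm.ee.add (S.smb.mono S.α0.le)

theorem mu_eq {x : En n} (hx : x ∈ OmegaExt n) : mu A x = 1 + mm A x := by
  simp [mu, mm, hh, inner_sub_left, ee_norm hx]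

theorem Ae_eq (x : En n) : A x (ee x) = ee x + hh A x := by simp [hh]

theorem mu_Y (S : Fld A lam α) {x : En n} (hx : x ∈ OmegaExt n) : mu A x • YY A x = A x (ee x) := by
  rw [YY, bb, smul_add, smul_inv_smul₀ (S.mu_pos hx).ne', Ae_eq, mu_eq hx, add_smul, one_smul]
  abel

theorem Y_ee (S : Fld A lam α) {x : En n} (hx : x ∈ OmegaExt n) : ⟪YY A x, ee x⟫ = 1 := by
  have h := S.mu_Y hx
  have h2 : ⟪mu A x • YY A x, ee x⟫ = mu A x := by rw [h]; rfl
  rw [inner_smul_left] at h2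
  simp only [conj_trivial] at h2
  have := (S.mu_pos hx).ne'
  field_simp at h2
  exact h2

theorem dvAe (S : Fld A lam α) {x : En n} (hx : x ∈ OmegaExt n) :
    dv (fun y => A y (ee y)) x = bet A x + ((n:ℝ) - 1) / ‖x‖ * mu A x := by
  have : (fun y => A y (ee y)) = fun y => ee y + hh A y := funext Ae_eq
  rw [this, dv_add (dA contDiffOn_ee hx) (dA S.smh.cd hx), dv_ee hx, bet, mu_eq hx]
  have := om_pos hx
  field_simp
  ring

theorem dvY (S : Fld A lam α) {x : En n} (hx : x ∈ OmegaExt n) :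
    dv (YY A) x = gam A x + ((n:ℝ) - 1) / ‖x‖ := by
  have : YY A = fun y => ee y + bb A y := rfl
  rw [this, dv_add (dA contDiffOn_ee hx) (dA S.smb.cd hx), dv_ee hx, gam]
  ring

theorem cd (S : Fld A lam α) : ContDiffOn ℝ 1 A (OmegaExt n) := S.smA.cd

theorem cdAe (S : Fld A lam α) : ContDiffOn ℝ 1 (fun y => A y (ee y)) (OmegaExt n) :=
  S.cd.clm_apply contDiffOn_ee

theorem cbet (S : Fld A lam α) : ContinuousOn (bet A) (OmegaExt n) :=
  (dv_cont S.smh.cd).sub ((continuousOn_const.div continuous_norm.continuousOn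
    fun x hx => (om_pos hx).ne').mul S.smm.cd.continuousOn)

theorem cgam (S : Fld A lam α) : ContinuousOn (gam A) (OmegaExt n) := dv_cont S.smb.cd

theorem cVV (S : Fld A lam α) : ContinuousOn (VV A) (OmegaExt n) :=
  ((continuousOn_const.mul S.smmu.cd.continuousOn).div (continuous_norm.pow 2).continuousOn
    fun _ hx => pow_ne_zero 2 (om_pos hx).ne').add
  ((continuousOn_const.mul S.cbet).div continuous_norm.continuousOn fun x hx => (om_pos hx).ne')

theorem bet_bound (S : Fld A lam α) :
    ∃ C, 0 ≤ C ∧ ∀ x ∈ OmegaExt n, |bet A x| ≤ C * ‖x‖ ^ (-1 - α) := by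
  obtain ⟨C1, h1, _, hb1⟩ := S.smh.bds
  obtain ⟨C2, h2, hb2, _⟩ := S.smm.bds
  refine ⟨n * C1 + |(n:ℝ) - 1| * C2, by positivity, fun x hx => ?_⟩
  have hp := om_pos hx
  have e : ‖x‖ ^ (-1 - α) = ‖x‖ ^ (-α) / ‖x‖ := by
    rw [sub_eq_add_neg, Real.rpow_add hp, Real.rpow_neg_one]; ring
  have k1 := (dv_bound (hh A) x).trans (mul_le_mul_of_nonneg_left (hb1 x hx) (Nat.cast_nonneg n))
  have k2 : |((n:ℝ) - 1) / ‖x‖ * mm A x| ≤ |(n:ℝ) - 1| / ‖x‖ * (C2 * ‖x‖ ^ (-α)) := by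
    rw [abs_mul, abs_div, abs_norm]
    gcongr
    exact hb2 x hx
  refine (abs_sub _ _).trans ((add_le_add k1 k2).trans (le_of_eq ?_))
  rw [e]; ring

theorem gam_bound (S : Fld A lam α) :
    ∃ C, 0 ≤ C ∧ ∀ x ∈ OmegaExt n, |gam A x| ≤ C * ‖x‖ ^ (-1 - α) := by
  obtain ⟨C1, h1, _, hb1⟩ := S.smb.bds
  refine ⟨n * C1, by positivity, fun x hx => ?_⟩
  have k1 := (dv_bound (bb A) x).trans (mul_le_mul_of_nonneg_left (hb1 x hx) (Nat.cast_nonneg n))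
  rw [← mul_assoc] at k1
  exact k1

end Fld
end SphM

end PartD2

section PartD3
open MeasureTheory Metric Filter
open scoped Topology ContDiff RealInnerProductSpace

namespace SphM
variable {n : ℕ}

/-- The renormalised solution. -/
noncomputable def ww (u : En n → ℝ) (x : En n) : ℝ := ‖x‖ ^ (((n:ℝ) - 1) / 2) * u x

structure Sol (A : En n → En n →L[ℝ] En n) (lam α : ℝ) (u : En n → ℝ) : Prop where
  hn : 2 ≤ n
  fld : Fld A lam α
  hu : ContDiffOn ℝ 1 u (OmegaExt n)
  weak : ∀ φ, Tst (OmegaExt n) φ → ∫ x, fderiv ℝ φ x (A x (gradient u x)) = ∫ x, u x * φ x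

/-- The power `‖x‖^(-a)`. -/
noncomputable def ss (x : En n) : ℝ := ‖x‖ ^ (-(((n:ℝ) - 1) / 2))

theorem contDiffOn_rpow (c : ℝ) : ContDiffOn ℝ 1 (fun x : En n => ‖x‖ ^ c) (OmegaExt n) :=
  contDiffOn_nrm.rpow_const_of_ne fun _ hx => (om_pos hx).ne'

theorem contDiffOn_ss : ContDiffOn ℝ 1 (ss : En n → ℝ) (OmegaExt n) := contDiffOn_rpow _

theorem fderiv_ss {x : En n} (hx : x ∈ OmegaExt n) (v : En n) :
    fderiv ℝ ss x v = - (((n:ℝ) - 1) / 2 / ‖x‖) * ss x * ⟪ee x, v⟫ := by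
  have hp := om_pos hx
  have h1 := Real.hasDerivAt_rpow_const (x := ‖x‖) (p := -(((n:ℝ) - 1) / 2)) (Or.inl hp.ne')
  have h2 : fderiv ℝ ss x = _ := (hasFDerivAt_rad hx h1).fderiv
  rw [h2, Real.rpow_sub_one hp.ne']
  simp only [ss, smul_apply, innerSL_apply_apply, smul_eq_mul]
  ring

theorem ss_sq (hn : 1 ≤ n) {x : En n} (hx : x ∈ OmegaExt n) : ss x * ss x = kap x := by
  have hp := om_pos hx
  rw [ss, kap, ← Real.rpow_add hp, ← Real.rpow_natCast, ← Real.rpow_neg hp.le]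
  congr 1
  push_cast [hn]
  ring

theorem fderiv_grad (w : En n → ℝ) (x v : En n) : fderiv ℝ w x v = ⟪gradient w x, v⟫ := by
  simp [inner_gradient_left]

namespace Sol
variable {A : En n → En n →L[ℝ] En n} {lam α : ℝ} {u : En n → ℝ}

theorem hn1 (S : Sol A lam α u) : 1 ≤ n := le_trans (by norm_num) S.hn

theorem cw (S : Sol A lam α u) : ContDiffOn ℝ 1 (ww u) (OmegaExt n) := (contDiffOn_rpow _).mul S.hu

theorem u_eq {x : En n} (hx : x ∈ OmegaExt n) : u x = ss x * ww u x := by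
  have hp := om_pos hx
  rw [ww, ss, ← mul_assoc, ← Real.rpow_add hp]
  simp

theorem grad_u (S : Sol A lam α u) {x : En n} (hx : x ∈ OmegaExt n) :
    gradient u x = ss x • gradient (ww u) x - (((n:ℝ) - 1) / 2 / ‖x‖ * ss x * ww u x) • ee x := by
  refine ext_inner_right ℝ fun v => ?_
  rw [← fderiv_grad]
  have : u =ᶠ[𝓝 x] fun y => ss y * ww u y := by
    filter_upwards [isOpen_Om.mem_nhds hx] with y hy using u_eq hy
  rw [this.fderiv_eq, fderiv_fun_mul (dA contDiffOn_ss hx) (dA S.cw hx)]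
  simp only [inner_sub_left, inner_smul_left, ← fderiv_grad, conj_trivial]
  simp [fderiv_ss hx]
  ring

theorem weakw (S : Sol A lam α u) {ψ : En n → ℝ} (hψ : Tst (OmegaExt n) ψ) :
    ∫ x, fderiv ℝ ψ x ((kap x • A x) (gradient (ww u) x))
      = ∫ x, (kap x * (1 - VV A x) * ww u x) * ψ x := by
  have T1 : Tst (OmegaExt n) (fun x => ψ x * ss x) := tst_mul hψ contDiffOn_ss
  have hf : ContDiffOn ℝ 1 (fun x => (kap x * (((n:ℝ) - 1) / 2 * ‖x‖⁻¹) * ww u x)) (OmegaExt n) :=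
    (contDiffOn_kap.mul (contDiffOn_const.mul (contDiffOn_nrm.inv fun _ hx => (om_pos hx).ne'))).mul S.cw
  have hF : ContDiffOn ℝ 1 (fun x => (kap x * (((n:ℝ) - 1) / 2 * ‖x‖⁻¹) * ww u x) • A x (ee x)) (OmegaExt n) :=
    hf.smul S.fld.cdAe
  obtain ⟨a1, a2, a3⟩ := tst_smul hψ hF
  have key := S.weak _ T1
  have cp := grad_cont isOpen_Om S.cw
  have cψ : ContinuousOn (fderiv ℝ ψ) (OmegaExt n) := (hψ.cd.continuous_fderiv (by norm_num)).continuousOn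
  have i1 : Integrable (fun x => fderiv ℝ ψ x ((kap x • A x) (gradient (ww u) x))) := by
    refine integrable_of_cont (U := OmegaExt n) (K := tsupport ψ) ?_ hψ.cs.isCompact hψ.ts ?_
    · exact cψ.clm_apply ((contDiffOn_kap.continuousOn.smul S.fld.cd.continuousOn).clm_apply cp)
    · intro x hx
      rw [(Tst.zero hx).2]; simp
  have i2 : Integrable (fun x => (kap x * VV A x * ww u x) * ψ x) := by
    refine integrable_of_cont (U := OmegaExt n) (K := tsupport ψ) ?_ hψ.cs.isCompact hψ.ts ?_
    · exact ((contDiffOn_kap.continuousOn.mul S.fld.cVV).mul S.cw.continuousOn).mul hψ.cd.continuous.continuousOn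
    · intro x hx
      rw [(Tst.zero hx).1]; simp
  have i3 : Integrable (fun x => (kap x * (1 - VV A x) * ww u x) * ψ x) := by
    refine integrable_of_cont (U := OmegaExt n) (K := tsupport ψ) ?_ hψ.cs.isCompact hψ.ts ?_
    · exact ((contDiffOn_kap.continuousOn.mul (continuousOn_const.sub S.fld.cVV)).mul S.cw.continuousOn).mul hψ.cd.continuous.continuousOn
    · intro x hx
      rw [(Tst.zero hx).1]; simp
  have i4 : Integrable (dv (fun x => ψ x • (kap x * (((n:ℝ) - 1) / 2 * ‖x‖⁻¹) * ww u x) • A x (ee x))) := by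
    refine integrable_of_cont (U := OmegaExt n) (dv_cont a1.contDiffOn) a2.isCompact a3 ?_
    intro x hx
    exact dv_off hx
  have e1 : ∀ x, fderiv ℝ (fun x => ψ x * ss x) x (A x (gradient u x))
      = (fderiv ℝ ψ x ((kap x • A x) (gradient (ww u) x)) + (kap x * VV A x * ww u x) * ψ x)
        - dv (fun x => ψ x • (kap x * (((n:ℝ) - 1) / 2 * ‖x‖⁻¹) * ww u x) • A x (ee x)) x := by
    intro x
    by_cases hx : x ∈ OmegaExt n
    · have hp := om_pos hx
      rw [dv_smul (hψ.diff x) (dA hF hx), dv_smul (dA hf hx) (dA S.fld.cdAe hx), S.fld.dvAe hx]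
      have dr : HasFDerivAt (fun y : En n => ((n:ℝ) - 1) / 2 * ‖y‖⁻¹) _ x :=
        (hasFDerivAt_rad hx (hasDerivAt_inv hp.ne')).const_mul (((n:ℝ) - 1) / 2)
      have dk := (dA (contDiffOn_kap (n := n)) hx)
      have dkr : DifferentiableAt ℝ (fun y : En n => kap y * (((n:ℝ) - 1) / 2 * ‖y‖⁻¹)) x :=
        dk.mul dr.differentiableAt
      rw [fderiv_fun_mul dkr (dA S.cw hx),
        fderiv_fun_mul dk dr.differentiableAt, dr.fderiv, fderiv_fun_mul (hψ.diff x) (dA contDiffOn_ss hx), S.grad_u hx]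
      simp only [add_apply, smul_apply, smul_eq_mul, map_sub, map_smul, fderiv_kap S.hn1 hx, fderiv_ss hx,
        innerSL_apply_apply, inner_sub_right, inner_smul_right]
      have s1 : ⟪ee x, A x (ee x)⟫ = mu A x := by rw [real_inner_comm]; rfl
      have s2 : fderiv ℝ (ww u) x (A x (ee x)) = ⟪ee x, A x (gradient (ww u) x)⟫ := by
        rw [fderiv_grad, ← S.fld.sym x hx, real_inner_comm]
      rw [s1, s2, ← ss_sq S.hn1 hx, VV]
      field_simp
      ring
    · have h1 : x ∉ tsupport ψ := fun h => hx (hψ.ts h)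
      rw [dv_off fun h => hx (a3 h), (Tst.zero fun h => hx (T1.ts h)).2, (Tst.zero h1).1, (Tst.zero h1).2]
      simp
  have e2 : ∀ x, u x * (ψ x * ss x) = (kap x * (1 - VV A x) * ww u x) * ψ x + (kap x * VV A x * ww u x) * ψ x := by
    intro x
    by_cases hx : x ∈ OmegaExt n
    · rw [u_eq (u := u) hx, ← ss_sq S.hn1 hx]; ring
    · have h1 : x ∉ tsupport ψ := fun h => hx (hψ.ts h)
      rw [(Tst.zero h1).1]; ring
  rw [integral_congr_ae (ae_of_all _ e1), integral_congr_ae (ae_of_all _ e2), integral_sub (ilam_add i1 i2) i4,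
    integral_add i1 i2, integral_add i3 i2, int_dv_zero a1 a2] at key
  linarith

theorem rel (S : Sol A lam α u) : RelData (OmegaExt n) (fun x => kap x • A x)
    (fun x => kap x * (1 - VV A x) * ww u x) (ww u) where
  op := isOpen_Om
  hQ := contDiffOn_kap.smul S.fld.cd
  sym := fun x hx a b => by
    simp [inner_smul_left, inner_smul_right, S.fld.sym x hx]
  psd := fun x hx a => by
    have h1 := kap_pos hx
    have h2 := S.fld.ell x hx a
    have h3 := S.fld.lam0
    simp only [smul_apply, inner_smul_left, conj_trivial]
    have : 0 ≤ lam * ‖a‖ ^ 2 := by positivity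
    exact mul_nonneg h1.le (this.trans h2)
  hw := S.cw
  hg := (contDiffOn_kap.continuousOn.mul (continuousOn_const.sub S.fld.cVV)).mul S.cw.continuousOn
  weak := fun _ hψ => S.weakw hψ

end Sol
end SphM

end PartD3

section PartD4
open MeasureTheory Metric Filter
open scoped Topology ContDiff RealInnerProductSpace

namespace SphM
variable {n : ℕ}

theorem sav_add {f g : En n → ℝ} (hf : ContinuousOn f (OmegaExt n)) (hg : ContinuousOn g (OmegaExt n))
    {ρ : ℝ} (hρ : 1 < ρ) : sav (fun x => f x + g x) ρ = sav f ρ + sav g ρ :=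
  integral_add (sav_int1 hf hρ) (sav_int1 hg hρ)

theorem sav_sub {f g : En n → ℝ} (hf : ContinuousOn f (OmegaExt n)) (hg : ContinuousOn g (OmegaExt n))
    {ρ : ℝ} (hρ : 1 < ρ) : sav (fun x => f x - g x) ρ = sav f ρ - sav g ρ :=
  integral_sub (sav_int1 hf hρ) (sav_int1 hg hρ)

theorem sav_mul (c : ℝ) (f : En n → ℝ) (ρ : ℝ) : sav (fun x => c * f x) ρ = c * sav f ρ :=
  integral_const_mul _ _

theorem sav_mono {f g : En n → ℝ} (hf : ContinuousOn f (OmegaExt n)) (hg : ContinuousOn g (OmegaExt n))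
    {ρ : ℝ} (hρ : 1 < ρ) (h : ∀ x ∈ OmegaExt n, ‖x‖ = ρ → f x ≤ g x) : sav f ρ ≤ sav g ρ := by
  refine integral_mono (sav_int1 hf hρ) (sav_int1 hg hρ) fun θ => h _ (sav_smul_mem hρ θ) ?_
  simp [norm_smul, abs_of_pos (show 0 < ρ by linarith)]

theorem sav_nonneg {f : En n → ℝ} {ρ : ℝ} (hρ : 1 < ρ) (h : ∀ x ∈ OmegaExt n, 0 ≤ f x) : 0 ≤ sav f ρ :=
  integral_nonneg fun θ => h _ (sav_smul_mem hρ θ)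

theorem sav_abs {f g : En n → ℝ} (hf : ContinuousOn f (OmegaExt n)) (hg : ContinuousOn g (OmegaExt n))
    {ρ : ℝ} (hρ : 1 < ρ) (h : ∀ x ∈ OmegaExt n, ‖x‖ = ρ → |f x| ≤ g x) : |sav f ρ| ≤ sav g ρ := by
  rw [abs_le]
  constructor
  · have := sav_mono (f := fun x => (-1) * f x) (continuousOn_const.mul hf) hg hρ fun x hx hr => by
      linarith [(abs_le.mp (h x hx hr)).1]
    rw [sav_mul] at this
    linarith
  · exact sav_mono hf hg hρ fun x hx hr => (le_abs_self _).trans (h x hx hr)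

theorem hd_congr {f g : En n → ℝ} {d ρ : ℝ} (h : HasDerivAt (sav f) d ρ) (hρ : 1 < ρ)
    (hfg : ∀ x ∈ OmegaExt n, f x = g x) : HasDerivAt (sav g) d ρ := by
  refine h.congr_of_eventuallyEq ?_
  filter_upwards [isOpen_Ioi.mem_nhds hρ] with t ht
  exact (sav_congr ht fun x hx _ => hfg x hx).symm

section defs2
variable (A : En n → En n →L[ℝ] En n) (u : En n → ℝ)
noncomputable def pp (x : En n) : En n := gradient (ww u) x
noncomputable def qq (x : En n) : ℝ := ⟪A x (pp u x), pp u x⟫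
noncomputable def yp (x : En n) : ℝ := ⟪YY A x, pp u x⟫
noncomputable def FF (x : En n) : ℝ := ⟪(fderiv ℝ A x (YY A x)) (pp u x), pp u x⟫
  + gam A x * qq A u x - 2 * ⟪pp u x, fderiv ℝ (YY A) x (A x (pp u x))⟫
end defs2

namespace Sol
variable {A : En n → En n →L[ℝ] En n} {lam α : ℝ} {u : En n → ℝ}

theorem cp (S : Sol A lam α u) : ContinuousOn (pp u) (OmegaExt n) := grad_cont isOpen_Om S.cw
theorem cwc (S : Sol A lam α u) : ContinuousOn (ww u) (OmegaExt n) := S.cw.continuousOn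
theorem cmu (S : Sol A lam α u) : ContinuousOn (mu A) (OmegaExt n) := S.fld.smmu.cd.continuousOn
theorem cAp (S : Sol A lam α u) : ContinuousOn (fun x => A x (pp u x)) (OmegaExt n) :=
  S.fld.cd.continuousOn.clm_apply S.cp
theorem cq (S : Sol A lam α u) : ContinuousOn (qq A u) (OmegaExt n) := S.cAp.inner S.cp
theorem cyp (S : Sol A lam α u) : ContinuousOn (yp A u) (OmegaExt n) :=
  S.fld.smY.cd.continuousOn.inner S.cp
theorem cFF (S : Sol A lam α u) : ContinuousOn (FF A u) (OmegaExt n) := by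
  have h1 := S.fld.cd.continuousOn_fderiv_of_isOpen isOpen_Om (by norm_num)
  have h2 := S.fld.smY.cd.continuousOn_fderiv_of_isOpen isOpen_Om (by norm_num)
  have hY := S.fld.smY.cd.continuousOn
  exact ((((h1.clm_apply hY).clm_apply S.cp).inner S.cp).add (S.fld.cgam.mul S.cq)).sub
    (continuousOn_const.mul (S.cp.inner (h2.clm_apply S.cAp)))
theorem cinv (k : ℕ) : ContinuousOn (fun x : En n => (‖x‖ ^ k)⁻¹) (OmegaExt n) :=
  (continuous_norm.pow k).continuousOn.inv₀ fun x hx => pow_ne_zero k (om_pos hx).ne'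

theorem Ape (S : Sol A lam α u) {x : En n} (hx : x ∈ OmegaExt n) :
    ⟪ee x, A x (pp u x)⟫ = mu A x * yp A u x := by
  rw [← S.fld.sym x hx, ← S.fld.mu_Y hx, inner_smul_left]; rfl

theorem fw (x v : En n) : fderiv ℝ (ww u) x v = ⟪pp u x, v⟫ := fderiv_grad _ _ _

theorem fwY (x : En n) : fderiv ℝ (ww u) x (YY A x) = yp A u x := by
  rw [fw, yp, real_inner_comm]

theorem fwA (S : Sol A lam α u) {x : En n} (hx : x ∈ OmegaExt n) :
    fderiv ℝ (ww u) x (A x (ee x)) = mu A x * yp A u x := by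
  rw [← S.fld.mu_Y hx, map_smul, fwY]; rfl

theorem dw2 (S : Sol A lam α u) {x : En n} (hx : x ∈ OmegaExt n) (v : En n) :
    fderiv ℝ (fun y => ww u y ^ 2) x v = 2 * ww u x * fderiv ℝ (ww u) x v := by
  rw [fderiv_fun_pow 2 (dA S.cw hx)]
  simp

theorem derH (S : Sol A lam α u) {ρ : ℝ} (hρ : 1 < ρ) :
    HasDerivAt (sav fun x => mu A x * ww u x ^ 2)
      (2 * sav (fun x => ww u x * (mu A x * yp A u x)) ρ + sav (fun x => bet A x * ww u x ^ 2) ρ) ρ := by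
  have hw2 : ContDiffOn ℝ 1 (fun x => ww u x ^ 2) (OmegaExt n) := S.cw.pow 2
  have hF : ContDiffOn ℝ 1 (fun x => ww u x ^ 2 • A x (ee x)) (OmegaExt n) := hw2.smul S.fld.cdAe
  refine (hd_congr (radial S.hn1 hF hρ) hρ fun x hx => ?_).congr_deriv ?_
  · simp only [inner_smul_left, conj_trivial]
    rw [mul_comm]; rfl
  · have c1 : ContinuousOn (fun x => 2 * (ww u x * (mu A x * yp A u x))) (OmegaExt n) :=
      continuousOn_const.mul (S.cwc.mul (S.cmu.mul S.cyp))
    have c2 : ContinuousOn (fun x => bet A x * ww u x ^ 2) (OmegaExt n) := S.fld.cbet.mul (S.cwc.pow 2)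
    rw [← sav_mul, ← sav_add c1 c2 hρ]
    refine sav_congr hρ fun x hx _ => ?_
    rw [dv_smul (dA hw2 hx) (dA S.fld.cdAe hx), S.fld.dvAe hx, S.dw2 hx, S.fwA hx, inner_smul_left]
    simp only [conj_trivial]
    rw [show ⟪A x (ee x), ee x⟫ = mu A x from rfl]
    ring

theorem derD (S : Sol A lam α u) {ρ : ℝ} (hρ : 1 < ρ) :
    HasDerivAt (sav fun x => ww u x * (mu A x * yp A u x))
      (sav (fun x => qq A u x - (1 - VV A x) * ww u x ^ 2) ρ) ρ := by
  have c1 : ContinuousOn (fun x => ww u x * (mu A x * yp A u x)) (OmegaExt n) := S.cwc.mul (S.cmu.mul S.cyp)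
  have c2 : ContinuousOn (fun x => qq A u x - (1 - VV A x) * ww u x ^ 2) (OmegaExt n) :=
    S.cq.sub ((continuousOn_const.sub S.fld.cVV).mul (S.cwc.pow 2))
  refine dbr S.hn1 c1 c2 (fun η hη => ?_) hρ
  have T := tst_mul hη.tst S.cw
  have key := S.weakw T
  have i1 : Integrable (fun x => fderiv ℝ (fun x => η ‖x‖ * ww u x) x ((kap x • A x) (gradient (ww u) x))) := by
    refine integrable_of_cont (U := OmegaExt n) ?_ T.cs.isCompact T.ts ?_
    · exact (T.cd.continuous_fderiv (by norm_num)).continuousOn.clm_apply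
        ((contDiffOn_kap.continuousOn.smul S.fld.cd.continuousOn).clm_apply S.cp)
    · intro x hx
      rw [(Tst.zero hx).2]; simp
  have i2 : Integrable (fun x => (kap x * (1 - VV A x) * ww u x) * (η ‖x‖ * ww u x)) := by
    refine integrable_of_cont (U := OmegaExt n) ?_ T.cs.isCompact T.ts ?_
    · exact ((contDiffOn_kap.continuousOn.mul (continuousOn_const.sub S.fld.cVV)).mul S.cwc).mul T.cd.continuous.continuousOn
    · intro x hx
      rw [(Tst.zero hx).1]; simp
  rw [← sub_eq_zero, ← integral_sub i1 i2] at key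
  rw [← key]
  refine integral_congr_ae (ae_of_all _ fun x => ?_)
  simp only
  by_cases hx : x ∈ OmegaExt n
  · rw [fderiv_fun_mul (hη.tst.diff x) (dA S.cw hx)]
    simp only [add_apply, smul_apply, map_smul, hη.fderiv hx, smul_eq_mul]
    rw [show gradient (ww u) x = pp u x from rfl, S.Ape hx, fw, real_inner_comm,
      show ⟪A x (pp u x), pp u x⟫ = qq A u x from rfl, show (‖x‖ ^ (n-1))⁻¹ = kap x from rfl]
    ring
  · have hx' : ‖x‖ ∉ tsupport η := fun h => hx (hη.sub h)
    rw [(Tst.zero fun h => hx (T.ts h)).2, (Rad.off hx').1, (Rad.off hx').2]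
    simp

theorem derKP (S : Sol A lam α u) {ρ : ℝ} (hρ : 1 < ρ) :
    HasDerivAt (sav fun x => qq A u x - 2 * (mu A x * yp A u x ^ 2))
      (sav (fun x => 2 * (1 - VV A x) * ww u x * yp A u x + FF A u x) ρ) ρ := by
  have c1 : ContinuousOn (fun x => qq A u x - 2 * (mu A x * yp A u x ^ 2)) (OmegaExt n) :=
    S.cq.sub (continuousOn_const.mul (S.cmu.mul (S.cyp.pow 2)))
  have c2 : ContinuousOn (fun x => 2 * (1 - VV A x) * ww u x * yp A u x + FF A u x) (OmegaExt n) :=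
    (((continuousOn_const.mul (continuousOn_const.sub S.fld.cVV)).mul S.cwc).mul S.cyp).add S.cFF
  refine dbr S.hn1 c1 c2 (fun η hη => ?_) hρ
  obtain ⟨a1, a2, a3⟩ := tst_smul hη.tst S.fld.smY.cd
  have key := S.rel.vec a1 a2 a3
  rw [← key]
  refine integral_congr_ae (ae_of_all _ fun x => ?_)
  simp only
  by_cases hx : x ∈ OmegaExt n
  · rw [dv_smul (hη.tst.diff x) (dA S.fld.smY.cd hx), hη.fderiv hx, S.fld.dvY hx,
      fderiv_fun_smul (hη.tst.diff x) (dA S.fld.smY.cd hx),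
      fderiv_fun_smul (dA contDiffOn_kap hx) (dA S.fld.cd hx)]
    simp only [add_apply, smul_apply, map_smul, map_add, smul_eq_mul, ContinuousLinearMap.smulRight_apply,
      hη.fderiv hx, fderiv_kap S.hn1 hx, inner_add_left, inner_smul_left, conj_trivial]
    rw [show gradient (ww u) x = pp u x from rfl, S.Ape hx, fwY, fw,
      show ⟪A x (pp u x), pp u x⟫ = qq A u x from rfl, show (‖x‖ ^ (n-1))⁻¹ = kap x from rfl,
      real_inner_comm (YY A x), S.fld.Y_ee hx, FF]
    ring
  · have hx' : ‖x‖ ∉ tsupport η := fun h => hx (hη.sub h)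
    have h0 : fderiv ℝ (fun x => η ‖x‖ • YY A x) x = 0 := by
      by_contra h
      exact hx (a3 (support_fderiv_subset ℝ h))
    rw [dv_off fun h => hx (a3 h), (Rad.off hx').1, (Rad.off hx').2, h0]
    simp

end Sol
end SphM

end PartD4

section PartD5
open MeasureTheory Metric Filter
open scoped Topology ContDiff RealInnerProductSpace

namespace SphM
variable {n : ℕ}

section defs3
variable (A : En n → En n →L[ℝ] En n) (u : En n → ℝ)
/-- The density of `G`. -/
noncomputable def gg (x : En n) : ℝ :=
  2 * (mu A x * yp A u x ^ 2) - qq A u x + ww u x ^ 2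
    - ((n:ℝ) - 1) * ((n:ℝ) - 3) / 4 * (mu A x * ww u x ^ 2 * (‖x‖ ^ 2)⁻¹)
/-- The density of the error in the derivative of `G`. -/
noncomputable def E3 (x : En n) : ℝ :=
  -(FF A u x + 2 * ‖x‖⁻¹ * (qq A u x - mu A x * yp A u x ^ 2))
    + ((n:ℝ) - 1) * ‖x‖⁻¹ * bet A x * ww u x * yp A u x + gam A x * ww u x ^ 2
    + 2 * (((n:ℝ) - 1) * ((n:ℝ) - 3) / 4) * (‖x‖ ^ 3)⁻¹ * mu A x * ww u x ^ 2
    - ((n:ℝ) - 1) * ((n:ℝ) - 3) / 4 * (‖x‖ ^ 2)⁻¹ * bet A x * ww u x ^ 2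
end defs3

namespace Sol
variable {A : En n → En n →L[ℝ] En n} {lam α : ℝ} {u : En n → ℝ}

theorem cin1 : ContinuousOn (fun x : En n => ‖x‖⁻¹) (OmegaExt n) := by simpa using cinv 1

theorem cE3 (S : Sol A lam α u) : ContinuousOn (E3 A u) (OmegaExt n) := by
  have h1 := S.cFF
  have h2 := S.cq
  have h3 := S.cmu
  have h4 := S.cyp
  have h5 := S.fld.cbet
  have h6 := S.fld.cgam
  have h7 := S.cwc
  have h8 := cin1 (n := n)
  have h9 := cinv (n := n) 2
  have h10 := cinv (n := n) 3
  unfold E3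
  fun_prop

theorem derG (S : Sol A lam α u) {ρ : ℝ} (hρ : 1 < ρ) :
    HasDerivAt (sav (gg A u))
      (sav (fun x => 2 * ‖x‖⁻¹ * (qq A u x - mu A x * yp A u x ^ 2) + E3 A u x) ρ) ρ := by
  have hw2 : ContDiffOn ℝ 1 (fun x => ww u x ^ 2) (OmegaExt n) := S.cw.pow 2
  set c : ℝ := ((n:ℝ) - 1) * ((n:ℝ) - 3) / 4 with hc
  have hi : ContDiffOn ℝ 1 (fun x : En n => -c * (‖x‖ ^ 2)⁻¹) (OmegaExt n) :=
    contDiffOn_const.mul ((contDiffOn_nrm.pow 2).inv fun x hx => pow_ne_zero 2 (om_pos hx).ne')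
  have hg : ContDiffOn ℝ 1 (fun x : En n => (-c * (‖x‖ ^ 2)⁻¹) * ww u x ^ 2) (OmegaExt n) := hi.mul hw2
  have hF1 : ContDiffOn ℝ 1 (fun x => ww u x ^ 2 • YY A x) (OmegaExt n) := hw2.smul S.fld.smY.cd
  have hF2 : ContDiffOn ℝ 1 (fun x => ((-c * (‖x‖ ^ 2)⁻¹) * ww u x ^ 2) • A x (ee x)) (OmegaExt n) :=
    hg.smul S.fld.cdAe
  have hF : ContDiffOn ℝ 1 (fun x => ww u x ^ 2 • YY A x + ((-c * (‖x‖ ^ 2)⁻¹) * ww u x ^ 2) • A x (ee x))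
    (OmegaExt n) := hF1.add hF2
  have d1 := radial S.hn1 hF hρ
  have d2 := S.derKP hρ
  have cF : ContinuousOn (fun x => ⟪ww u x ^ 2 • YY A x + ((-c * (‖x‖ ^ 2)⁻¹) * ww u x ^ 2) • A x (ee x), ee x⟫)
    (OmegaExt n) := hF.continuousOn.inner contDiffOn_ee.continuousOn
  have cF' : ContinuousOn (fun x => dv (fun x => ww u x ^ 2 • YY A x + ((-c * (‖x‖ ^ 2)⁻¹) * ww u x ^ 2) • A x (ee x)) x
      - ((n:ℝ) - 1) / ‖x‖ * ⟪ww u x ^ 2 • YY A x + ((-c * (‖x‖ ^ 2)⁻¹) * ww u x ^ 2) • A x (ee x), ee x⟫)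
      (OmegaExt n) := (dv_cont hF).sub ((continuousOn_const.div continuous_norm.continuousOn
        fun x hx => (om_pos hx).ne').mul cF)
  have c1 : ContinuousOn (fun x => qq A u x - 2 * (mu A x * yp A u x ^ 2)) (OmegaExt n) :=
    S.cq.sub (continuousOn_const.mul (S.cmu.mul (S.cyp.pow 2)))
  have c2 : ContinuousOn (fun x => 2 * (1 - VV A x) * ww u x * yp A u x + FF A u x) (OmegaExt n) :=
    (((continuousOn_const.mul (continuousOn_const.sub S.fld.cVV)).mul S.cwc).mul S.cyp).add S.cFF
  refine ((d1.sub d2).congr_deriv ?_).congr_of_eventuallyEq ?_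
  · rw [← sav_sub cF' c2 hρ]
    refine sav_congr hρ fun x hx _ => ?_
    have hp := om_pos hx
    rw [dv_add (dA hF1 hx) (dA hF2 hx), dv_smul (dA hw2 hx) (dA S.fld.smY.cd hx),
      dv_smul (dA hg hx) (dA S.fld.cdAe hx), S.fld.dvAe hx, S.fld.dvY hx, S.dw2 hx, fwY,
      fderiv_fun_mul (dA hi hx) (dA hw2 hx)]
    have hr : HasDerivAt (fun r : ℝ => -c * (r ^ 2)⁻¹) (2 * c * (‖x‖ ^ 3)⁻¹) ‖x‖ := by
      refine (((hasDerivAt_pow 2 ‖x‖).inv (by positivity)).const_mul (-c)).congr_deriv ?_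
      field_simp
      ring
    rw [(hasFDerivAt_rad hx hr).fderiv]
    simp only [add_apply, smul_apply, smul_eq_mul, S.dw2 hx, S.fwA hx, innerSL_apply_apply, inner_add_left,
      inner_smul_left, conj_trivial]
    rw [S.fld.Y_ee hx, real_inner_comm, show ⟪A x (ee x), ee x⟫ = mu A x from rfl, E3, VV, ← hc]
    field_simp
    ring
  · filter_upwards [isOpen_Ioi.mem_nhds hρ] with t ht
    simp only [Pi.sub_apply]
    rw [← sav_sub cF c1 ht]
    refine sav_congr ht fun x hx _ => ?_
    simp only [inner_add_left, inner_smul_left, conj_trivial]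
    rw [S.fld.Y_ee hx, show ⟪A x (ee x), ee x⟫ = mu A x from rfl, gg, ← hc]
    ring

end Sol
end SphM

end PartD5

section PartD6
open MeasureTheory Metric Filter
open scoped Topology ContDiff RealInnerProductSpace

namespace SphM
variable {n : ℕ}

namespace Sol
variable {A : En n → En n →L[ℝ] En n} {lam α : ℝ} {u : En n → ℝ}

theorem T0_eq (S : Sol A lam α u) {x : En n} (hx : x ∈ OmegaExt n) :
    FF A u x + 2 * ‖x‖⁻¹ * (qq A u x - mu A x * yp A u x ^ 2)
    = gam A x * qq A u x + ⟪(fderiv ℝ A x (YY A x)) (pp u x), pp u x⟫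
      - 2 * ⟪pp u x, fderiv ℝ (bb A) x (A x (pp u x))⟫
      - 2 * (‖x‖⁻¹ * (⟪ee x, A x (pp u x)⟫ * ⟪bb A x, pp u x⟫)) := by
  have h1 : fderiv ℝ (YY A) x (A x (pp u x)) = fderiv ℝ ee x (A x (pp u x))
      + fderiv ℝ (bb A) x (A x (pp u x)) := by
    have : YY A = fun y => ee y + bb A y := rfl
    rw [this, fderiv_fun_add (dA contDiffOn_ee hx) (dA S.fld.smb.cd hx)]
    rfl
  have h2 : mu A x * yp A u x ^ 2 = ⟪ee x, A x (pp u x)⟫ * (⟪ee x, pp u x⟫ + ⟪bb A x, pp u x⟫) := by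
    rw [S.Ape hx, ← inner_add_left, show ee x + bb A x = YY A x from rfl, yp]
    ring
  have h3 : ⟪pp u x, A x (pp u x)⟫ = qq A u x := by rw [real_inner_comm]; rfl
  have h4 : ⟪pp u x, ee x⟫ = ⟪ee x, pp u x⟫ := real_inner_comm _ _
  rw [FF, h1, h2, fderiv_ee hx, inner_add_right, inner_smul_right, inner_sub_right, inner_smul_right, h3, h4]
  ring

theorem q_ge (S : Sol A lam α u) {x : En n} (hx : x ∈ OmegaExt n) : ‖pp u x‖ ^ 2 ≤ lam⁻¹ * qq A u x := by
  have := S.fld.ell x hx (pp u x)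
  have h0 := S.fld.lam0
  rw [inv_mul_eq_div, le_div_iff₀ h0]
  unfold qq
  linarith

theorem q_nonneg (S : Sol A lam α u) {x : En n} (hx : x ∈ OmegaExt n) : 0 ≤ qq A u x := by
  have := S.fld.ell x hx (pp u x)
  have h0 := S.fld.lam0
  exact le_trans (by positivity) this

set_option maxHeartbeats 2000000 in
theorem E3_bound (S : Sol A lam α u) : ∃ M, 0 ≤ M ∧ ∀ x ∈ OmegaExt n,
    |E3 A u x| ≤ M * ‖x‖ ^ (-1 - α) * (qq A u x + ww u x ^ 2) := by
  obtain ⟨Cβ, hβ0, hβ⟩ := S.fld.bet_bound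
  obtain ⟨Cg, hg0, hg⟩ := S.fld.gam_bound
  obtain ⟨Ca, ha0, -, ha⟩ := S.fld.sm.bds
  obtain ⟨CA, hA0, hA, -⟩ := S.fld.smA.bds
  obtain ⟨Cb, hb0, hb, hb'⟩ := S.fld.smb.bds
  obtain ⟨Cy, hy0, hy, -⟩ := S.fld.smY.bds
  set c : ℝ := ((n:ℝ) - 1) * ((n:ℝ) - 3) / 4 with hc
  have hl := S.fld.lam0
  have hα := S.fld.α0
  have hα1 := S.fld.α1
  refine ⟨Cg + (Ca * Cy + 4 * (CA * Cb)) * lam⁻¹ + |(n:ℝ) - 1| * Cβ * (1 + Cy ^ 2 * lam⁻¹)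
    + (2 * |c| * lam⁻¹ + |c| * Cβ), by positivity, fun x hx => ?_⟩
  have hr := om_pos hx
  have hr1 : 1 ≤ ‖x‖ := le_of_lt hx
  set t := ‖x‖ ^ (-1 - α) with ht
  have t0 : 0 < t := Real.rpow_pos_of_pos hr _
  set q := qq A u x with hq
  have q0 : 0 ≤ q := S.q_nonneg hx
  have hpq := S.q_ge hx
  set N := ‖pp u x‖ with hN
  have N0 : 0 ≤ N := norm_nonneg _
  have e1 : ‖x‖⁻¹ * ‖x‖ ^ (-α) = t := by
    rw [ht, ← Real.rpow_neg_one, ← Real.rpow_add hr]; congr 1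
  have e2 : (‖x‖ ^ 3)⁻¹ ≤ t := by
    rw [ht, ← Real.rpow_natCast, ← Real.rpow_neg hr.le]
    apply Real.rpow_le_rpow_of_exponent_le hr1
    push_cast; linarith
  have e3 : ‖x‖⁻¹ ≤ 1 := inv_le_one_of_one_le₀ hr1
  have e4 : (‖x‖ ^ 2)⁻¹ ≤ 1 := inv_le_one_of_one_le₀ (one_le_pow₀ hr1)
  have i0 : 0 < ‖x‖⁻¹ := inv_pos.mpr hr
  have y1 : ‖YY A x‖ ≤ Cy := by simpa using hy x hx
  have A1 : ‖A x‖ ≤ CA := by simpa using hA x hx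
  have a1 : ‖fderiv ℝ A x‖ ≤ Ca * t := by
    have := ha x hx
    rwa [fderiv_sub_const] at this
  have Ap : ‖A x (pp u x)‖ ≤ CA * N := (A x).le_of_opNorm_le A1 _
  have b1 := hb x hx
  have b2 := hb' x hx
  have y2 : |yp A u x| ≤ Cy * N := by
    refine (abs_real_inner_le_norm _ _).trans ?_
    gcongr
  have y3 : yp A u x ^ 2 ≤ Cy ^ 2 * lam⁻¹ * q := by
    calc yp A u x ^ 2 = |yp A u x| ^ 2 := (sq_abs _).symm
      _ ≤ (Cy * N) ^ 2 := by gcongr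
      _ = Cy ^ 2 * N ^ 2 := by ring
      _ ≤ Cy ^ 2 * (lam⁻¹ * q) := by gcongr
      _ = _ := by ring
  have k1 : |gam A x * q| ≤ Cg * t * q := by
    rw [abs_mul, abs_of_nonneg q0]
    exact mul_le_mul_of_nonneg_right (hg x hx) q0
  have k2 : |⟪(fderiv ℝ A x (YY A x)) (pp u x), pp u x⟫| ≤ Ca * Cy * t * (lam⁻¹ * q) := by
    refine (abs_real_inner_le_norm _ _).trans ?_
    have z1 : ‖fderiv ℝ A x (YY A x)‖ ≤ Ca * t * Cy :=
      ((fderiv ℝ A x).le_opNorm _).trans (by gcongr)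
    have z2 : ‖(fderiv ℝ A x (YY A x)) (pp u x)‖ ≤ Ca * t * Cy * N :=
      (fderiv ℝ A x (YY A x)).le_of_opNorm_le z1 _
    calc ‖(fderiv ℝ A x (YY A x)) (pp u x)‖ * ‖pp u x‖ ≤ Ca * t * Cy * N * N := by gcongr
      _ = Ca * Cy * t * N ^ 2 := by ring
      _ ≤ _ := by gcongr
  have k3 : |⟪pp u x, fderiv ℝ (bb A) x (A x (pp u x))⟫| ≤ CA * Cb * t * (lam⁻¹ * q) := by
    refine (abs_real_inner_le_norm _ _).trans ?_
    have z2 : ‖fderiv ℝ (bb A) x (A x (pp u x))‖ ≤ Cb * t * (CA * N) :=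
      ((fderiv ℝ (bb A) x).le_opNorm _).trans (by gcongr)
    calc ‖pp u x‖ * ‖fderiv ℝ (bb A) x (A x (pp u x))‖ ≤ N * (Cb * t * (CA * N)) := by gcongr
      _ = CA * Cb * t * N ^ 2 := by ring
      _ ≤ _ := by gcongr
  have k4 : |‖x‖⁻¹ * (⟪ee x, A x (pp u x)⟫ * ⟪bb A x, pp u x⟫)| ≤ CA * Cb * t * (lam⁻¹ * q) := by
    rw [abs_mul, abs_mul, abs_of_pos i0]
    have z1 : |⟪ee x, A x (pp u x)⟫| ≤ CA * N := by
      refine (abs_real_inner_le_norm _ _).trans ?_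
      rw [ee_norm hx, one_mul]; exact Ap
    have z2 : |⟪bb A x, pp u x⟫| ≤ Cb * ‖x‖ ^ (-α) * N := by
      refine (abs_real_inner_le_norm _ _).trans ?_
      gcongr
    calc ‖x‖⁻¹ * (|⟪ee x, A x (pp u x)⟫| * |⟪bb A x, pp u x⟫|)
        ≤ ‖x‖⁻¹ * ((CA * N) * (Cb * ‖x‖ ^ (-α) * N)) := by gcongr
      _ = CA * Cb * (‖x‖⁻¹ * ‖x‖ ^ (-α)) * N ^ 2 := by ring
      _ = CA * Cb * t * N ^ 2 := by rw [e1]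
      _ ≤ _ := by gcongr
  have β1 := hβ x hx
  have g1 := hg x hx
  have k5 : |((n:ℝ) - 1) * ‖x‖⁻¹ * bet A x * ww u x * yp A u x|
      ≤ |(n:ℝ) - 1| * Cβ * t * (ww u x ^ 2 + Cy ^ 2 * lam⁻¹ * q) := by
    have z : |ww u x * yp A u x| ≤ ww u x ^ 2 + Cy ^ 2 * lam⁻¹ * q := by
      have g := two_mul_le_add_sq |ww u x| |yp A u x|
      rw [sq_abs, sq_abs, mul_assoc, ← abs_mul] at g
      linarith [abs_nonneg (ww u x * yp A u x)]
    calc |((n:ℝ) - 1) * ‖x‖⁻¹ * bet A x * ww u x * yp A u x|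
        = |(n:ℝ) - 1| * ‖x‖⁻¹ * |bet A x| * |ww u x * yp A u x| := by
          simp only [abs_mul, abs_of_pos i0]; ring
      _ ≤ |(n:ℝ) - 1| * 1 * (Cβ * t) * (ww u x ^ 2 + Cy ^ 2 * lam⁻¹ * q) := by gcongr
      _ = _ := by ring
  have k6 : |gam A x * ww u x ^ 2| ≤ Cg * t * ww u x ^ 2 := by
    rw [abs_mul, abs_of_nonneg (sq_nonneg (ww u x))]; gcongr
  have m0 := S.fld.mu_pos hx
  have m1 := S.fld.mu_le hx
  have k7 : |2 * c * (‖x‖ ^ 3)⁻¹ * mu A x * ww u x ^ 2| ≤ 2 * |c| * lam⁻¹ * t * ww u x ^ 2 := by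
    calc |2 * c * (‖x‖ ^ 3)⁻¹ * mu A x * ww u x ^ 2|
        = 2 * |c| * (‖x‖ ^ 3)⁻¹ * mu A x * ww u x ^ 2 := by
          simp only [abs_mul, abs_of_pos m0, abs_of_nonneg (sq_nonneg (ww u x)),
            abs_of_pos (inv_pos.mpr (pow_pos hr 3)), abs_two]
      _ ≤ 2 * |c| * t * lam⁻¹ * ww u x ^ 2 := by gcongr
      _ = _ := by ring
  have k8 : |c * (‖x‖ ^ 2)⁻¹ * bet A x * ww u x ^ 2| ≤ |c| * Cβ * t * ww u x ^ 2 := by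
    calc |c * (‖x‖ ^ 2)⁻¹ * bet A x * ww u x ^ 2|
        = |c| * (‖x‖ ^ 2)⁻¹ * |bet A x| * ww u x ^ 2 := by
          simp only [abs_mul, abs_of_nonneg (sq_nonneg (ww u x)),
            abs_of_pos (inv_pos.mpr (pow_pos hr 2))]
      _ ≤ |c| * 1 * (Cβ * t) * ww u x ^ 2 := by gcongr
      _ = _ := by ring
  have fin : (Cg + (Ca * Cy + 4 * (CA * Cb)) * lam⁻¹ + |(n:ℝ) - 1| * Cβ * (1 + Cy ^ 2 * lam⁻¹)
      + (2 * |c| * lam⁻¹ + |c| * Cβ)) * t * (q + ww u x ^ 2)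
      = (Cg * t * q + Ca * Cy * t * (lam⁻¹ * q) + 2 * (CA * Cb * t * (lam⁻¹ * q)) + 2 * (CA * Cb * t * (lam⁻¹ * q)))
      + |(n:ℝ) - 1| * Cβ * t * (ww u x ^ 2 + Cy ^ 2 * lam⁻¹ * q) + Cg * t * ww u x ^ 2
      + 2 * |c| * lam⁻¹ * t * ww u x ^ 2 + |c| * Cβ * t * ww u x ^ 2
      + ((Ca * Cy + 4 * (CA * Cb)) * lam⁻¹ * t * ww u x ^ 2 + |(n:ℝ) - 1| * Cβ * t * (q + Cy ^ 2 * lam⁻¹ * ww u x ^ 2)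
        + (2 * |c| * lam⁻¹ + |c| * Cβ) * t * q) := by ring
  rw [fin]
  have rest : 0 ≤ (Ca * Cy + 4 * (CA * Cb)) * lam⁻¹ * t * ww u x ^ 2 + |(n:ℝ) - 1| * Cβ * t * (q + Cy ^ 2 * lam⁻¹ * ww u x ^ 2)
        + (2 * |c| * lam⁻¹ + |c| * Cβ) * t * q := by positivity
  rw [E3, S.T0_eq hx, ← hc]
  rw [abs_le] at *
  constructor <;> linarith [k1.1, k1.2, k2.1, k2.2, k3.1, k3.2, k4.1, k4.2, k5.1, k5.2, k6.1, k6.2, k7.1, k7.2, k8.1, k8.2]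

theorem mu_yp_le (S : Sol A lam α u) {x : En n} (hx : x ∈ OmegaExt n) : mu A x * yp A u x ^ 2 ≤ qq A u x := by
  have h := S.fld.ell x hx (pp u x - yp A u x • ee x)
  have h0 := S.fld.lam0
  have h1 : 0 ≤ ⟪A x (pp u x - yp A u x • ee x), pp u x - yp A u x • ee x⟫ := le_trans (by positivity) h
  have h2 : ⟪A x (ee x), pp u x⟫ = mu A x * yp A u x := by rw [S.fld.sym x hx, S.Ape hx]
  have h3 : ⟪A x (pp u x), ee x⟫ = mu A x * yp A u x := by rw [real_inner_comm, S.Ape hx]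
  simp only [map_sub, map_smul, inner_sub_left, inner_sub_right, inner_smul_left, inner_smul_right,
    conj_trivial] at h1
  rw [h2, h3, show ⟪A x (ee x), ee x⟫ = mu A x from rfl,
    show ⟪A x (pp u x), pp u x⟫ = qq A u x from rfl] at h1
  nlinarith

set_option maxHeartbeats 2000000 in
theorem sys (S : Sol A lam α u) : ∃ M c, Sys (sav fun x => mu A x * ww u x ^ 2)
    (sav fun x => ww u x * (mu A x * yp A u x)) (sav fun x => mu A x * yp A u x ^ 2)
    (sav (qq A u)) (sav fun x => ww u x ^ 2) (sav (gg A u))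
    (sav fun x => bet A x * ww u x ^ 2) (sav fun x => ((n:ℝ) - 1) / 2 * ‖x‖⁻¹ * bet A x * ww u x ^ 2)
    (sav (E3 A u)) lam α M c := by
  obtain ⟨M3, hM3, b3⟩ := S.E3_bound
  obtain ⟨Cβ, hβ0, hβ⟩ := S.fld.bet_bound
  set c : ℝ := ((n:ℝ) - 1) * ((n:ℝ) - 3) / 4 with hc
  have h2 := S.cq
  have h3 := S.cmu
  have h4 := S.cyp
  have h5 := S.fld.cbet
  have h7 := S.cwc
  have h8 := cin1 (n := n)
  have h9 := cinv (n := n) 2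
  have hE := S.cE3
  have cV := S.fld.cVV
  have hn2 : (2:ℝ) ≤ n := by exact_mod_cast S.hn
  have cH : ContinuousOn (fun x => mu A x * ww u x ^ 2) (OmegaExt n) := by fun_prop
  have cP : ContinuousOn (fun x => mu A x * yp A u x ^ 2) (OmegaExt n) := by fun_prop
  have cD : ContinuousOn (fun x => ww u x * (mu A x * yp A u x)) (OmegaExt n) := by fun_prop
  have cW : ContinuousOn (fun x => ww u x ^ 2) (OmegaExt n) := by fun_prop
  have ce1 : ContinuousOn (fun x => bet A x * ww u x ^ 2) (OmegaExt n) := by fun_prop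
  have ce2 : ContinuousOn (fun x => ((n:ℝ) - 1) / 2 * ‖x‖⁻¹ * bet A x * ww u x ^ 2) (OmegaExt n) := by fun_prop
  have Gdef : ∀ ρ > 1, sav (gg A u) ρ = 2 * sav (fun x => mu A x * yp A u x ^ 2) ρ - sav (qq A u) ρ
      + sav (fun x => ww u x ^ 2) ρ - c / ρ ^ 2 * sav (fun x => mu A x * ww u x ^ 2) ρ := by
    intro ρ hρ
    rw [← sav_mul, ← sav_mul, ← sav_sub (by fun_prop) h2 hρ, ← sav_add (by fun_prop) cW hρ,
      ← sav_sub (by fun_prop) (by fun_prop) hρ]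
    refine sav_congr hρ fun x hx hr => ?_
    rw [gg, ← hc, hr]
    ring
  refine ⟨M3 + n * Cβ + |c| + 1, c, ?_⟩
  set M := M3 + n * Cβ + |c| + 1 with hM
  have c0 := abs_nonneg c
  have nc : (0:ℝ) ≤ n * Cβ := by positivity
  have M1 : M3 ≤ M := by linarith
  have M2 : n * Cβ ≤ M := by linarith
  have M2' : Cβ ≤ M := by nlinarith
  have eb : ∀ ρ > 1, ∀ x ∈ OmegaExt n, ‖x‖ = ρ → |bet A x * ww u x ^ 2| ≤ M * ρ ^ (-1 - α) * ww u x ^ 2 := by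
    intro ρ hρ x hx hr
    have z := hβ x hx
    have hρ0 : 0 < ρ := by linarith
    rw [abs_mul, abs_of_nonneg (sq_nonneg (ww u x)), ← hr]
    have : Cβ * ‖x‖ ^ (-1 - α) ≤ M * ‖x‖ ^ (-1 - α) := by gcongr
    exact mul_le_mul_of_nonneg_right (z.trans this) (sq_nonneg _)
  refine {
    lam0 := S.fld.lam0, lam1 := S.fld.lam1, α0 := S.fld.α0, α1 := S.fld.α1, M0 := (by linarith),
    hc := (by linarith), hH := fun ρ hρ => S.derH hρ, hD := ?_, hG := ?_, hGdef := Gdef, he1 := ?_, he2 := ?_,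
    he3 := ?_, cs := ?_, P0 := ?_, PK := ?_, W0 := ?_, HW := ?_, WH := ?_ }
  · intro ρ hρ
    refine (S.derD hρ).congr_deriv ?_
    rw [Gdef ρ hρ]
    have : 2 * sav (fun x => mu A x * yp A u x ^ 2) ρ - (2 * sav (fun x => mu A x * yp A u x ^ 2) ρ - sav (qq A u) ρ
      + sav (fun x => ww u x ^ 2) ρ - c / ρ ^ 2 * sav (fun x => mu A x * ww u x ^ 2) ρ)
      + sav (fun x => ((n:ℝ) - 1) / 2 * ‖x‖⁻¹ * bet A x * ww u x ^ 2) ρ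
      = sav (qq A u) ρ - sav (fun x => ww u x ^ 2) ρ + c / ρ ^ 2 * sav (fun x => mu A x * ww u x ^ 2) ρ
      + sav (fun x => ((n:ℝ) - 1) / 2 * ‖x‖⁻¹ * bet A x * ww u x ^ 2) ρ := by ring
    rw [this, ← sav_mul, ← sav_sub h2 cW hρ, ← sav_add (by fun_prop) (by fun_prop) hρ,
      ← sav_add (by fun_prop) ce2 hρ]
    refine sav_congr hρ fun x hx hr => ?_
    rw [VV, ← hc, hr]
    ring
  · intro ρ hρ
    refine (S.derG hρ).congr_deriv ?_
    rw [← sav_sub h2 cP hρ, ← sav_mul, ← sav_add (by fun_prop) hE hρ]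
    refine sav_congr hρ fun x hx hr => ?_
    rw [hr]
    ring
  · intro ρ hρ
    rw [← sav_mul]
    exact sav_abs ce1 (by fun_prop) hρ (eb ρ hρ)
  · intro ρ hρ
    rw [← sav_mul]
    refine sav_abs ce2 (by fun_prop) hρ fun x hx hr => ?_
    have z := hβ x hx
    have hx0 := om_pos hx
    have hi : ‖x‖⁻¹ ≤ 1 := inv_le_one_of_one_le₀ (le_of_lt hx)
    have hi0 : 0 < ‖x‖⁻¹ := inv_pos.mpr hx0
    have hn0 : 0 ≤ ((n:ℝ) - 1) / 2 := by linarith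
    calc |((n:ℝ) - 1) / 2 * ‖x‖⁻¹ * bet A x * ww u x ^ 2|
        = ((n:ℝ) - 1) / 2 * ‖x‖⁻¹ * |bet A x| * ww u x ^ 2 := by
          rw [abs_mul, abs_mul, abs_mul, abs_of_nonneg hn0, abs_of_pos hi0, abs_of_nonneg (sq_nonneg (ww u x))]
      _ ≤ n * 1 * (Cβ * ‖x‖ ^ (-1 - α)) * ww u x ^ 2 := by gcongr; linarith
      _ = n * Cβ * ρ ^ (-1 - α) * ww u x ^ 2 := by rw [hr]; ring
      _ ≤ M * ρ ^ (-1 - α) * ww u x ^ 2 := by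
          have : 0 < ρ := by linarith
          gcongr
  · intro ρ hρ
    rw [← sav_add h2 cW hρ, ← sav_mul]
    refine sav_abs hE (by fun_prop) hρ fun x hx hr => ?_
    refine (b3 x hx).trans ?_
    rw [hr]
    have : 0 < ρ := by linarith
    have := S.q_nonneg hx
    gcongr
  · intro ρ hρ
    have h : ∀ t : ℝ, 0 ≤ sav (fun x => mu A x * yp A u x ^ 2) ρ * (t * t) + (2 * sav (fun x => ww u x * (mu A x * yp A u x)) ρ) * t
        + sav (fun x => mu A x * ww u x ^ 2) ρ := by
      intro t
      have e : sav (fun x => mu A x * yp A u x ^ 2) ρ * (t * t) + (2 * sav (fun x => ww u x * (mu A x * yp A u x)) ρ) * t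
        + sav (fun x => mu A x * ww u x ^ 2) ρ = sav (fun x => mu A x * (t * yp A u x + ww u x) ^ 2) ρ := by
        have e' : sav (fun x => mu A x * yp A u x ^ 2) ρ * (t * t) + (2 * sav (fun x => ww u x * (mu A x * yp A u x)) ρ) * t
          + sav (fun x => mu A x * ww u x ^ 2) ρ = (t * t) * sav (fun x => mu A x * yp A u x ^ 2) ρ + (2 * t) * sav (fun x => ww u x * (mu A x * yp A u x)) ρ
          + sav (fun x => mu A x * ww u x ^ 2) ρ := by ring
        rw [e', ← sav_mul, ← sav_mul, ← sav_add (by fun_prop) (by fun_prop) hρ, ← sav_add (by fun_prop) cH hρ]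
        refine sav_congr hρ fun x hx hr => ?_
        ring
      rw [e]
      exact sav_nonneg hρ fun x hx => mul_nonneg (S.fld.mu_pos hx).le (sq_nonneg _)
    have := discrim_le_zero h
    rw [discrim] at this
    nlinarith
  · exact fun ρ hρ => sav_nonneg hρ fun x hx => mul_nonneg (S.fld.mu_pos hx).le (sq_nonneg _)
  · exact fun ρ hρ => sav_mono cP h2 hρ fun x hx _ => S.mu_yp_le hx
  · exact fun ρ hρ => sav_nonneg hρ fun x hx => sq_nonneg _
  · intro ρ hρ
    rw [← sav_mul]
    refine sav_mono (by fun_prop) cH hρ fun x hx _ => ?_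
    exact mul_le_mul_of_nonneg_right (S.fld.mu_ge hx) (sq_nonneg _)
  · intro ρ hρ
    rw [← sav_mul]
    refine sav_mono (by fun_prop) cW hρ fun x hx _ => ?_
    have := S.fld.mu_le hx
    have h0 := S.fld.lam0
    calc lam * (mu A x * ww u x ^ 2) ≤ lam * (lam⁻¹ * ww u x ^ 2) := by gcongr
      _ = _ := by field_simp

theorem H_pos (S : Sol A lam α u) {x0 : En n} (hx0 : x0 ∈ OmegaExt n) (hu0 : u x0 ≠ 0) :
    ∃ ρ > 1, sav (fun x => mu A x * ww u x ^ 2) ρ ≠ 0 := by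
  refine ⟨‖x0‖, hx0, ?_⟩
  have hp := om_pos hx0
  have hn0 : n ≠ 0 := by have := S.hn; omega
  have : Nontrivial (En n) := by
    have : Nonempty (Fin n) := ⟨⟨0, by omega⟩⟩
    infer_instance
  have cH : ContinuousOn (fun x => mu A x * ww u x ^ 2) (OmegaExt n) := S.cmu.mul (S.cwc.pow 2)
  apply ne_of_gt
  unfold sav
  have cc := sav_cont1 cH hx0
  refine cc.integral_pos_of_hasCompactSupport_nonneg_nonzero (HasCompactSupport.of_compactSpace _) ?_
    (x := ⟨ee x0, by simp [ee_norm hx0]⟩) ?_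
  · intro θ
    exact mul_nonneg (S.fld.mu_pos (sav_smul_mem hx0 θ)).le (sq_nonneg _)
  · have : ‖x0‖ • ee x0 = x0 := by rw [ee, smul_inv_smul₀ hp.ne']
    simp only [this]
    refine mul_ne_zero (S.fld.mu_pos hx0).ne' (pow_ne_zero _ ?_)
    rw [ww]
    exact mul_ne_zero (Real.rpow_pos_of_pos hp _).ne' hu0

theorem main (S : Sol A lam α u) {x0 : En n} (hx0 : x0 ∈ OmegaExt n) (hu0 : u x0 ≠ 0) {δ : ℝ}
    (h0 : 0 < δ) (h1 : δ < 1) : ∃ C₂ > 0, ∃ R₂ > 1, ∀ ρ ≥ R₂, C₂ ≤ ρ ^ δ * sav (gg A u) ρ := by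
  obtain ⟨M, c, hS⟩ := S.sys
  exact hS.main h0 h1 (S.H_pos hx0 hu0)

end Sol
end SphM

end PartD6

section PartD7
open MeasureTheory Metric Filter
open scoped Topology ContDiff RealInnerProductSpace

namespace SphM
variable {n : ℕ}

/-- Elementary operators. -/
noncomputable def UU (i j : Fin n) : En n →L[ℝ] En n :=
  (EuclideanSpace.proj j : En n →L[ℝ] ℝ).smulRight (EuclideanSpace.single i (1:ℝ))

/-- The operator field of a matrix field. -/
noncomputable def AA (A : En n → Matrix (Fin n) (Fin n) ℝ) (x : En n) : En n →L[ℝ] En n :=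
  ∑ i, ∑ j, A x i j • UU i j

theorem AA_apply (A : En n → Matrix (Fin n) (Fin n) ℝ) (x v : En n) (k : Fin n) :
    AA A x v k = (A x).mulVec (fun j => v j) k := by
  simp [AA, UU, sum_apply, Matrix.mulVec, dotProduct, Finset.sum_ite_eq, Pi.single_apply]

theorem AA_inner (A : En n → Matrix (Fin n) (Fin n) ℝ) (x v y : En n) :
    ⟪AA A x v, y⟫ = quadForm (A x) v y := by
  rw [quadForm, PiLp.inner_apply]
  refine Finset.sum_congr rfl fun i _ => ?_
  rw [AA_apply]
  simp [mul_comm]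

theorem AA_sub (A : En n → Matrix (Fin n) (Fin n) ℝ) (x : En n) :
    AA A x - ContinuousLinearMap.id ℝ (En n) = ∑ i, ∑ j, (A x - 1) i j • UU i j := by
  have e : ∑ i, ∑ j, (A x - 1) i j • UU i j = AA (fun y => A y - 1) x := rfl
  rw [e]
  ext v k
  rw [AA_apply, ContinuousLinearMap.sub_apply, PiLp.sub_apply, AA_apply, Matrix.sub_mulVec,
    Matrix.one_mulVec]
  rfl

theorem Sm.sum {F : Type*} [NormedAddCommGroup F] [NormedSpace ℝ F] {ι : Type*} (t : Finset ι) {s : ℝ}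
    {f : ι → En n → F} (h : ∀ i ∈ t, Sm s (f i)) : Sm s (fun x => ∑ i ∈ t, f i x) := by
  classical
  induction t using Finset.induction_on with
  | empty =>
    simp only [Finset.sum_empty]
    refine ⟨contDiffOn_const, 0, le_rfl, fun x _ => by simp⟩
  | insert a t ha ih =>
    simp only [Finset.sum_insert ha]
    exact (h a (by simp)).add (ih fun i hi => h i (by simp [hi]))

theorem norm_grad (f : En n → ℝ) (x : En n) : ‖gradient f x‖ = ‖fderiv ℝ f x‖ := by
  rw [gradient]; simp

theorem fld_of {A : En n → Matrix (Fin n) (Fin n) ℝ} {lam α C : ℝ} (h0 : 0 < lam) (h1 : lam < 1)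
    (hα : 0 < α) (hC : 0 < C) (h : EllipticDecay A lam α C) : Fld (AA A) lam (min α 1) := by
  obtain ⟨hs, hcd, hell, hdec⟩ := h
  refine ⟨h0, h1, lt_min hα one_pos, min_le_right _ _, ?_, ?_, ?_, ?_⟩
  · intro x hx a b
    rw [real_inner_comm (AA A x b), AA_inner, AA_inner]
    unfold quadForm
    have e1 : ∀ v w : En n, ∑ i, (A x).mulVec (fun j => v j) i * w i = ∑ i, ∑ j, A x i j * v j * w i := by
      intro v w
      simp [Matrix.mulVec, dotProduct, Finset.sum_mul]
    rw [e1, e1, Finset.sum_comm]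
    refine Finset.sum_congr rfl fun i _ => Finset.sum_congr rfl fun j _ => ?_
    rw [(hs x hx).apply]
    ring
  · intro x hx a
    rw [AA_inner]; exact (hell x hx a).1
  · intro x hx a
    rw [AA_inner]; exact (hell x hx a).2
  · simp only [AA_sub]
    refine Sm.sum _ fun i _ => Sm.sum _ fun j _ => ?_
    have k : Sm α (fun x => (A x - 1) i j) := by
      refine ⟨?_, C, hC.le, fun x hx => ?_⟩
      · simp only [Matrix.sub_apply]
        exact (hcd i j).sub contDiffOn_const
      · have := hdec x hx i j
        have hp := om_pos hx
        have p1 : 0 ≤ ‖x‖ * ‖gradient (fun y => (A y - 1) i j) x‖ := by positivity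
        have p2 := abs_nonneg ((A x - 1) i j)
        refine ⟨by rw [Real.norm_eq_abs]; linarith, ?_⟩
        rw [le_div_iff₀ hp, ← norm_grad]
        linarith
    have := (k.mono (min_le_left α 1)).smul (Sm.const (n := n) (UU i j))
    simpa using this

theorem sol_of {A : En n → Matrix (Fin n) (Fin n) ℝ} {lam α C : ℝ} (hn : 2 ≤ n) (h0 : 0 < lam) (h1 : lam < 1)
    (hα : 0 < α) (hC : 0 < C) (h : EllipticDecay A lam α C) {u : En n → ℝ} (hu : WeakSol A u) :
    Sol (AA A) lam (min α 1) u := by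
  have F := fld_of h0 h1 hα hC h
  refine ⟨hn, F, hu.1, fun φ hφ => ?_⟩
  refine extend_test isOpen_Om (F.cd.continuousOn.clm_apply (grad_cont isOpen_Om hu.1)) hu.1.continuousOn
    (fun φ h1 h2 h3 => ?_) hφ
  have key := hu.2 φ h1 h2 h3
  rw [setIntegral_eq_integral_of_forall_compl_eq_zero, setIntegral_eq_integral_of_forall_compl_eq_zero] at key
  · rw [← key]
    refine integral_congr_ae (ae_of_all _ fun x => ?_)
    simp only
    rw [fderiv_grad, real_inner_comm, AA_inner, quadForm]
  · intro x hx
    rw [(Tst.zero fun h => hx (h3 h)).1, mul_zero]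
  · intro x hx
    have : gradient φ x = 0 := by
      rw [← norm_eq_zero, norm_grad, (Tst.zero fun h => hx (h3 h)).2, norm_zero]
    simp [this]

theorem muA_eq (A : En n → Matrix (Fin n) (Fin n) ℝ) (x : En n) : muA A x = mu (AA A) x := by
  rw [muA, mu, ee, map_smul, inner_smul_left, inner_smul_right, AA_inner]
  simp only [conj_trivial]
  rw [div_eq_mul_inv]
  ring

theorem Zd_eq {A : En n → Matrix (Fin n) (Fin n) ℝ} {lam α : ℝ} {u : En n → ℝ} (S : Sol (AA A) lam α u)
    {x : En n} (hx : x ∈ OmegaExt n) : Zd A (ww u) x / ‖x‖ = yp (AA A) u x := by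
  have hp := om_pos hx
  have h1 : Zd A (ww u) x = ⟪Zvec A x, gradient (ww u) x⟫ := by
    rw [Zd, PiLp.inner_apply]
    refine Finset.sum_congr rfl fun i _ => ?_
    simp [mul_comm]
  have h2 : Zvec A x = ‖x‖ • YY (AA A) x := by
    have h3 : (WithLp.toLp 2 ((A x).mulVec (fun j => x j)) : En n) = AA A x x := by
      ext k
      rw [AA_apply]
    have h4 : AA A x x = ‖x‖ • AA A x (ee x) := by
      rw [← map_smul, ee, smul_inv_smul₀ hp.ne']
    rw [Zvec, h3, h4, ← S.fld.mu_Y hx, muA_eq, smul_comm ‖x‖, inv_smul_smul₀ (S.fld.mu_pos hx).ne']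
  rw [h1, h2, inner_smul_left]
  simp only [conj_trivial]
  rw [mul_div_assoc, mul_comm, div_mul_cancel₀ _ hp.ne']
  rfl

theorem Gfun_eq {A : En n → Matrix (Fin n) (Fin n) ℝ} {lam α : ℝ} {u : En n → ℝ} (S : Sol (AA A) lam α u) :
    ∃ k, 0 < k ∧ ∀ ρ > 1, Gfun A u ρ = k * ρ ^ (n-1) * sav (gg (AA A) u) ρ := by
  obtain ⟨k, hk, hs⟩ := sphInt_eq n S.hn1
  refine ⟨k, hk, fun ρ hρ => ?_⟩
  have hρ0 : 0 < ρ := by linarith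
  have hG : Gfun A u ρ = 2 * sphInt n ρ (fun x => (Zd A (ww u) x / ‖x‖) ^ 2 * muA A x)
    - sphInt n ρ (fun x => quadForm (A x) (gradient (ww u) x) (gradient (ww u) x))
    + sphInt n ρ (fun x => (ww u x) ^ 2)
    - ((n : ℝ) - 1) * ((n : ℝ) - 3) / 4 * sphInt n ρ (fun x => (ww u x) ^ 2 / ‖x‖ ^ 2 * muA A x) := rfl
  rw [hG, hs ρ hρ0, hs ρ hρ0, hs ρ hρ0, hs ρ hρ0]
  have h2 := S.cq
  have h3 := S.cmu
  have h4 := S.cyp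
  have h7 := S.cwc
  have h9 := Sol.cinv (n := n) 2
  have e1 : sav (fun x => (Zd A (ww u) x / ‖x‖) ^ 2 * muA A x) ρ = sav (fun x => mu (AA A) x * yp (AA A) u x ^ 2) ρ :=
    sav_congr hρ fun x hx _ => by rw [Zd_eq S hx, muA_eq, mul_comm]
  have e2 : sav (fun x => quadForm (A x) (gradient (ww u) x) (gradient (ww u) x)) ρ = sav (qq (AA A) u) ρ :=
    sav_congr hρ fun x hx _ => by rw [← AA_inner]; rfl
  have e3 : sav (fun x => (ww u x) ^ 2 / ‖x‖ ^ 2 * muA A x) ρ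
      = sav (fun x => mu (AA A) x * ww u x ^ 2 * (‖x‖ ^ 2)⁻¹) ρ :=
    sav_congr hρ fun x hx _ => by rw [muA_eq, div_eq_mul_inv]; ring
  have e4 : sav (gg (AA A) u) ρ = 2 * sav (fun x => mu (AA A) x * yp (AA A) u x ^ 2) ρ - sav (qq (AA A) u) ρ
      + sav (fun x => ww u x ^ 2) ρ
      - ((n:ℝ) - 1) * ((n:ℝ) - 3) / 4 * sav (fun x => mu (AA A) x * ww u x ^ 2 * (‖x‖ ^ 2)⁻¹) ρ := by
    rw [← sav_mul, ← sav_mul, ← sav_sub (by fun_prop) h2 hρ, ← sav_add (by fun_prop) (by fun_prop) hρ,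
      ← sav_sub (by fun_prop) (by fun_prop) hρ]
    rfl
  rw [e1, e2, e3, e4]
  ring

theorem final {A : En n → Matrix (Fin n) (Fin n) ℝ} {lam α C : ℝ} (hn : 2 ≤ n) (h0 : 0 < lam) (h1 : lam < 1)
    (hα : 0 < α) (hC : 0 < C) (h : EllipticDecay A lam α C) {u : En n → ℝ} (hu : WeakSol A u)
    {x0 : En n} (hx0 : x0 ∈ OmegaExt n) (hu0 : u x0 ≠ 0) {δ : ℝ} (hδ0 : 0 < δ) (hδ1 : δ < 1) :
    ∃ C₂ > 0, ∃ R₂ > 1, ∀ ρ ≥ R₂, C₂ ≤ Gfun A u ρ / ρ ^ ((n:ℝ) - 1 - δ) := by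
  have S := sol_of hn h0 h1 hα hC h hu
  obtain ⟨k, hk, hG⟩ := Gfun_eq S
  obtain ⟨C₂, hC2, R₂, hR, hb⟩ := S.main hx0 hu0 hδ0 hδ1
  refine ⟨k * C₂, by positivity, R₂, hR, fun ρ hρ => ?_⟩
  have hρ1 : 1 < ρ := by linarith
  have hρ0 : 0 < ρ := by linarith
  rw [hG ρ hρ1, Real.rpow_sub hρ0]
  have e : ρ ^ ((n:ℝ) - 1) = ρ ^ (n - 1) := by
    rw [← Real.rpow_natCast]
    congr 1
    push_cast [S.hn1]
    ring
  rw [e]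
  have p1 : 0 < ρ ^ (n-1) := by positivity
  have p2 : 0 < ρ ^ δ := Real.rpow_pos_of_pos hρ0 _
  have : k * ρ ^ (n-1) * sav (gg (AA A) u) ρ / (ρ ^ (n-1) / ρ ^ δ) = k * (ρ ^ δ * sav (gg (AA A) u) ρ) := by
    field_simp
  rw [this]
  exact mul_le_mul_of_nonneg_left (hb ρ hρ) hk.le

end SphM

end PartD7

/-- **Lemma `post2`.** Let `u` be a nontrivial weak solution of
`-div(A∇u) = u` in `Ω` with `liminf_{R→∞} R^{-(1-δ)} ∫_{R<|x|<2R} u² = 0` for some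
`δ ∈ (0,1)`. Then there exist `C₂ > 0` and `R₂ > 1` with `G(ρ)/ρ^{n-1-δ} ≥ C₂`
for all `ρ ≥ R₂`. -/
theorem G_uniform_lower_bound
    (n : ℕ) (hn : 2 ≤ n)
    (A : En n → Matrix (Fin n) (Fin n) ℝ) (lam α C : ℝ)
    (hlam0 : 0 < lam) (hlam1 : lam < 1) (hα : 0 < α) (hC : 0 < C)
    (hA : EllipticDecay A lam α C)
    (u : En n → ℝ) (hu : WeakSol A u)
    (hne : ∃ x ∈ OmegaExt n, u x ≠ 0)
    (δ : ℝ) (hδ : δ ∈ Set.Ioo (0 : ℝ) 1)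
    (hlim : Filter.liminf
        (fun R : ℝ => R ^ (-(1 - δ)) * ∫ x in {x : En n | R < ‖x‖ ∧ ‖x‖ < 2 * R}, (u x) ^ 2)
        Filter.atTop = 0) :
    ∃ C₂ > (0 : ℝ), ∃ R₂ > (1 : ℝ), ∀ ρ ≥ R₂, C₂ ≤ Gfun A u ρ / ρ ^ ((n : ℝ) - 1 - δ) := by
  obtain ⟨x0, hx0, hu0⟩ := hne
  exact SphM.final hn hlam0 hlam1 hα hC hA hu hx0 hu0 hδ.1 hδ.2

end
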